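/- Let X be a connected, infinite, locally finite simple graph and let G be a group of automorphisms of X acting faithfully and transitively on the vertices of X. If the commutator subgroup G' of G is cyclic of prime order p, then X has a two-way hamiltonian path. -/

import Mathlib

/-!
Let `H` be a vertex stabiliser. The commutator subgroup `G'` has prime order `p` and acts freely, so
the graph is a cover, with deck group `G'`, of a quotient graph on the abelian group `A = G / G'H`
(`exists_cover`); the quotient graph is invariant under translations of `A`. A cycle in the quotient
is called good if its lift closes up with a non-trivial deck transformation. Since `p` is prime, that
transformation generates `G'`, so the vertices above a good cycle form a cycle upstairs, and they can
be traversed by a path between the fibres of any two consecutive elements (`Good.tr_ends`,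
`Good.tr_adj`).

A good cycle therefore serves as a brick: its translates tile a subgroup, or two cosets of one, and
finitely generated abelian groups have transversals which are traversed by a path, because box
products of finite or two-way infinite paths have hamiltonian paths (`Trav.prod`, `travRep`). Linking
the bricks along such a transversal yields a two-way hamiltonian path (`ham_of_blocks`,
`ham_of_star`, and for the various shapes of bricks `ham_single`, `ham_pair`, `ham_square`,
`ham_gamma`, `ham_grid`).

It remains to find good cycles. An edge inside a fibre is one (`ham_loop`), and two edges from a
vertex to the same fibre allow one to correct the lift of any cycle through that step (`ham_digon`).
In the absence of both, vertex stabilisers are trivial and the graph is a Cayley graph of `G`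
(`ham_cover`). As `G` is not abelian, two generators `s`, `t` do not commute. According to the orders
of their images in `A` (`ham_cayley`):

* both finite: a hamiltonian cycle of the prism over `⟨s, t⟩` in a direction of infinite order closes
  up with the commutator of `s` and `t` (`ham_torsion`);
* one finite, one infinite: a ladder does (`ham_torsion_infinite`);
* both infinite and independent: a square does (`ham_independent`);
* both infinite with `t ^ k = s ^ j` in `A`: if this relation fails in `G`, it is itself a good cycle
  (`ham_dependent`). Otherwise a ladder along the powers of `t` is good and yields a hamiltonian path
  in the subgroup generated by all generators commensurable with `s`; the other generators centralise
  that subgroup, and the path extends to the box product (`ham_commensurable`, `ham_of_centralised`).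
-/

set_option linter.unusedSimpArgs false

namespace HamPath

/-! ### Bi-infinite sequences and gluing of finite paths -/

/-- Bi-infinite dependent choice: a state at `0` that can always be extended to the right at
indices `≥ 0` and to the left at indices `≤ 0` extends to a sequence indexed by `ℤ`. -/
theorem exists_int_seq {α : Type*} (P : ℤ → α → Prop) (R : ℤ → α → α → Prop)
    (h0 : ∃ x, P 0 x)
    (hf : ∀ i x, 0 ≤ i → P i x → ∃ y, P (i + 1) y ∧ R i x y)
    (hb : ∀ i y, i ≤ 0 → P i y → ∃ x, P (i - 1) x ∧ R (i - 1) x y) :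
    ∃ f : ℤ → α, ∀ i, P i (f i) ∧ R i (f i) (f (i + 1)) := by
  classical
  obtain ⟨x0, hx0⟩ := h0
  choose F hF hFR using hf
  choose Bk hB hBR using hb
  let u : (n : ℕ) → {x // P (n : ℤ) x} := fun n => Nat.rec ⟨x0, hx0⟩
    (fun n x => ⟨F n x.1 (by omega) x.2, by
      have := hF n x.1 (by omega) x.2; push_cast; exact this⟩) n
  let d : (n : ℕ) → {x // P (-(n : ℤ)) x} := fun n => Nat.rec ⟨x0, by simpa using hx0⟩
    (fun n x => ⟨Bk (-(n : ℤ)) x.1 (by omega) x.2, by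
      have := hB (-(n : ℤ)) x.1 (by omega) x.2
      have e : -(((n + 1 : ℕ)) : ℤ) = -(n : ℤ) - 1 := by push_cast; ring
      rw [e]; exact this⟩) n
  obtain ⟨u', hu', hu0, hu⟩ : ∃ u' : ℕ → α, (∀ n : ℕ, P n (u' n)) ∧ u' 0 = x0 ∧
      ∀ n : ℕ, R n (u' n) (u' (n + 1)) :=
    ⟨fun n => (u n).1, fun n => (u n).2, rfl, fun n => hFR n (u n).1 (by omega) (u n).2⟩
  obtain ⟨d', hd', hd0, hd⟩ : ∃ d' : ℕ → α, (∀ n : ℕ, P (-(n : ℤ)) (d' n)) ∧ d' 0 = x0 ∧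
      ∀ n : ℕ, R (-(n : ℤ) - 1) (d' (n + 1)) (d' n) :=
    ⟨fun n => (d n).1, fun n => (d n).2, rfl, fun n => hBR (-(n : ℤ)) (d n).1 (by omega) (d n).2⟩
  refine ⟨fun i => if 0 ≤ i then u' i.toNat else d' (-i).toNat, fun i => ?_⟩
  rcases lt_or_ge i 0 with hi | hi
  · obtain ⟨n, rfl⟩ : ∃ n : ℕ, i = -(n : ℤ) - 1 := ⟨(-i - 1).toNat, by omega⟩
    have e1 : (-(-(n : ℤ) - 1)).toNat = n + 1 := by omega
    have e2 : ¬ (0 ≤ -(n : ℤ) - 1) := by omega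
    simp only [e2, if_false, e1]
    refine ⟨by have := hd' (n + 1); push_cast at this; convert this using 1; ring, ?_⟩
    by_cases hn : n = 0
    · subst hn; simpa [hu0, hd0] using hd 0
    · have e3 : ¬ (0 ≤ -(n : ℤ) - 1 + 1) := by omega
      have e4 : (-(-(n : ℤ) - 1 + 1)).toNat = n := by omega
      simp only [e3, if_false, e4]
      exact hd n
  · obtain ⟨n, rfl⟩ : ∃ n : ℕ, i = (n : ℤ) := ⟨i.toNat, by omega⟩
    have e3 : (0 : ℤ) ≤ (n : ℤ) + 1 := by omega
    have e4 : ((n : ℤ) + 1).toNat = n + 1 := by omega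
    simp only [hi, e3, if_true, e4, Int.toNat_natCast]
    exact ⟨hu' n, hu n⟩

/-- Gluing a bi-infinite sequence of pairwise disjoint finite paths, consecutive ones being linked
end to start, into one injective two-way infinite path. -/
theorem glue_int {V : Type*} (adj : V → V → Prop) (L : ℤ → List V)
    (hne : ∀ n, L n ≠ []) (hch : ∀ n, (L n).IsChain adj) (hnd : ∀ n, (L n).Nodup)
    (hdisj : ∀ m n x, x ∈ L m → x ∈ L n → m = n)
    (hlink : ∀ n, ∀ x ∈ (L n).getLast?, ∀ y ∈ (L (n + 1)).head?, adj x y) :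
    ∃ f : ℤ → V, Function.Injective f ∧ (∀ x, (∃ i, f i = x) ↔ ∃ n, x ∈ L n) ∧
      ∀ i, adj (f i) (f (i + 1)) := by
  classical
  have hpos : ∀ n, 0 < (L n).length := fun n => List.length_pos_iff.2 (hne n)
  obtain ⟨o, ho⟩ := exists_int_seq (α := ℤ) (fun i x => (0 ≤ i → i ≤ x) ∧ (i ≤ 0 → x ≤ i))
    (fun i x y => y = x + (L i).length)
    ⟨0, by simp⟩
    (fun i x hi hP => ⟨_, by have := hpos i; omega, rfl⟩)
    (fun i y hi hP => ⟨y - (L (i - 1)).length, by have := hpos (i - 1); omega, by omega⟩)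
  have hstep : ∀ n, o (n + 1) = o n + (L n).length := fun n => (ho n).2
  have hmono : StrictMono o := strictMono_int_of_lt_succ fun n => by
    have := hpos n; rw [hstep]; omega
  have hex : ∀ i : ℤ, ∃ n, o n ≤ i ∧ i < o (n + 1) := by
    intro i
    obtain ⟨n, h1, h2⟩ := Int.exists_greatest_of_bdd (P := fun n => o n ≤ i)
      ⟨max i 0, fun z hz => by have := (ho z).1; omega⟩
      ⟨min i 0, by have := (ho (min i 0)).1; omega⟩
    refine ⟨n, h1, ?_⟩
    by_contra h
    have := h2 (n + 1) (by omega)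
    omega
  choose N hN1 hN2 using hex
  have huniq : ∀ i n, o n ≤ i → i < o (n + 1) → N i = n := by
    intro i n h1 h2
    have a : N i < n + 1 := hmono.lt_iff_lt.1 (lt_of_le_of_lt (hN1 i) h2)
    have b : n < N i + 1 := hmono.lt_iff_lt.1 (lt_of_le_of_lt h1 (hN2 i))
    omega
  have hlt : ∀ i, (i - o (N i)).toNat < (L (N i)).length := fun i => by
    have := hN1 i; have := hN2 i; have := hstep (N i); omega
  let f : ℤ → V := fun i => (L (N i))[(i - o (N i)).toNat]'(hlt i)
  have hf : ∀ n (k : ℕ) (hk : k < (L n).length), f (o n + k) = (L n)[k] := by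
    intro n k hk
    have e : N (o n + k) = n := huniq _ _ (by omega) (by rw [hstep]; omega)
    simp only [f]
    simp only [e]
    congr 1
    omega
  refine ⟨f, ?_, ?_, ?_⟩
  · intro i j hij
    have hm : N i = N j := hdisj _ _ (f i) (List.getElem_mem _) (hij ▸ List.getElem_mem _)
    have h2 : (L (N j))[(i - o (N j)).toNat]'(hm ▸ hlt i) = (L (N j))[(j - o (N j)).toNat]'(hlt j) := by
      have : f i = (L (N j))[(i - o (N j)).toNat]'(hm ▸ hlt i) := by
        simp only [f]; simp only [hm]
      rw [← this]; exact hij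
    have := (hnd (N j)).getElem_inj_iff.1 h2
    have h3 := hN1 i; have h4 := hN1 j; rw [hm] at h3; omega
  · intro x
    constructor
    · rintro ⟨i, rfl⟩; exact ⟨N i, List.getElem_mem _⟩
    · rintro ⟨n, hx⟩
      obtain ⟨k, hk, rfl⟩ := List.mem_iff_getElem.1 hx
      exact ⟨_, hf n k hk⟩
  · intro i
    obtain ⟨n, k, hk, rfl⟩ : ∃ n, ∃ k : ℕ, k < (L n).length ∧ i = o n + k :=
      ⟨N i, (i - o (N i)).toNat, hlt i, by have := hN1 i; omega⟩
    rw [hf n k hk]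
    by_cases h : k + 1 < (L n).length
    · have e : o n + (k : ℤ) + 1 = o n + ((k + 1 : ℕ) : ℤ) := by push_cast; ring
      rw [e, hf n (k + 1) h]
      exact List.isChain_iff_getElem.1 (hch n) k h
    · have e : o n + (k : ℤ) + 1 = o (n + 1) + ((0 : ℕ) : ℤ) := by
        rw [hstep]; push_cast; omega
      rw [e, hf (n + 1) 0 (hpos _)]
      refine hlink n _ ?_ _ ?_
      · have : k = (L n).length - 1 := by omega
        subst this
        rw [List.getLast?_eq_getElem?]
        simp
      · rw [List.head?_eq_getElem?]
        simp [hpos]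

end HamPath

namespace HamPath

/-! ### Traversable relations and products -/

/-- A two-way hamiltonian path for the relation `R`. -/
def TwoWay {Q : Type*} (R : Q → Q → Prop) : Prop :=
  ∃ f : ℤ → Q, Function.Bijective f ∧ ∀ i, R (f i) (f (i + 1))

/-- `R` has a hamiltonian path: a finite one, or a two-way infinite one. -/
def Trav {Q : Type*} (R : Q → Q → Prop) : Prop :=
  (∃ l : List Q, l ≠ [] ∧ l.Nodup ∧ (∀ x, x ∈ l) ∧ l.IsChain R) ∨ TwoWay R

/-- The Cartesian (box) product of two relations. -/
def BoxRel {Q Q' : Type*} (R : Q → Q → Prop) (R' : Q' → Q' → Prop) (x y : Q × Q') : Prop :=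
  (x.1 = y.1 ∧ R' x.2 y.2) ∨ (R x.1 y.1 ∧ x.2 = y.2)

/-- Adjacency of consecutive integers. -/
def IntRel (i j : ℤ) : Prop := j = i + 1 ∨ i = j + 1

theorem TwoWay.map {Q Q' : Type*} {R : Q → Q → Prop} {R' : Q' → Q' → Prop} (h : TwoWay R)
    (e : Q → Q') (he : Function.Bijective e) (hR : ∀ x y, R x y → R' (e x) (e y)) :
    TwoWay R' := by
  obtain ⟨f, hf, h⟩ := h
  exact ⟨e ∘ f, he.comp hf, fun i => hR _ _ (h i)⟩

theorem Trav.map {Q Q' : Type*} {R : Q → Q → Prop} {R' : Q' → Q' → Prop} (h : Trav R)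
    (e : Q → Q') (he : Function.Bijective e) (hR : ∀ x y, R x y → R' (e x) (e y)) :
    Trav R' := by
  rcases h with ⟨l, h1, h2, h3, h4⟩ | h
  · refine Or.inl ⟨l.map e, by simpa using h1, h2.map he.1, fun x => ?_, ?_⟩
    · obtain ⟨y, rfl⟩ := he.2 x
      exact List.mem_map_of_mem (h3 y)
    · rw [List.isChain_map]
      exact h4.imp fun _ _ h => hR _ _ h
  · exact Or.inr (h.map e he hR)

theorem TwoWay.of_trav {Q : Type*} [Infinite Q] {R : Q → Q → Prop} (h : Trav R) : TwoWay R := by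
  classical
  rcases h with ⟨l, -, -, h3, -⟩ | h
  · exfalso
    exact not_finite_iff_infinite.2 ‹Infinite Q›
      (Finite.of_surjective (fun i : Fin l.length => l[i]) fun x => by
        obtain ⟨k, hk, e⟩ := List.mem_iff_getElem.1 (h3 x)
        exact ⟨⟨k, hk⟩, e⟩)
  · exact h

theorem trav_int : Trav IntRel :=
  Or.inr ⟨id, Function.bijective_id, fun _ => Or.inl rfl⟩

theorem isChain_reverse_symm {Q : Type*} {R : Q → Q → Prop} (hs : ∀ x y, R x y → R y x)
    {l : List Q} (h : l.IsChain R) : l.reverse.IsChain R := by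
  rw [List.isChain_reverse]
  exact h.imp fun _ _ h => hs _ _ h

theorem boxRel_symm {Q Q' : Type*} {R : Q → Q → Prop} {R' : Q' → Q' → Prop}
    (hs : ∀ x y, R x y → R y x) (hs' : ∀ x y, R' x y → R' y x) :
    ∀ x y, BoxRel R R' x y → BoxRel R R' y x := by
  rintro x y (⟨h1, h2⟩ | ⟨h1, h2⟩)
  · exact Or.inl ⟨h1.symm, hs' _ _ h2⟩
  · exact Or.inr ⟨hs _ _ h1, h2.symm⟩

/-- Boustrophedon path through a finite grid. -/
theorem snake {Q Q' : Type*} {R : Q → Q → Prop} {R' : Q' → Q' → Prop}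
    (hs' : ∀ x y, R' x y → R' y x) (rows : List Q) : ∀ (cols : List Q'),
    cols ≠ [] → cols.Nodup → cols.IsChain R' → rows.Nodup → rows.IsChain R →
    ∃ W : List (Q × Q'), W.Nodup ∧ (∀ x, x ∈ W ↔ x.1 ∈ rows ∧ x.2 ∈ cols) ∧
      W.IsChain (BoxRel R R') ∧
      ∀ x ∈ W.head?, x.1 ∈ rows.head? ∧ x.2 ∈ cols.head? := by
  induction rows with
  | nil => intro cols _ _ _ _ _; exact ⟨[], by simp⟩
  | cons r rs ih =>
    intro cols hne hnd hch hrn hrc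
    obtain ⟨W, w1, w2, w3, w4⟩ := ih cols.reverse (by simpa) (by simpa)
      (isChain_reverse_symm hs' hch) (List.nodup_cons.1 hrn).2 hrc.tail
    refine ⟨cols.map (fun c => (r, c)) ++ W, ?_, ?_, ?_, ?_⟩
    · rw [List.nodup_append']
      refine ⟨hnd.map fun _ _ h => (Prod.mk.inj h).2, w1, ?_⟩
      intro x hx hx'
      obtain ⟨c, -, rfl⟩ := List.mem_map.1 hx
      exact (List.nodup_cons.1 hrn).1 ((w2 _).1 hx').1
    · rintro ⟨a, b⟩
      simp only [List.mem_append, List.mem_map, w2, List.mem_cons, List.mem_reverse, Prod.mk.injEq]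
      constructor
      · rintro (⟨c, hc, rfl, rfl⟩ | h)
        · exact ⟨Or.inl rfl, hc⟩
        · exact ⟨Or.inr h.1, h.2⟩
      · rintro ⟨rfl | h, h'⟩
        · exact Or.inl ⟨b, h', rfl, rfl⟩
        · exact Or.inr ⟨h, h'⟩
    · rw [List.isChain_append]
      refine ⟨?_, w3, ?_⟩
      · rw [List.isChain_map]
        exact hch.imp fun _ _ h => Or.inl ⟨rfl, h⟩
      · intro x hx y hy
        obtain ⟨h1, h2⟩ := w4 y hy
        rw [List.head?_reverse] at h2
        rw [List.getLast?_map] at hx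
        obtain ⟨c, hc, rfl⟩ := Option.mem_map.1 hx
        refine Or.inr ⟨(List.isChain_cons.1 hrc).1 _ h1, Option.mem_unique hc h2⟩
    · intro x hx
      obtain ⟨c, cs, rfl⟩ := List.exists_cons_of_ne_nil hne
      simp at hx
      subst hx
      simp

theorem trav_fin_int {Q Q' : Type*} {R : Q → Q → Prop} {R' : Q' → Q' → Prop}
    (hs : ∀ x y, R x y → R y x) {l : List Q} (h1 : l ≠ []) (h2 : l.Nodup) (h3 : ∀ x, x ∈ l)
    (h4 : l.IsChain R) (h : TwoWay R') : TwoWay (BoxRel R R') := by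
  obtain ⟨f, hf, hR⟩ := h
  -- the columns `l × {f n}` are traversed alternately upwards and downwards
  obtain ⟨g, g1, g2, g3⟩ := glue_int (BoxRel R R')
    (fun n => (if Even n then l else l.reverse).map fun q => (q, f n))
    (fun n => by split_ifs <;> simpa using h1)
    (fun n => by
      rw [List.isChain_map]
      have : (if Even n then l else l.reverse).IsChain R := by
        split_ifs
        · exact h4
        · exact isChain_reverse_symm hs h4
      exact this.imp fun _ _ h => Or.inr ⟨h, rfl⟩)
    (fun n => by
      have : (if Even n then l else l.reverse).Nodup := by split_ifs <;> simpa using h2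
      exact this.map fun _ _ h => (Prod.mk.inj h).1)
    (by
      intro m n x hx hx'
      obtain ⟨_, -, rfl⟩ := List.mem_map.1 hx
      obtain ⟨_, -, e⟩ := List.mem_map.1 hx'
      exact (hf.1 (Prod.mk.inj e).2).symm)
    (by
      intro n x hx y hy
      rw [List.getLast?_map] at hx
      rw [List.head?_map] at hy
      obtain ⟨a, ha, rfl⟩ := Option.mem_map.1 hx
      obtain ⟨b, hb, rfl⟩ := Option.mem_map.1 hy
      refine Or.inl ⟨?_, hR n⟩
      by_cases hn : Even n
      · have : ¬ Even (n + 1) := by simpa [Int.even_add_one] using hn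
        simp only [hn, this, if_true, if_false, List.head?_reverse] at ha hb
        exact Option.mem_unique ha hb
      · have : Even (n + 1) := by simpa [Int.even_add_one] using hn
        simp only [hn, this, if_true, if_false, List.getLast?_reverse] at ha hb
        exact Option.mem_unique ha hb)
  refine ⟨g, ⟨g1, ?_⟩, g3⟩
  rintro ⟨q, q'⟩
  obtain ⟨n, rfl⟩ := hf.2 q'
  refine (g2 _).2 ⟨n, List.mem_map.2 ⟨q, ?_, rfl⟩⟩
  split_ifs <;> simpa using h3 q

/-- The `k`-th point of the half-square arc of index `m` in `ℤ × ℤ`: for `m ≥ 0` the arc consists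
of the points with `x ≥ 0` and `max x |y| = m`, traversed from `(0, -m)` to `(0, m)`; for `m < 0`
it is the mirror image of the arc of index `-1 - m` under `x ↦ -1 - x`. -/
def arcPt (m : ℤ) (k : ℕ) : ℤ × ℤ :=
  let n := if 0 ≤ m then m else -1 - m
  let x := min (min (k : ℤ) n) (4 * n - k)
  (if 0 ≤ m then x else -1 - x, max (-n) (min n (k - 2 * n)))

theorem trav_int_int : TwoWay (BoxRel IntRel IntRel) := by
  let N : ℤ → ℕ := fun m => (if 0 ≤ m then m else -1 - m).toNat
  let arc : ℤ → List (ℤ × ℤ) := fun m => (List.range (4 * N m + 1)).map (arcPt m)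
  have hsymm : ∀ x y, IntRel x y → IntRel y x := fun x y h => Or.symm h
  have hmem : ∀ m x, x ∈ arc m ↔ ∃ k ≤ 4 * N m, arcPt m k = x := by
    intro m x
    simp only [arc, List.mem_map, List.mem_range, Nat.lt_succ_iff]
  have hdet : ∀ m n k k', k ≤ 4 * N m → k' ≤ 4 * N n → arcPt m k = arcPt n k' → m = n ∧ k = k' := by
    intro m n k k' h1 h2 h
    simp only [arcPt, Prod.mk.injEq, N] at *
    split_ifs at * <;> omega
  obtain ⟨g, g1, g2, g3⟩ := glue_int (BoxRel IntRel IntRel)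
    (fun m => if Even m then arc m else (arc m).reverse)
    (fun m => by split_ifs <;> simp [arc])
    (fun m => by
      have : (arc m).IsChain (BoxRel IntRel IntRel) := by
        rw [List.isChain_map, List.isChain_iff_getElem]
        intro k hk
        simp only [List.length_range] at hk
        simp only [List.getElem_range, BoxRel, IntRel, arcPt, N] at *
        split_ifs at * <;> omega
      split_ifs
      · exact this
      · exact isChain_reverse_symm (boxRel_symm hsymm hsymm) this)
    (fun m => by
      have : (arc m).Nodup := List.Nodup.map_on (by
        intro k hk k' hk' h
        simp only [List.mem_range] at hk hk'
        exact (hdet m m k k' (by omega) (by omega) h).2) List.nodup_range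
      split_ifs <;> simpa using this)
    (by
      intro m n x hx hx'
      have h1 : x ∈ arc m := by split_ifs at hx <;> simpa using hx
      have h2 : x ∈ arc n := by split_ifs at hx' <;> simpa using hx'
      obtain ⟨k, hk, rfl⟩ := (hmem _ _).1 h1
      obtain ⟨k', hk', e⟩ := (hmem _ _).1 h2
      exact (hdet n m k' k hk' hk e).1.symm)
    (by
      have hh : ∀ m, (arc m).head? = some (arcPt m 0) := by
        intro m; simp [arc, List.head?_range]
      have hl : ∀ m, (arc m).getLast? = some (arcPt m (4 * N m)) := by
        intro m; simp [arc, List.getLast?_range]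
      intro n x hx y hy
      by_cases hn : Even n
      · have : ¬ Even (n + 1) := by simpa [Int.even_add_one] using hn
        simp only [hn, this, if_true, if_false, List.head?_reverse, hl, Option.mem_some_iff] at hx hy
        subst hx hy
        simp only [BoxRel, IntRel, arcPt, N] at *
        split_ifs at * <;> omega
      · have : Even (n + 1) := by simpa [Int.even_add_one] using hn
        simp only [hn, this, if_true, if_false, List.getLast?_reverse, hh, Option.mem_some_iff]
          at hx hy
        subst hx hy
        simp only [BoxRel, IntRel, arcPt, N] at *
        split_ifs at * <;> omega)
  refine ⟨g, ⟨g1, ?_⟩, g3⟩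
  rintro ⟨x, y⟩
  obtain ⟨m, k, hk, e⟩ : ∃ m k, k ≤ 4 * N m ∧ arcPt m k = (x, y) := by
    -- `(x, y)` lies on the arc through it of radius `n = max x' |y|`, `x' = x` or `-1 - x`
    let x' : ℤ := if 0 ≤ x then x else -1 - x
    let n : ℤ := max x' (max y (-y))
    let k : ℤ := if x' = n then y + 2 * n else if y < 0 then x' else 4 * n - x'
    refine ⟨if 0 ≤ x then n else -1 - n, k.toNat, ?_, ?_⟩
    · simp only [k, n, x', N]; split_ifs <;> omega
    · simp only [k, n, x', arcPt, Prod.mk.injEq]; split_ifs <;> omega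
  refine (g2 _).2 ⟨m, ?_⟩
  have := (hmem m (x, y)).2 ⟨k, hk, e⟩
  split_ifs <;> simpa using this

/-- The box product of two traversable symmetric relations is traversable. -/
theorem Trav.prod {Q Q' : Type*} {R : Q → Q → Prop} {R' : Q' → Q' → Prop}
    (hs : ∀ x y, R x y → R y x) (hs' : ∀ x y, R' x y → R' y x)
    (h : Trav R) (h' : Trav R') : Trav (BoxRel R R') := by
  rcases h with ⟨l, h1, h2, h3, h4⟩ | h
  · rcases h' with ⟨l', k1, k2, k3, k4⟩ | h'
    · obtain ⟨W, w1, w2, w3, w4⟩ := snake (R := R) hs' l l' k1 k2 k4 h2 h4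
      have hW : ∀ x, x ∈ W := fun x => (w2 x).2 ⟨h3 _, k3 _⟩
      obtain ⟨a, ha⟩ := List.exists_mem_of_ne_nil _ h1
      obtain ⟨b, hb⟩ := List.exists_mem_of_ne_nil _ k1
      exact Or.inl ⟨W, List.ne_nil_of_mem (hW (a, b)), w1, hW, w3⟩
    · exact Or.inr (trav_fin_int hs h1 h2 h3 h4 h')
  · rcases h' with ⟨l', k1, k2, k3, k4⟩ | h'
    · refine Or.inr ((trav_fin_int hs' k1 k2 k3 k4 h).map Prod.swap Prod.swap_bijective ?_)
      rintro x y (⟨h1, h2⟩ | ⟨h1, h2⟩)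
      · exact Or.inr ⟨h2, h1⟩
      · exact Or.inl ⟨h2, h1⟩
    · obtain ⟨f, hf, hR⟩ := h
      obtain ⟨f', hf', hR'⟩ := h'
      refine Or.inr (trav_int_int.map (Prod.map f f') (hf.prodMap hf') ?_)
      rintro ⟨a, b⟩ ⟨c, d⟩ (⟨h1, h2⟩ | ⟨h1, h2⟩)
      · simp only at h1 h2
        subst h1
        refine Or.inl ⟨rfl, ?_⟩
        rcases h2 with rfl | rfl
        · exact hR' _
        · exact hs' _ _ (hR' _)
      · simp only at h1 h2
        subst h2
        refine Or.inr ⟨?_, rfl⟩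
        rcases h1 with rfl | rfl
        · exact hR _
        · exact hs _ _ (hR _)

end HamPath

namespace HamPath

/-! ### Prime-cyclic covers of abelian Cayley graphs -/

/-- A vertex set `V` with a `G`-invariant symmetric adjacency, fibred by `π` over an abelian group
`A` equivariantly with respect to a surjection `φ : G → A`; the fibres are the orbits of a normal
subgroup `C` of prime order `p` lying in the kernel of `φ` and acting freely. -/
structure Cover (V G A : Type*) [Group G] [MulAction G V] [CommGroup A] where
  /-- adjacency upstairs -/
  adj : V → V → Prop
  symm : ∀ u w, adj u w → adj w u
  inv : ∀ (g : G) u w, adj u w → adj (g • u) (g • w)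
  /-- the projection of groups -/
  φ : G →* A
  φ_surj : Function.Surjective φ
  /-- the projection of vertices -/
  π : V → A
  π_smul : ∀ (g : G) v, π (g • v) = φ g * π v
  π_surj : Function.Surjective π
  /-- the group of deck transformations -/
  C : Subgroup G
  normal : C.Normal
  /-- the order of `C` -/
  p : ℕ
  hp : p.Prime
  card : Nat.card C = p
  φ_C : ∀ c ∈ C, φ c = 1
  fib : ∀ v w, π v = π w → ∃ c ∈ C, c • v = w
  free : ∀ c ∈ C, ∀ v : V, c • v = v → c = 1

namespace Cover

variable {V G A : Type*} [Group G] [MulAction G V] [CommGroup A] (K : Cover V G A)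

/-- Two elements of `A` are a step apart if some vertices above them are adjacent. -/
def Step (α β : A) : Prop := ∃ v w, K.π v = α ∧ K.π w = β ∧ K.adj v w

variable {K}

theorem Step.symm {α β : A} (h : K.Step α β) : K.Step β α := by
  obtain ⟨v, w, h1, h2, h3⟩ := h
  exact ⟨w, v, h2, h1, K.symm _ _ h3⟩

theorem Step.mul {α β : A} (h : K.Step α β) (x : A) : K.Step (x * α) (x * β) := by
  obtain ⟨v, w, rfl, rfl, h3⟩ := h
  obtain ⟨g, rfl⟩ := K.φ_surj x
  exact ⟨g • v, g • w, K.π_smul _ _, K.π_smul _ _, K.inv _ _ _ h3⟩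

theorem step_iff {α β : A} : K.Step α β ↔ K.Step 1 (α⁻¹ * β) :=
  ⟨fun h => by simpa using h.mul α⁻¹, fun h => by simpa using h.mul α⟩

theorem Step.inv {α : A} (h : K.Step 1 α) : K.Step 1 α⁻¹ := by
  simpa using (h.mul α⁻¹).symm

theorem Step.lift {α β : A} (h : K.Step α β) {v : V} (hv : K.π v = α) :
    ∃ w, K.π w = β ∧ K.adj v w := by
  obtain ⟨v', w, h1, h2, h3⟩ := h
  obtain ⟨c, hc, rfl⟩ := K.fib v' v (by rw [h1, hv])
  exact ⟨c • w, by rw [K.π_smul, K.φ_C c hc, one_mul, h2], K.inv _ _ _ h3⟩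

theorem smul_isChain {L : List V} (h : L.IsChain K.adj) (g : G) :
    (L.map (g • ·)).IsChain K.adj := by
  rw [List.isChain_map]
  exact h.imp fun _ _ h => K.inv _ _ _ h

variable (K) in
/-- `Tr B α β`: from every vertex above `α` there starts a path which visits exactly the vertices
above the set `B`, once each, and ends above `β`. -/
def Tr (B : Set A) (α β : A) : Prop :=
  ∀ v, K.π v = α → ∃ L : List V, L.IsChain K.adj ∧ L.Nodup ∧ (∀ x, x ∈ L ↔ K.π x ∈ B) ∧
    L.head? = some v ∧ ∃ w, L.getLast? = some w ∧ K.π w = β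

theorem Tr.mem_left {B : Set A} {α β : A} (h : K.Tr B α β) : α ∈ B := by
  obtain ⟨v, rfl⟩ := K.π_surj α
  obtain ⟨L, -, -, h3, h4, -⟩ := h v rfl
  exact (h3 v).1 (List.mem_of_mem_head? h4)

theorem Tr.to_end {B : Set A} {α β : A} (h : K.Tr B α β) {w : V} (hw : K.π w = β) :
    ∃ L : List V, L.IsChain K.adj ∧ L.Nodup ∧ (∀ x, x ∈ L ↔ K.π x ∈ B) ∧
    L.getLast? = some w ∧ ∃ v, L.head? = some v ∧ K.π v = α := by
  obtain ⟨v, hv⟩ := K.π_surj α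
  obtain ⟨L, h1, h2, h3, h4, w', h5, h6⟩ := h v hv
  obtain ⟨c, hc, rfl⟩ := K.fib w' w (by rw [h6, hw])
  refine ⟨L.map (c • ·), smul_isChain h1 c, h2.map (MulAction.injective c), fun x => ?_, ?_,
    c • v, ?_, ?_⟩
  · rw [List.mem_map]
    constructor
    · rintro ⟨y, hy, rfl⟩
      simp only [K.π_smul, K.φ_C c hc, one_mul]
      exact (h3 y).1 hy
    · intro hx
      refine ⟨c⁻¹ • x, (h3 _).2 ?_, by simp⟩
      rwa [K.π_smul, K.φ_C _ (K.C.inv_mem hc), one_mul]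
  · rw [List.getLast?_map, h5]; rfl
  · rw [List.head?_map, h4]; rfl
  · rw [K.π_smul, K.φ_C c hc, one_mul, hv]

theorem Tr.symm {B : Set A} {α β : A} (h : K.Tr B α β) : K.Tr B β α := by
  intro v hv
  obtain ⟨L, h1, h2, h3, h4, w, h5, h6⟩ := h.to_end hv
  refine ⟨L.reverse, isChain_reverse_symm K.symm h1, by simpa using h2, by simpa using h3, ?_,
    w, ?_, h6⟩
  · rw [List.head?_reverse, h4]
  · rw [List.getLast?_reverse, h5]

theorem Tr.mem_right {B : Set A} {α β : A} (h : K.Tr B α β) : β ∈ B := h.symm.mem_left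

theorem Tr.trans {B B' : Set A} {α β γ δ : A} (h : K.Tr B α β) (h' : K.Tr B' γ δ)
    (hs : K.Step β γ) (hd : Disjoint B B') : K.Tr (B ∪ B') α δ := by
  intro v hv
  obtain ⟨L, h1, h2, h3, h4, w, h5, h6⟩ := h v hv
  obtain ⟨v', hv', ha⟩ := hs.lift h6
  obtain ⟨L', k1, k2, k3, k4, w', k5, k6⟩ := h' v' hv'
  refine ⟨L ++ L', ?_, ?_, ?_, ?_, w', ?_, k6⟩
  · rw [List.isChain_append]
    refine ⟨h1, k1, fun x hx y hy => ?_⟩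
    rw [h5] at hx; rw [k4] at hy
    simp only [Option.mem_some_iff] at hx hy
    subst hx hy; exact ha
  · rw [List.nodup_append']
    exact ⟨h2, k2, fun x hx hx' => Set.disjoint_left.1 hd ((h3 x).1 hx) ((k3 x).1 hx')⟩
  · intro x; simp [h3, k3]
  · simp [List.head?_append, h4]
  · simp [List.getLast?_append, k5]

theorem Tr.mul {B B' : Set A} {α β : A} (h : K.Tr B α β) (x : A)
    (hB : ∀ y, x * y ∈ B' ↔ y ∈ B) : K.Tr B' (x * α) (x * β) := by
  intro v hv
  obtain ⟨g, rfl⟩ := K.φ_surj x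
  obtain ⟨L, h1, h2, h3, h4, w, h5, h6⟩ := h (g⁻¹ • v) (by
    rw [K.π_smul, hv, map_inv]; simp)
  refine ⟨L.map (g • ·), smul_isChain h1 g, h2.map (MulAction.injective g), fun y => ?_, ?_,
    g • w, ?_, ?_⟩
  · rw [List.mem_map]
    constructor
    · rintro ⟨z, hz, rfl⟩
      simp only [K.π_smul, hB]
      exact (h3 z).1 hz
    · intro hy
      refine ⟨g⁻¹ • y, (h3 _).2 ?_, by simp⟩
      rw [← hB, K.π_smul, map_inv]; simpa using hy
  · rw [List.head?_map, h4]; simp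
  · rw [List.getLast?_map, h5]; rfl
  · rw [K.π_smul, h6]

theorem Tr.congr {B B' : Set A} {α β : A} (h : K.Tr B α β) (hB : B = B') : K.Tr B' α β :=
  hB ▸ h

/-- A bi-infinite sequence of disjoint traversable blocks exhausting `A`, each linked to the next,
yields a two-way hamiltonian path. -/
theorem ham_of_blocks (B : ℤ → Set A) (α β : ℤ → A) (hT : ∀ i, K.Tr (B i) (α i) (β i))
    (hs : ∀ i, K.Step (β i) (α (i + 1))) (hd : ∀ i j x, x ∈ B i → x ∈ B j → i = j)
    (hc : ∀ x, ∃ i, x ∈ B i) : TwoWay K.adj := by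
  obtain ⟨v0, hv0⟩ := K.π_surj (α 0)
  obtain ⟨L0, h1, h2, h3, h4, w0, h5, h6⟩ := hT 0 v0 hv0
  obtain ⟨L, hL⟩ := exists_int_seq
    (fun i (L : List V) => L.IsChain K.adj ∧ L.Nodup ∧ (∀ x, x ∈ L ↔ K.π x ∈ B i) ∧
      ∃ v w, L.head? = some v ∧ L.getLast? = some w ∧ K.π v = α i ∧ K.π w = β i)
    (fun _ L L' => ∀ x ∈ L.getLast?, ∀ y ∈ L'.head?, K.adj x y)
    ⟨L0, h1, h2, h3, v0, w0, h4, h5, hv0, h6⟩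
    (by
      rintro i L - ⟨h1, h2, h3, v, w, h4, h5, h6, h7⟩
      obtain ⟨v', hv', ha⟩ := (hs i).lift h7
      obtain ⟨L', k1, k2, k3, k4, w', k5, k6⟩ := hT (i + 1) v' hv'
      refine ⟨L', ⟨k1, k2, k3, v', w', k4, k5, hv', k6⟩, fun x hx y hy => ?_⟩
      rw [h5] at hx; rw [k4] at hy
      simp only [Option.mem_some_iff] at hx hy
      subst hx hy; exact ha)
    (by
      rintro i L - ⟨h1, h2, h3, v, w, h4, h5, h6, h7⟩
      obtain ⟨w', hw', ha⟩ := (by simpa using (hs (i - 1)).symm :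
        K.Step (α i) (β (i - 1))).lift h6
      obtain ⟨L', k1, k2, k3, k4, v', k5, k6⟩ := (hT (i - 1)).to_end hw'
      refine ⟨L', ⟨k1, k2, k3, v', w', k5, k4, k6, hw'⟩, fun x hx y hy => ?_⟩
      rw [k4] at hx; rw [h4] at hy
      simp only [Option.mem_some_iff] at hx hy
      subst hx hy; exact K.symm _ _ ha)
  obtain ⟨f, f1, f2, f3⟩ := glue_int K.adj L
    (fun n h => by obtain ⟨⟨-, -, -, v, w, h4, -⟩, -⟩ := hL n; simp [h] at h4)
    (fun n => (hL n).1.1) (fun n => (hL n).1.2.1)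
    (fun m n x hx hx' => hd m n (K.π x) (((hL m).1.2.2.1 x).1 hx) (((hL n).1.2.2.1 x).1 hx'))
    (fun n => (hL n).2)
  refine ⟨f, ⟨f1, fun x => (f2 x).2 ?_⟩, f3⟩
  obtain ⟨n, hn⟩ := hc (K.π x)
  exact ⟨n, ((hL n).1.2.2.1 x).2 hn⟩

/-- Blocks indexed by the vertices of a two-way hamiltonian graph `R`: if from every entry point of
a block one can traverse it and leave towards any prescribed `R`-neighbouring block, then the cover
has a two-way hamiltonian path. -/
theorem ham_of_star {Q : Type*} {R : Q → Q → Prop} (hR : ∀ x y, R x y → R y x)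
    (hw : TwoWay R) (blk : Q → Set A)
    (hd : ∀ q q' x, x ∈ blk q → x ∈ blk q' → q = q') (hc : ∀ x, ∃ q, x ∈ blk q)
    (hne : ∀ q, (blk q).Nonempty)
    (hstar : ∀ q q', R q q' → ∀ α ∈ blk q, ∃ β, K.Tr (blk q) α β ∧ ∃ α' ∈ blk q', K.Step β α') :
    TwoWay K.adj := by
  obtain ⟨w, hwb, hwR⟩ := hw
  have hback : ∀ i, R (w i) (w (i - 1)) := fun i => hR _ _ (by simpa using hwR (i - 1))
  obtain ⟨f, hf⟩ := exists_int_seq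
    (fun i (x : A × A) => K.Tr (blk (w i)) x.1 x.2 ∧
      (0 ≤ i → ∃ α' ∈ blk (w (i + 1)), K.Step x.2 α') ∧
      (i ≤ 0 → ∃ β' ∈ blk (w (i - 1)), K.Step β' x.1))
    (fun _ x y => K.Step x.2 y.1)
    (by
      obtain ⟨γ, hγ⟩ := hne (w 0)
      obtain ⟨α, h1, β', h2, h3⟩ := hstar _ _ (hback 0) γ hγ
      obtain ⟨β, h4, α', h5, h6⟩ := hstar _ _ (hwR 0) α h1.mem_right
      exact ⟨(α, β), h4, fun _ => ⟨α', h5, h6⟩, fun _ => ⟨β', h2, h3.symm⟩⟩)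
    (by
      rintro i ⟨α, β⟩ hi ⟨h1, h2, h3⟩
      obtain ⟨α', h4, h5⟩ := h2 hi
      obtain ⟨β', h6, γ, h7, h8⟩ := hstar _ _ (hwR (i + 1)) α' h4
      exact ⟨(α', β'), ⟨h6, fun _ => ⟨γ, h7, h8⟩, fun h => by omega⟩, h5⟩)
    (by
      rintro i ⟨α, β⟩ hi ⟨h1, h2, h3⟩
      obtain ⟨β', h4, h5⟩ := h3 hi
      obtain ⟨α', h6, γ, h7, h8⟩ := hstar _ _ (hback (i - 1)) β' h4
      exact ⟨(α', β'), ⟨h6.symm, fun h => by omega, fun _ => ⟨γ, h7, h8.symm⟩⟩, h5⟩)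
  refine ham_of_blocks (fun i => blk (w i)) (fun i => (f i).1) (fun i => (f i).2)
    (fun i => (hf i).1.1) (fun i => (hf i).2) (fun i j x h h' => hwb.1 (hd _ _ x h h')) ?_
  intro x
  obtain ⟨q, hq⟩ := hc x
  obtain ⟨i, rfl⟩ := hwb.2 q
  exact ⟨i, hq⟩

variable (K) in
/-- A list `l` in `A` is *good* if it lifts to a path which closes up, along one more edge, with a
non-trivial deck transformation. -/
def Good (l : List A) : Prop :=
  l.Nodup ∧ ∃ L : List V, L.map K.π = l ∧ L.IsChain K.adj ∧
    ∃ c ∈ K.C, c ≠ 1 ∧ ∃ u w, L.head? = some u ∧ L.getLast? = some w ∧ K.adj w (c • u)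

/-- A good list can be traversed between its ends: as `C` has prime order, the closing deck
transformation `c` generates it, and running through the lift and its translates by the successive
powers of `c` visits every vertex above the list once. -/
theorem Good.tr_ends {l : List A} (h : K.Good l) {α β : A} (hα : l.head? = some α)
    (hβ : l.getLast? = some β) : K.Tr {x | x ∈ l} α β := by
  classical
  obtain ⟨hnd, L, rfl, hch, c, hc, hc1, u, w, hu, hw, hadj⟩ := h
  have hpf : Fact K.p.Prime := ⟨K.hp⟩
  -- `c` generates `C`, so every deck transformation is `c ^ r` with `r < p`
  have hord : orderOf c = K.p := by
    have h1 : orderOf (⟨c, hc⟩ : K.C) = K.p := by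
      have hd : orderOf (⟨c, hc⟩ : K.C) ∣ K.p := K.card ▸ orderOf_dvd_natCard _
      rcases (Nat.dvd_prime K.hp).1 hd with h | h
      · exact absurd (by simpa [Subtype.ext_iff] using orderOf_eq_one_iff.1 h) hc1
      · exact h
    rw [← h1, Subgroup.orderOf_mk]
  have hgen : ∀ d ∈ K.C, ∃ r < K.p, c ^ r = d := by
    intro d hd
    have h1 : (⟨d, hd⟩ : K.C) ∈ Subgroup.zpowers (⟨c, hc⟩ : K.C) :=
      mem_zpowers_of_prime_card K.card (by simpa [Subtype.ext_iff] using hc1)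
    have hfin : IsOfFinOrder (⟨c, hc⟩ : K.C) := by
      rw [← orderOf_pos_iff, Subgroup.orderOf_mk, hord]; exact K.hp.pos
    rw [← hfin.mem_powers_iff_mem_zpowers, hfin.mem_powers_iff_mem_range_orderOf,
      Finset.mem_image] at h1
    obtain ⟨r, hr, e⟩ := h1
    rw [Finset.mem_range, Subgroup.orderOf_mk, hord] at hr
    exact ⟨r, hr, by simpa [Subtype.ext_iff] using e⟩
  have hLne : L ≠ [] := fun h => by simp [h] at hu
  intro v hv
  obtain ⟨d, hd, rfl⟩ := K.fib u v (by
    rw [List.head?_map, hu] at hα; simp at hα; rw [hα, hv])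
  -- concatenation of `n` successive translates of `L`
  have key : ∀ n, 1 ≤ n → n ≤ K.p → ∃ M : List V, M.IsChain K.adj ∧ M.Nodup ∧
      (∀ x, x ∈ M ↔ ∃ r < n, ∃ y ∈ L, c ^ r • y = x) ∧ M.head? = some u ∧
      M.getLast? = some (c ^ (n - 1) • w) := by
    intro n hn
    induction n, hn using Nat.le_induction with
    | base =>
      intro _
      refine ⟨L, hch, List.Nodup.of_map _ hnd, fun x => ?_, hu, by simpa using hw⟩
      constructor
      · intro h; exact ⟨0, by omega, x, h, by simp⟩
      · rintro ⟨r, hr, y, hy, rfl⟩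
        obtain rfl : r = 0 := by omega
        simpa using hy
    | succ n hn ih =>
      intro hnp
      obtain ⟨M, m1, m2, m3, m4, m5⟩ := ih (by omega)
      refine ⟨M ++ L.map (c ^ n • ·), ?_, ?_, ?_, ?_, ?_⟩
      · rw [List.isChain_append]
        refine ⟨m1, smul_isChain hch _, fun x hx y hy => ?_⟩
        rw [m5] at hx
        rw [List.head?_map, hu] at hy
        simp only [Option.mem_some_iff, Option.map_some] at hx hy
        subst hx hy
        have := K.inv (c ^ (n - 1)) _ _ hadj
        rwa [smul_smul, ← pow_succ, Nat.sub_add_cancel hn] at this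
      · rw [List.nodup_append']
        refine ⟨m2, (List.Nodup.of_map _ hnd).map (MulAction.injective _), ?_⟩
        intro x hx hx'
        obtain ⟨r, hr, y, hy, rfl⟩ := (m3 x).1 hx
        obtain ⟨z, hz, e⟩ := List.mem_map.1 hx'
        have hpe : K.π z = K.π y := by
          have := congrArg K.π e
          simpa [K.π_smul, K.φ_C c hc] using this
        obtain rfl : z = y := List.inj_on_of_nodup_map hnd hz hy hpe
        have e1 : ((c ^ r)⁻¹ * c ^ n) • z = z := by rw [mul_smul]; rw [e]; simp
        have e2 := K.free _ (K.C.mul_mem (K.C.inv_mem (K.C.pow_mem hc r)) (K.C.pow_mem hc n)) z e1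
        have e3 : c ^ r = c ^ n := by rwa [inv_mul_eq_one] at e2
        have := pow_injOn_Iio_orderOf (x := c) (by simp [hord]; omega) (by simp [hord]; omega) e3
        omega
      · intro x
        simp only [List.mem_append, m3, List.mem_map]
        constructor
        · rintro (⟨r, hr, y, hy, rfl⟩ | ⟨y, hy, rfl⟩)
          · exact ⟨r, by omega, y, hy, rfl⟩
          · exact ⟨n, by omega, y, hy, rfl⟩
        · rintro ⟨r, hr, y, hy, rfl⟩
          by_cases hrn : r < n
          · exact Or.inl ⟨r, hrn, y, hy, rfl⟩
          · obtain rfl : r = n := by omega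
            exact Or.inr ⟨y, hy, rfl⟩
      · simp [List.head?_append, m4]
      · rw [List.getLast?_append, List.getLast?_map, hw]; simp
  obtain ⟨M, m1, m2, m3, m4, m5⟩ := key K.p K.hp.one_lt.le le_rfl
  refine ⟨M.map (d • ·), smul_isChain m1 d, m2.map (MulAction.injective d), fun x => ?_, ?_,
    d • c ^ (K.p - 1) • w, ?_, ?_⟩
  · simp only [List.mem_map, m3, Set.mem_ofPred_eq]
    constructor
    · rintro ⟨_, ⟨r, hr, y, hy, rfl⟩, rfl⟩
      exact ⟨y, hy, by simp [K.π_smul, K.φ_C c hc, K.φ_C d hd]⟩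
    · rintro ⟨y, hy, e⟩
      obtain ⟨b, hb, rfl⟩ := K.fib y x e
      obtain ⟨r, hr, e⟩ := hgen _ (K.C.mul_mem (K.C.inv_mem hd) hb)
      exact ⟨c ^ r • y, ⟨r, hr, y, hy, rfl⟩, by rw [e, mul_smul]; simp⟩
  · rw [List.head?_map, m4]; rfl
  · rw [List.getLast?_map, m5]; rfl
  · rw [List.getLast?_map, hw] at hβ
    simp at hβ
    simp [K.π_smul, K.φ_C c hc, K.φ_C d hd, hβ]

theorem Good.rotate {l₁ l₂ : List A} (h : K.Good (l₁ ++ l₂)) : K.Good (l₂ ++ l₁) := by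
  rcases eq_or_ne l₁ [] with rfl | hne₁
  · simpa using h
  rcases eq_or_ne l₂ [] with rfl | hne₂
  · simpa using h
  obtain ⟨hnd, L, hL, hch, c, hc, hc1, u, w, hu, hw, hadj⟩ := h
  obtain ⟨L₁, L₂, rfl, rfl, rfl⟩ := List.map_eq_append_iff.1 hL
  have h1 : L₁ ≠ [] := by simpa using hne₁
  have h2 : L₂ ≠ [] := by simpa using hne₂
  rw [List.isChain_append] at hch
  refine ⟨(List.perm_append_comm.nodup_iff).1 hnd, L₂ ++ L₁.map (c • ·), ?_, ?_, c, hc, hc1, ?_⟩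
  · simp [K.π_smul, K.φ_C c hc, Function.comp_def]
  · rw [List.isChain_append]
    refine ⟨hch.2.1, smul_isChain hch.1 c, fun x hx y hy => ?_⟩
    rw [List.head?_append_of_ne_nil _ h1] at hu
    rw [List.getLast?_append_of_ne_nil _ h2] at hw
    rw [hw] at hx
    rw [List.head?_map, hu] at hy
    simp only [Option.mem_some_iff, Option.map_some] at hx hy
    subst hx hy
    exact hadj
  · refine ⟨L₂.head h2, c • L₁.getLast h1, ?_, ?_, ?_⟩
    · rw [List.head?_append_of_ne_nil _ h2, List.head?_eq_some_head h2]
    · rw [List.getLast?_append_of_ne_nil _ (by simpa using h1), List.getLast?_map,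
        List.getLast?_eq_some_getLast h1]; rfl
    · exact K.inv _ _ _ (hch.2.2 _ (by rw [List.getLast?_eq_some_getLast h1]; rfl) _
        (by rw [List.head?_eq_some_head h2]; rfl))

/-- A good list can be traversed between any two consecutive members. -/
theorem Good.tr_adj {l₁ l₂ : List A} {α β : A} (h : K.Good (l₁ ++ α :: β :: l₂)) :
    K.Tr {x | x ∈ l₁ ++ α :: β :: l₂} α β := by
  have h' : K.Good ((l₁ ++ [α]) ++ (β :: l₂)) := by simpa using h
  have := (h'.rotate.tr_ends (α := β) (β := α) (by simp) (by
    rw [← List.append_assoc, List.getLast?_append]; simp)).symm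
  refine this.congr ?_
  ext x; simp; tauto

/-- Chains of steps lift to paths with a prescribed start. -/
theorem exists_lift {l : List A} (h : l.IsChain K.Step) : ∀ (v : V), (∀ a ∈ l.head?, K.π v = a) →
    ∃ L : List V, L.map K.π = l ∧ L.IsChain K.adj ∧ (l ≠ [] → L.head? = some v) := by
  induction l with
  | nil => intro v _; exact ⟨[], by simp⟩
  | cons a l ih =>
    intro v hv
    have hv' : K.π v = a := hv a (by simp)
    rw [List.isChain_cons] at h
    rcases eq_or_ne l [] with rfl | hne
    · exact ⟨[v], by simp [hv'], by simp, by simp⟩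
    · obtain ⟨w, hw, ha⟩ := (h.1 (l.head hne) (by rw [List.head?_eq_some_head hne]; rfl)).lift hv'
      obtain ⟨L, h1, h2, h3⟩ := ih h.2 w (by
        intro b hb; rw [List.head?_eq_some_head hne] at hb; rw [hw]; simpa using hb)
      refine ⟨v :: L, by simp [hv', h1], ?_, by simp⟩
      rw [List.isChain_cons]
      refine ⟨fun y hy => ?_, h2⟩
      rw [h3 hne] at hy; simp at hy; subst hy; exact ha

variable (K) in
/-- `x` is a digon: every vertex has, besides any given one, a further neighbour in the fibre
obtained by translating its own by `x`. -/
def Digon (x : A) : Prop := ∀ v u : V, K.π u = K.π v * x → ∃ c ∈ K.C, c ≠ 1 ∧ K.adj v (c • u)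

/-- A closed walk of distinct elements of `A` whose closing step is a digon is good. -/
theorem good_of_digon {l : List A} (hnd : l.Nodup) (hch : l.IsChain K.Step) {α β : A}
    (hα : l.head? = some α) (hβ : l.getLast? = some β) (hd : K.Digon (β⁻¹ * α)) : K.Good l := by
  obtain ⟨v, hv⟩ := K.π_surj α
  obtain ⟨L, h1, h2, h3⟩ := exists_lift hch v (by intro a ha; rw [hα] at ha; simpa [hv] using ha)
  have hne : l ≠ [] := by rintro rfl; simp at hα
  have hLne : L ≠ [] := by rintro rfl; simp at h1; exact hne h1
  have hl : K.π (L.getLast hLne) = β := by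
    subst h1
    rw [List.getLast?_map, List.getLast?_eq_some_getLast hLne] at hβ
    simpa using hβ
  obtain ⟨c, hc, hc1, ha⟩ := hd (L.getLast hLne) v (by rw [hl, hv]; simp)
  exact ⟨hnd, L, h1, h2, c, hc, hc1, v, _, h3 hne, List.getLast?_eq_some_getLast hLne, ha⟩

end Cover

end HamPath

namespace HamPath

/-! ### Traversable transversals in abelian groups -/

/-- A transversal `β` of the subgroup `F` of `A`, indexed by the vertices of a traversable
symmetric relation whose edges correspond to multiplication by elements of `S`. -/
def TravRep {A : Type*} [CommGroup A] (S : Set A) (F : Subgroup A) : Prop :=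
  ∃ (J : Type) (R : J → J → Prop) (β : J → A), (∀ x y, R x y → R y x) ∧ Trav R ∧
    (∀ x y, R x y → (β x)⁻¹ * β y ∈ S) ∧ (∀ x, ∃ j, (β j)⁻¹ * x ∈ F) ∧
    ∀ i j, (β i)⁻¹ * β j ∈ F → i = j

/-- The powers of `t` modulo a subgroup `F` are traversed by a path, finite or two-way infinite. -/
theorem exists_exponents {A : Type*} [CommGroup A] (t : A) (F : Subgroup A) :
    ∃ (I : Type) (R : I → I → Prop) (e : I → ℤ), (∀ x y, R x y → R y x) ∧ Trav R ∧
      (∀ x y, R x y → IntRel (e x) (e y)) ∧ (∀ m : ℤ, ∃ i, t ^ (m - e i) ∈ F) ∧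
      ∀ i j, t ^ (e i - e j) ∈ F → i = j := by
  classical
  by_cases h : ∃ k : ℕ, 0 < k ∧ t ^ k ∈ F
  · let k := Nat.find h
    have hk : 0 < k := (Nat.find_spec h).1
    have hkF : t ^ k ∈ F := (Nat.find_spec h).2
    have hmin : ∀ m : ℕ, 0 < m → m < k → t ^ m ∉ F := fun m h0 h1 h2 =>
      Nat.find_min h h1 ⟨h0, h2⟩
    refine ⟨Fin k, fun i j => IntRel (i : ℕ) (j : ℕ), fun i => (i : ℕ), fun _ _ h => Or.symm h,
      Or.inl ⟨List.finRange k, ?_, List.nodup_finRange k, List.mem_finRange, ?_⟩,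
      fun _ _ h => h, ?_, ?_⟩
    · intro h; have := congrArg List.length h; simp at this; omega
    · rw [List.isChain_iff_getElem]
      intro i hi
      simp [IntRel]
    · intro m
      have h1 := Int.emod_nonneg m (b := k) (by omega)
      have h2 := Int.emod_lt_of_pos m (b := k) (by omega)
      refine ⟨⟨(m % k).toNat, by omega⟩, ?_⟩
      have e : m - ((m % k).toNat : ℤ) = k * (m / k) := by
        have := Int.mul_ediv_add_emod m k; omega
      simp only [e, zpow_mul, zpow_natCast]
      exact F.zpow_mem hkF _
    · intro i j hij
      ext
      by_contra hne
      rcases lt_or_gt_of_ne hne with h1 | h1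
      · refine hmin (j - i : ℕ) (by omega) (by omega) ?_
        have := F.inv_mem hij
        rw [← zpow_neg] at this
        rw [← zpow_natCast]; convert this using 2; simp only; omega
      · refine hmin (i - j : ℕ) (by omega) (by omega) ?_
        rw [← zpow_natCast]; convert hij using 2; simp only; omega
  · push Not at h
    refine ⟨ℤ, IntRel, id, fun _ _ h => Or.symm h, trav_int, fun _ _ h => h,
      fun m => ⟨m, by simp⟩, ?_⟩
    intro i j hij
    by_contra hne
    rcases lt_or_gt_of_ne hne with h1 | h1
    · refine h (j - i).toNat (by omega) ?_
      have := F.inv_mem hij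
      rw [← zpow_neg] at this
      rw [← zpow_natCast]; convert this using 2; simp only [id]; omega
    · refine h (i - j).toNat (by omega) ?_
      rw [← zpow_natCast]; convert hij using 2; simp only [id]; omega

theorem travRep_of_finset {A : Type*} [CommGroup A] (S : Set A) (hS : ∀ s ∈ S, s⁻¹ ∈ S)
    (T : Finset A) : (T : Set A) ⊆ S → ∀ F : Subgroup A, F ⊔ Subgroup.closure (T : Set A) = ⊤ →
    TravRep S F := by
  classical
  induction T using Finset.induction_on with
  | empty =>
    intro _ F hF
    have hF' : F = ⊤ := by simpa using hF
    subst hF'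
    exact ⟨Unit, fun _ _ => False, fun _ => 1, fun _ _ h => h,
      Or.inl ⟨[()], by simp, by simp, by simp, by simp⟩, fun _ _ h => h.elim,
      fun _ => ⟨(), by simp⟩, fun _ _ _ => rfl⟩
  | insert t T _ ih =>
    intro hT F hF
    obtain ⟨J, R, β, hs, hR, hst, hc, hu⟩ := ih (fun x hx => hT (by simp at hx ⊢; exact Or.inr hx))
      (F ⊔ Subgroup.zpowers t) (by
        rw [sup_assoc, ← hF, Finset.coe_insert, Set.insert_eq, Subgroup.closure_union,
          Subgroup.zpowers_eq_closure])
    obtain ⟨I, R', e, hs', hR', hst', hc', hu'⟩ := exists_exponents t F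
    have ht : t ∈ S := hT (by simp)
    refine ⟨J × I, BoxRel R R', fun x => β x.1 * t ^ e x.2, boxRel_symm hs hs',
      hR.prod hs hs' hR', ?_, ?_, ?_⟩
    · rintro ⟨j, i⟩ ⟨j', i'⟩ (⟨h1, h2⟩ | ⟨h1, h2⟩)
      · simp only at h1 h2
        subst h1
        rcases hst' _ _ h2 with h | h
        · simp only [h]; convert ht using 1; group
        · simp only [h]; convert hS _ ht using 1; group
      · simp only at h1 h2
        subst h2
        convert hst _ _ h1 using 1
        (apply Additive.ofMul.injective; simp only [ofMul_mul, ofMul_zpow, ofMul_inv, ofMul_pow, ofMul_one]; module)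
    · intro x
      obtain ⟨j, hj⟩ := hc x
      obtain ⟨f, hf, z, hz, hfz⟩ := Subgroup.mem_sup.1 hj
      obtain ⟨m, rfl⟩ := Subgroup.mem_zpowers_iff.1 hz
      obtain ⟨i, hi⟩ := hc' m
      refine ⟨(j, i), ?_⟩
      have : (β j * t ^ e i)⁻¹ * x = f * t ^ (m - e i) := by
        rw [zpow_sub, mul_inv_rev, mul_assoc, ← hfz, mul_comm, mul_assoc]
      simp only [this]
      exact F.mul_mem hf hi
    · rintro ⟨j, i⟩ ⟨j', i'⟩ h
      simp only at h
      have e1 : (β j * t ^ e i)⁻¹ * (β j' * t ^ e i') = ((β j)⁻¹ * β j') * t ^ (e i' - e i) := by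
        (apply Additive.ofMul.injective; simp only [ofMul_mul, ofMul_zpow, ofMul_inv, ofMul_pow, ofMul_one]; module)
      rw [e1] at h
      have : (β j)⁻¹ * β j' ∈ F ⊔ Subgroup.zpowers t := by
        have := Subgroup.mul_mem_sup h (Subgroup.zpow_mem_zpowers t (-(e i' - e i)))
        rwa [zpow_neg, mul_inv_cancel_right] at this
      obtain rfl := hu _ _ this
      rw [inv_mul_cancel, one_mul] at h
      rw [hu' _ _ h]

theorem travRep {A : Type*} [CommGroup A] (S : Set A) (hfin : S.Finite) (hS : ∀ s ∈ S, s⁻¹ ∈ S)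
    (F : Subgroup A) (hgen : F ⊔ Subgroup.closure S = ⊤) : TravRep S F :=
  travRep_of_finset S hS hfin.toFinset (by simp) F (by simpa using hgen)

end HamPath

namespace HamPath

namespace Cover

variable {V G A : Type*} [Group G] [MulAction G V] [CommGroup A] {K : Cover V G A}

/-! ### Assembling hamiltonian paths from traversable bricks -/

variable (K) in
/-- Every subgroup of `A` has a traversable transversal along steps of the cover. -/
def Rep : Prop := ∀ F : Subgroup A, TravRep {s | K.Step 1 s} F

theorem step_mul_right {s : A} (hs : K.Step 1 s) (α : A) : K.Step α (α * s) := by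
  simpa using hs.mul α

/-- A brick which is a finite subgroup. -/
theorem ham_single [Infinite A] (hrep : K.Rep) (F : Subgroup A) (hF : (F : Set A).Finite) {f : A}
    (h : K.Tr F 1 f) : TwoWay K.adj := by
  obtain ⟨J, R, β, hs, hR, hst, hc, hu⟩ := hrep F
  have hJ : Infinite J := by
    by_contra hJ
    rw [not_infinite_iff_finite] at hJ
    have : Finite F := hF
    refine not_finite_iff_infinite.2 ‹Infinite A› (Finite.of_surjective
      (fun x : J × F => β x.1 * x.2) fun x => ?_)
    obtain ⟨j, hj⟩ := hc x
    exact ⟨(j, ⟨_, hj⟩), by simp⟩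
  have hf : f ∈ F := h.mem_right
  refine ham_of_star hs (TwoWay.of_trav hR) (fun j => {x | (β j)⁻¹ * x ∈ F}) ?_ hc ?_ ?_
  · intro i j x hi hj
    refine hu i j ?_
    have := F.mul_mem hi (F.inv_mem hj)
    convert this using 1
    (apply Additive.ofMul.injective; simp only [ofMul_mul, ofMul_zpow, ofMul_inv, ofMul_pow, ofMul_one]; module)
  · intro j; exact ⟨β j, by simp [F.one_mem]⟩
  · intro i j hij α hα
    refine ⟨α * f, ?_, α * f * ((β i)⁻¹ * β j), ?_, step_mul_right (hst _ _ hij) _⟩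
    · have := h.mul (B' := {x | (β i)⁻¹ * x ∈ F}) α (fun y => by
        change (β i)⁻¹ * (α * y) ∈ F ↔ y ∈ F
        rw [← mul_assoc]; exact F.mul_mem_cancel_left hα)
      simpa using this
    · have := F.mul_mem hα hf
      change (β j)⁻¹ * (α * f * ((β i)⁻¹ * β j)) ∈ F
      convert this using 1
      (apply Additive.ofMul.injective; simp only [ofMul_mul, ofMul_zpow, ofMul_inv, ofMul_pow, ofMul_one]; module)

/-- The union of a subgroup `F` and its coset `F z`. -/
def pairSet (F : Subgroup A) (z : A) : Set A :=
  {x | ∃ ε : ℤ, 0 ≤ ε ∧ ε ≤ 1 ∧ x * z ^ (-ε) ∈ F}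

/-- A brick consisting of two cosets of `F`, the traversals of which may start and end in
arbitrary layers. -/
theorem ham_pair (hrep : K.Rep) (F : Subgroup A) (z : A) (hz : K.Step 1 z)
    (hzF : ∀ m : ℤ, z ^ m ∈ F → m = 0)
    (h00 : ∃ f ∈ F, ∃ g ∈ F, K.Tr (pairSet F z) f g)
    (h01 : ∃ f ∈ F, ∃ g ∈ F, K.Tr (pairSet F z) f (g * z))
    (h11 : ∃ f ∈ F, ∃ g ∈ F, K.Tr (pairSet F z) (f * z) (g * z)) : TwoWay K.adj := by
  obtain ⟨J, R, β, hs, hR, hst, hc, hu⟩ := hrep (F ⊔ Subgroup.zpowers z)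
  have hcov : ∀ x, ∃ j, ∃ m : ℤ, (β j)⁻¹ * x * z ^ (-m) ∈ F := by
    intro x
    obtain ⟨j, hj⟩ := hc x
    obtain ⟨f, hf, y, hy, e⟩ := Subgroup.mem_sup.1 hj
    obtain ⟨m, rfl⟩ := Subgroup.mem_zpowers_iff.1 hy
    exact ⟨j, m, by rw [← e, zpow_neg, mul_inv_cancel_right]; exact hf⟩
  have huniq : ∀ x j j' (m m' : ℤ), (β j)⁻¹ * x * z ^ (-m) ∈ F → (β j')⁻¹ * x * z ^ (-m') ∈ F →
      j = j' ∧ m = m' := by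
    intro x j j' m m' h h'
    have h1 := F.mul_mem h (F.inv_mem h')
    have e : (β j)⁻¹ * β j' = (β j)⁻¹ * x * z ^ (-m) * ((β j')⁻¹ * x * z ^ (-m'))⁻¹ * z ^ (m - m') := by
      (apply Additive.ofMul.injective; simp only [ofMul_mul, ofMul_zpow, ofMul_inv, ofMul_pow, ofMul_one]; module)
    obtain rfl := hu j j' (e ▸ Subgroup.mul_mem_sup h1 (Subgroup.zpow_mem_zpowers _ _))
    refine ⟨rfl, ?_⟩
    have := hzF (m' - m) (by convert h1 using 1; (apply Additive.ofMul.injective; simp only [ofMul_mul, ofMul_zpow, ofMul_inv, ofMul_pow, ofMul_one]; module))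
    omega
  -- traversal of the basic brick from an arbitrary point to an arbitrary layer
  have hT : ∀ ε ε' : ℤ, 0 ≤ ε → ε ≤ 1 → 0 ≤ ε' → ε' ≤ 1 → ∀ x ∈ F, ∃ y ∈ F,
      K.Tr (pairSet F z) (x * z ^ ε) (y * z ^ ε') := by
    have hmv : ∀ f ∈ F, ∀ α β, K.Tr (pairSet F z) α β → K.Tr (pairSet F z) (f * α) (f * β) := by
      intro f hf α β h
      refine h.mul f fun y => ?_
      simp only [pairSet, Set.mem_ofPred_eq, mul_assoc]
      constructor
      · rintro ⟨ε, h1, h2, h3⟩; exact ⟨ε, h1, h2, (F.mul_mem_cancel_left hf).1 h3⟩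
      · rintro ⟨ε, h1, h2, h3⟩; exact ⟨ε, h1, h2, (F.mul_mem_cancel_left hf).2 h3⟩
    have base : ∀ ε ε' : ℤ, 0 ≤ ε → ε ≤ 1 → 0 ≤ ε' → ε' ≤ 1 → ∃ f ∈ F, ∃ g ∈ F,
        K.Tr (pairSet F z) (f * z ^ ε) (g * z ^ ε') := by
      intro ε ε' h1 h2 h3 h4
      obtain rfl | rfl : ε = 0 ∨ ε = 1 := by omega
      · obtain rfl | rfl : ε' = 0 ∨ ε' = 1 := by omega
        · simpa using h00
        · simpa using h01
      · obtain rfl | rfl : ε' = 0 ∨ ε' = 1 := by omega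
        · obtain ⟨f, hf, g, hg, h⟩ := h01
          exact ⟨g, hg, f, hf, by simpa using h.symm⟩
        · simpa using h11
    intro ε ε' h1 h2 h3 h4 x hx
    obtain ⟨f, hf, g, hg, h⟩ := base ε ε' h1 h2 h3 h4
    refine ⟨x * f⁻¹ * g, F.mul_mem (F.mul_mem hx (F.inv_mem hf)) hg, ?_⟩
    have := hmv (x * f⁻¹) (F.mul_mem hx (F.inv_mem hf)) _ _ h
    convert this using 1
    · (apply Additive.ofMul.injective; simp only [ofMul_mul, ofMul_zpow, ofMul_inv, ofMul_pow, ofMul_one]; module)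
    · (apply Additive.ofMul.injective; simp only [ofMul_mul, ofMul_zpow, ofMul_inv, ofMul_pow, ofMul_one]; module)
  have hJ : Nonempty J := let ⟨j, _⟩ := hc 1; ⟨j⟩
  refine ham_of_star (R := BoxRel IntRel R) (boxRel_symm (fun _ _ h => Or.symm h) hs)
    (TwoWay.of_trav (trav_int.prod (fun _ _ h => Or.symm h) hs hR))
    (fun q => {x | ∃ ε : ℤ, 0 ≤ ε ∧ ε ≤ 1 ∧ (β q.2)⁻¹ * x * z ^ (-(2 * q.1 + ε)) ∈ F}) ?_ ?_ ?_ ?_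
  · rintro ⟨i, j⟩ ⟨i', j'⟩ x ⟨ε, h1, h2, h3⟩ ⟨ε', h1', h2', h3'⟩
    obtain ⟨rfl, h⟩ := huniq x _ _ _ _ h3 h3'
    have : i = i' := by simp only at h; omega
    rw [this]
  · intro x
    obtain ⟨j, m, h⟩ := hcov x
    exact ⟨(m / 2, j), m % 2, by omega, by omega, by
      rw [show 2 * (m / 2) + m % 2 = m by omega]; exact h⟩
  · rintro ⟨i, j⟩
    refine ⟨β j * z ^ (2 * i), 0, le_rfl, by omega, ?_⟩
    convert F.one_mem using 1
    (apply Additive.ofMul.injective; simp only [ofMul_mul, ofMul_zpow, ofMul_inv, ofMul_pow, ofMul_one]; module)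
  · rintro ⟨i, j⟩ ⟨i', j'⟩ hq α ⟨ε, h1, h2, h3⟩
    have hTr : ∀ ε' : ℤ, 0 ≤ ε' → ε' ≤ 1 → ∃ y ∈ F,
        K.Tr {x | ∃ ε : ℤ, 0 ≤ ε ∧ ε ≤ 1 ∧ (β j)⁻¹ * x * z ^ (-(2 * i + ε)) ∈ F} α
          (β j * z ^ (2 * i) * (y * z ^ ε')) := by
      intro ε' h1' h2'
      obtain ⟨y, hy, h⟩ := hT ε ε' h1 h2 h1' h2' _ h3
      refine ⟨y, hy, ?_⟩
      have := h.mul (B' := {x | ∃ ε : ℤ, 0 ≤ ε ∧ ε ≤ 1 ∧ (β j)⁻¹ * x * z ^ (-(2 * i + ε)) ∈ F})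
        (β j * z ^ (2 * i)) (fun y => by
          simp only [pairSet, Set.mem_ofPred_eq]
          refine exists_congr fun ε => and_congr_right fun _ => and_congr_right fun _ => ?_
          have e : (β j)⁻¹ * (β j * z ^ (2 * i) * y) * z ^ (-(2 * i + ε)) = y * z ^ (-ε) := by
            (apply Additive.ofMul.injective; simp only [ofMul_mul, ofMul_zpow, ofMul_inv, ofMul_pow, ofMul_one]; module)
          rw [e])
      convert this using 1
      (apply Additive.ofMul.injective; simp only [ofMul_mul, ofMul_zpow, ofMul_inv, ofMul_pow, ofMul_one]; module)
    rcases hq with ⟨e1, e2⟩ | ⟨e1, e2⟩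
    · simp only at e1 e2
      subst e1
      obtain ⟨y, hy, h⟩ := hTr 0 le_rfl (by omega)
      refine ⟨_, h, _, ?_, step_mul_right (hst _ _ e2) _⟩
      refine ⟨0, le_rfl, by omega, ?_⟩
      convert hy using 1
      (apply Additive.ofMul.injective; simp only [ofMul_mul, ofMul_zpow, ofMul_inv, ofMul_pow, ofMul_one]; module)
    · simp only at e1 e2
      subst e2
      rcases e1 with rfl | rfl
      · obtain ⟨y, hy, h⟩ := hTr 1 (by omega) le_rfl
        refine ⟨_, h, _, ?_, step_mul_right hz _⟩
        refine ⟨0, le_rfl, by omega, ?_⟩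
        convert hy using 1
        (apply Additive.ofMul.injective; simp only [ofMul_mul, ofMul_zpow, ofMul_inv, ofMul_pow, ofMul_one]; module)
      · obtain ⟨y, hy, h⟩ := hTr 0 le_rfl (by omega)
        refine ⟨_, h, _, ?_, step_mul_right hz.inv _⟩
        refine ⟨1, by omega, le_rfl, ?_⟩
        convert hy using 1
        (apply Additive.ofMul.injective; simp only [ofMul_mul, ofMul_zpow, ofMul_inv, ofMul_pow, ofMul_one]; module)

/-- Elements of `A` in coordinates with respect to a transversal of `⟨a⟩ ⊔ ⟨b⟩`. -/
theorem exists_coords {J : Type} {β : J → A} {a b : A}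
    (hc : ∀ x, ∃ j, (β j)⁻¹ * x ∈ Subgroup.zpowers a ⊔ Subgroup.zpowers b) (x : A) :
    ∃ j, ∃ m n : ℤ, x = β j * (a ^ m * b ^ n) := by
  obtain ⟨j, hj⟩ := hc x
  obtain ⟨f, hf, y, hy, e⟩ := Subgroup.mem_sup.1 hj
  obtain ⟨m, rfl⟩ := Subgroup.mem_zpowers_iff.1 hf
  obtain ⟨n, rfl⟩ := Subgroup.mem_zpowers_iff.1 hy
  exact ⟨j, m, n, by rw [e]; simp⟩

theorem coords_unique {J : Type} {β : J → A} {a b : A}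
    (hu : ∀ i j, (β i)⁻¹ * β j ∈ Subgroup.zpowers a ⊔ Subgroup.zpowers b → i = j)
    {j j' : J} {m n m' n' : ℤ} (h : β j * (a ^ m * b ^ n) = β j' * (a ^ m' * b ^ n')) :
    j = j' ∧ a ^ (m - m') * b ^ (n - n') = 1 := by
  have e : (β j)⁻¹ * β j' = a ^ (m - m') * b ^ (n - n') := by
    have e1 : (β j)⁻¹ * β j' = (β j)⁻¹ * (β j' * (a ^ m' * b ^ n')) * (a ^ (-m') * b ^ (-n')) := by
      (apply Additive.ofMul.injective; simp only [ofMul_mul, ofMul_zpow, ofMul_inv, ofMul_pow, ofMul_one]; module)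
    rw [e1, ← h]
    (apply Additive.ofMul.injective; simp only [ofMul_mul, ofMul_zpow, ofMul_inv, ofMul_pow, ofMul_one]; module)
  obtain rfl := hu j j' (e ▸ Subgroup.mul_mem_sup (Subgroup.zpow_mem_zpowers _ _)
    (Subgroup.zpow_mem_zpowers _ _))
  exact ⟨rfl, by rw [← e]; simp⟩

/-- The unit square spanned by two independent elements. -/
def squareSet (a b : A) : Set A :=
  {x | ∃ ε δ : ℤ, 0 ≤ ε ∧ ε ≤ 1 ∧ 0 ≤ δ ∧ δ ≤ 1 ∧ x = a ^ ε * b ^ δ}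

/-- A brick which is a unit square. -/
theorem ham_square (hrep : K.Rep) (a b : A) (ha : K.Step 1 a) (hb : K.Step 1 b)
    (hker : ∀ m n : ℤ, a ^ m * b ^ n = 1 → m = 0 ∧ n = 0)
    (hT1 : ∀ ε δ : ℤ, 0 ≤ ε → ε ≤ 1 → 0 ≤ δ → δ ≤ 1 →
      K.Tr (squareSet a b) (a ^ ε * b ^ δ) (a ^ (1 - ε) * b ^ δ))
    (hT2 : ∀ ε δ : ℤ, 0 ≤ ε → ε ≤ 1 → 0 ≤ δ → δ ≤ 1 →
      K.Tr (squareSet a b) (a ^ ε * b ^ δ) (a ^ ε * b ^ (1 - δ))) : TwoWay K.adj := by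
  obtain ⟨J, R, β, hs, hR, hst, hc, hu⟩ := hrep (Subgroup.zpowers a ⊔ Subgroup.zpowers b)
  have hJ : Nonempty J := let ⟨j, _⟩ := hc 1; ⟨j⟩
  have hI : ∀ x y, IntRel x y → IntRel y x := fun _ _ h => Or.symm h
  let blk : ℤ × ℤ × J → Set A := fun q =>
    {x | ∃ ε δ : ℤ, 0 ≤ ε ∧ ε ≤ 1 ∧ 0 ≤ δ ∧ δ ≤ 1 ∧
      x = β q.2.2 * (a ^ (2 * q.1 + ε) * b ^ (2 * q.2.1 + δ))}
  have hblk : ∀ m n j y, β j * (a ^ (2 * m) * b ^ (2 * n)) * y ∈ blk (m, n, j) ↔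
      y ∈ squareSet a b := by
    intro m n j y
    simp only [blk, squareSet, Set.mem_ofPred_eq]
    refine exists_congr fun ε => exists_congr fun δ => and_congr_right fun _ =>
      and_congr_right fun _ => and_congr_right fun _ => and_congr_right fun _ => ?_
    have e : β j * (a ^ (2 * m + ε) * b ^ (2 * n + δ)) =
      β j * (a ^ (2 * m) * b ^ (2 * n)) * (a ^ ε * b ^ δ) := by (apply Additive.ofMul.injective; simp only [ofMul_mul, ofMul_zpow, ofMul_inv, ofMul_pow, ofMul_one]; module)
    rw [e, mul_right_inj]
  refine ham_of_star (R := BoxRel IntRel (BoxRel IntRel R)) (boxRel_symm hI (boxRel_symm hI hs))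
    (TwoWay.of_trav (trav_int.prod hI (boxRel_symm hI hs) (trav_int.prod hI hs hR))) blk ?_ ?_ ?_ ?_
  · rintro ⟨m, n, j⟩ ⟨m', n', j'⟩ x ⟨ε, δ, h1, h2, h3, h4, rfl⟩ ⟨ε', δ', h1', h2', h3', h4', e⟩
    obtain ⟨h, e⟩ := coords_unique hu e
    obtain ⟨h5, h6⟩ := hker _ _ e
    simp only at h h5 h6
    simp only [Prod.mk.injEq]
    exact ⟨by omega, by omega, h⟩
  · intro x
    obtain ⟨j, m, n, rfl⟩ := exists_coords hc x
    exact ⟨(m / 2, n / 2, j), m % 2, n % 2, by omega, by omega, by omega, by omega, by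
      simp only; rw [show 2 * (m / 2) + m % 2 = m by omega, show 2 * (n / 2) + n % 2 = n by omega]⟩
  · rintro ⟨m, n, j⟩
    exact ⟨_, 0, 0, le_rfl, by omega, le_rfl, by omega, rfl⟩
  · rintro ⟨m, n, j⟩ ⟨m', n', j'⟩ hq α ⟨ε, δ, h1, h2, h3, h4, rfl⟩
    simp only
    have hTr : ∀ ε' δ' : ℤ, 0 ≤ ε' → ε' ≤ 1 → 0 ≤ δ' → δ' ≤ 1 →
        (ε' = 1 - ε ∧ δ' = δ ∨ ε' = ε ∧ δ' = 1 - δ) →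
        K.Tr (blk (m, n, j)) (β j * (a ^ (2 * m + ε) * b ^ (2 * n + δ)))
          (β j * (a ^ (2 * m + ε') * b ^ (2 * n + δ'))) := by
      intro ε' δ' _ _ _ _ h
      have : K.Tr (squareSet a b) (a ^ ε * b ^ δ) (a ^ ε' * b ^ δ') := by
        rcases h with ⟨rfl, rfl⟩ | ⟨rfl, rfl⟩
        · exact hT1 _ _ h1 h2 h3 h4
        · exact hT2 _ _ h1 h2 h3 h4
      convert this.mul (β j * (a ^ (2 * m) * b ^ (2 * n))) (hblk m n j) using 1
      · (apply Additive.ofMul.injective; simp only [ofMul_mul, ofMul_zpow, ofMul_inv, ofMul_pow, ofMul_one]; module)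
      · (apply Additive.ofMul.injective; simp only [ofMul_mul, ofMul_zpow, ofMul_inv, ofMul_pow, ofMul_one]; module)
    rcases hq with ⟨e1, ⟨e2, e3⟩ | ⟨e2, e3⟩⟩ | ⟨e1, e2⟩
    · simp only at e1 e2 e3
      subst e1 e2
      refine ⟨_, hTr (1 - ε) δ (by omega) (by omega) h3 h4 (by omega), _, ?_,
        step_mul_right (hst _ _ e3) _⟩
      exact ⟨1 - ε, δ, by omega, by omega, h3, h4, by (apply Additive.ofMul.injective; simp only [ofMul_mul, ofMul_zpow, ofMul_inv, ofMul_pow, ofMul_one]; module)⟩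
    · simp only at e1 e2 e3
      subst e1 e3
      rcases e2 with rfl | rfl
      · refine ⟨_, hTr (if δ = 1 then 1 - ε else ε) 1 (by split_ifs <;> omega)
          (by split_ifs <;> omega) (by omega) (by omega) (by split_ifs <;> omega), _, ?_,
          step_mul_right hb _⟩
        exact ⟨if δ = 1 then 1 - ε else ε, 0, by split_ifs <;> omega, by split_ifs <;> omega,
          by omega, by omega, by (apply Additive.ofMul.injective; simp only [ofMul_mul, ofMul_zpow, ofMul_inv, ofMul_pow, ofMul_one]; module)⟩
      · refine ⟨_, hTr (if δ = 0 then 1 - ε else ε) 0 (by split_ifs <;> omega)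
          (by split_ifs <;> omega) (by omega) (by omega) (by split_ifs <;> omega), _, ?_,
          step_mul_right hb.inv _⟩
        exact ⟨if δ = 0 then 1 - ε else ε, 1, by split_ifs <;> omega, by split_ifs <;> omega,
          by omega, by omega, by (apply Additive.ofMul.injective; simp only [ofMul_mul, ofMul_zpow, ofMul_inv, ofMul_pow, ofMul_one]; module)⟩
    · simp only at e1 e2
      obtain ⟨rfl, rfl⟩ := Prod.mk.inj e2
      rcases e1 with rfl | rfl
      · refine ⟨_, hTr 1 (if ε = 1 then 1 - δ else δ) (by omega) (by omega)
          (by split_ifs <;> omega) (by split_ifs <;> omega) (by split_ifs <;> omega), _, ?_,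
          step_mul_right ha _⟩
        exact ⟨0, if ε = 1 then 1 - δ else δ, by omega, by omega, by split_ifs <;> omega,
          by split_ifs <;> omega, by (apply Additive.ofMul.injective; simp only [ofMul_mul, ofMul_zpow, ofMul_inv, ofMul_pow, ofMul_one]; module)⟩
      · refine ⟨_, hTr 0 (if ε = 0 then 1 - δ else δ) (by omega) (by omega)
          (by split_ifs <;> omega) (by split_ifs <;> omega) (by split_ifs <;> omega), _, ?_,
          step_mul_right ha.inv _⟩
        exact ⟨1, if ε = 0 then 1 - δ else δ, by omega, by omega, by split_ifs <;> omega,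
          by split_ifs <;> omega, by (apply Additive.ofMul.injective; simp only [ofMul_mul, ofMul_zpow, ofMul_inv, ofMul_pow, ofMul_one]; module)⟩

end Cover

end HamPath

namespace HamPath

namespace Cover

variable {V G A : Type*} [Group G] [MulAction G V] [CommGroup A] {K : Cover V G A}

/-- The `i`-th point of the closed walk `a⁻¹` (`j` times), `b` (`k` times), when `b ^ k = a ^ j`. -/
def gammaPt (a b : A) (j : ℕ) (i : ℤ) : A := a ^ (-min i j) * b ^ (max 0 (i - j))

/-- The closed walk `a⁻¹` (`j` times), `b` (`k` times), as a set. -/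
def gammaSet (a b : A) (j k : ℕ) : Set A := {x | ∃ i : ℤ, 0 ≤ i ∧ i < j + k ∧ x = gammaPt a b j i}

/-- A brick which is the cycle `gammaSet` given by the relation between two dependent elements;
its translates by powers of `a * b` tile the subgroup `⟨a, b⟩`. -/
theorem ham_gamma (hrep : K.Rep) (a b : A) (ha : K.Step 1 a) (hb : K.Step 1 b) (j k : ℕ)
    (hj : 1 ≤ j) (hk : 1 ≤ k) (hjk : 3 ≤ j + k)
    (hker : ∀ m n : ℤ, a ^ m * b ^ n = 1 → ∃ q : ℤ, m = -(j * q) ∧ n = k * q)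
    (hrel : b ^ (k : ℤ) = a ^ (j : ℤ))
    (hT : ∀ i : ℤ, 0 ≤ i → i + 1 < j + k →
      K.Tr (gammaSet a b j k) (gammaPt a b j i) (gammaPt a b j (i + 1)))
    (hT' : K.Tr (gammaSet a b j k) (gammaPt a b j (j + k - 1)) (gammaPt a b j 0)) :
    TwoWay K.adj := by
  obtain ⟨J, R, β, hs, hR, hst, hc, hu⟩ := hrep (Subgroup.zpowers a ⊔ Subgroup.zpowers b)
  have hJ : Nonempty J := let ⟨j, _⟩ := hc 1; ⟨j⟩
  have hI : ∀ x y, IntRel x y → IntRel y x := fun _ _ h => Or.symm h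
  have hrelq : ∀ q : ℤ, a ^ (-(j * q)) * b ^ (k * q) = 1 := by
    intro q
    rw [zpow_mul b, hrel, ← zpow_mul, zpow_neg, inv_mul_cancel]
  -- from each point of the cycle one may traverse it and end at a point other than `t`
  have hexit : ∀ t i : ℤ, 0 ≤ i → i < j + k → ∃ i' : ℤ, 0 ≤ i' ∧ i' < j + k ∧ i' ≠ t ∧
      K.Tr (gammaSet a b j k) (gammaPt a b j i) (gammaPt a b j i') := by
    intro t i h0 h1
    have hnext : ∃ i' : ℤ, 0 ≤ i' ∧ i' < j + k ∧ (i' = i + 1 ∨ i' = 0 ∧ i = j + k - 1) ∧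
        K.Tr (gammaSet a b j k) (gammaPt a b j i) (gammaPt a b j i') := by
      by_cases h : i + 1 < j + k
      · exact ⟨i + 1, by omega, h, Or.inl rfl, hT i h0 h⟩
      · obtain rfl : i = j + k - 1 := by omega
        exact ⟨0, le_rfl, by omega, Or.inr ⟨rfl, rfl⟩, hT'⟩
    have hprev : ∃ i' : ℤ, 0 ≤ i' ∧ i' < j + k ∧ (i' = i - 1 ∨ i' = j + k - 1 ∧ i = 0) ∧
        K.Tr (gammaSet a b j k) (gammaPt a b j i) (gammaPt a b j i') := by
      by_cases h : 1 ≤ i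
      · exact ⟨i - 1, by omega, by omega, Or.inl rfl, by
          simpa using (hT (i - 1) (by omega) (by omega)).symm⟩
      · obtain rfl : i = 0 := by omega
        exact ⟨j + k - 1, by omega, by omega, Or.inr ⟨rfl, rfl⟩, hT'.symm⟩
    obtain ⟨x, x1, x2, x3, x4⟩ := hnext
    obtain ⟨y, y1, y2, y3, y4⟩ := hprev
    by_cases hx : x = t
    · exact ⟨y, y1, y2, by omega, y4⟩
    · exact ⟨x, x1, x2, hx, x4⟩
  let blk : ℤ × J → Set A := fun q =>
    {x | ∃ i : ℤ, 0 ≤ i ∧ i < j + k ∧ x = β q.2 * (a * b) ^ q.1 * gammaPt a b j i}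
  have hcoord : ∀ q n i, β q * (a * b) ^ n * gammaPt a b j i =
      β q * (a ^ (n - min i j) * b ^ (n + max 0 (i - j))) := by
    intro q n i; rw [gammaPt, mul_zpow]; (apply Additive.ofMul.injective; simp only [ofMul_mul, ofMul_zpow, ofMul_inv, ofMul_pow, ofMul_one]; module)
  refine ham_of_star (R := BoxRel IntRel R) (boxRel_symm hI hs)
    (TwoWay.of_trav (trav_int.prod hI hs hR)) blk ?_ ?_ ?_ ?_
  · rintro ⟨n, q⟩ ⟨n', q'⟩ x ⟨i, h1, h2, h3⟩ ⟨i', h1', h2', h3'⟩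
    rw [h3, hcoord, hcoord] at h3'
    obtain ⟨h, e⟩ := coords_unique hu h3'
    obtain ⟨r, e1, e2⟩ := hker _ _ e
    simp only at h e1 e2
    subst h
    have hi : (i' - i : ℤ) = -((j + k) * r) := by
      rw [add_mul]; omega
    have hr : r = 0 := by
      by_contra hr
      rcases lt_or_gt_of_ne hr with h | h
      · nlinarith
      · nlinarith
    subst hr
    simp only [mul_zero] at *
    have : n = n' := by omega
    rw [this]
  · intro x
    obtain ⟨q, m, n, rfl⟩ := exists_coords hc x
    -- the differences of exponents along the cycle run through all residues modulo `j + k`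
    have hpos : (0 : ℤ) < j + k := by omega
    have r0 := Int.emod_nonneg (n - m) hpos.ne'
    have r1 := Int.emod_lt_of_pos (n - m) hpos
    have r2 := Int.mul_ediv_add_emod (n - m) (j + k)
    set r := (n - m) % ((j : ℤ) + k)
    set d := (n - m) / ((j : ℤ) + k)
    refine ⟨(m + j * d + min r j, q), r, r0, r1, ?_⟩
    rw [hcoord]
    have e : a ^ m * b ^ n = a ^ (m + j * d) * b ^ (n - k * d) := by
      rw [← mul_one (a ^ (m + j * d) * b ^ (n - k * d)), ← hrelq d]
      (apply Additive.ofMul.injective; simp only [ofMul_mul, ofMul_zpow, ofMul_inv, ofMul_pow, ofMul_one]; module)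
    simp only [e]
    congr 3
    · omega
    · rw [add_mul] at r2; omega
  · rintro ⟨n, q⟩
    exact ⟨_, 0, le_rfl, by omega, rfl⟩
  · rintro ⟨n, q⟩ ⟨n', q'⟩ hq α ⟨i, h1, h2, rfl⟩
    simp only
    have hmv : ∀ i', K.Tr (gammaSet a b j k) (gammaPt a b j i) (gammaPt a b j i') →
        K.Tr (blk (n, q)) (β q * (a * b) ^ n * gammaPt a b j i)
          (β q * (a * b) ^ n * gammaPt a b j i') := by
      intro i' h
      refine h.mul _ fun y => ?_
      simp only [blk, gammaSet, Set.mem_ofPred_eq, mul_right_inj]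
    rcases hq with ⟨e1, e2⟩ | ⟨e1, e2⟩
    · simp only at e1 e2
      subst e1
      obtain ⟨i', f1, f2, f3, f4⟩ := hexit 0 i h1 h2
      refine ⟨_, hmv _ f4, _, ?_, step_mul_right (hst _ _ e2) _⟩
      exact ⟨i', f1, f2, by (apply Additive.ofMul.injective; simp only [ofMul_mul, ofMul_zpow, ofMul_inv, ofMul_pow, ofMul_one]; module)⟩
    · simp only at e1 e2
      subst e2
      rcases e1 with rfl | rfl
      · obtain ⟨i', f1, f2, f3, f4⟩ := hexit j i h1 h2
        rcases lt_or_gt_of_ne f3 with h | h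
        · refine ⟨_, hmv _ f4, _, ?_, step_mul_right hb _⟩
          refine ⟨i' + 1, by omega, by omega, ?_⟩
          simp only [hcoord]
          rw [show min i' (j : ℤ) = i' by omega, show min (i' + 1) (j : ℤ) = i' + 1 by omega,
            show max 0 (i' - (j : ℤ)) = 0 by omega, show max 0 (i' + 1 - (j : ℤ)) = 0 by omega]
          (apply Additive.ofMul.injective; simp only [ofMul_mul, ofMul_zpow, ofMul_inv, ofMul_pow, ofMul_one]; module)
        · refine ⟨_, hmv _ f4, _, ?_, step_mul_right ha _⟩
          refine ⟨i' - 1, by omega, by omega, ?_⟩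
          simp only [hcoord]
          rw [show min i' (j : ℤ) = j by omega, show min (i' - 1) (j : ℤ) = j by omega,
            show max 0 (i' - (j : ℤ)) = i' - j by omega,
            show max 0 (i' - 1 - (j : ℤ)) = i' - 1 - j by omega]
          (apply Additive.ofMul.injective; simp only [ofMul_mul, ofMul_zpow, ofMul_inv, ofMul_pow, ofMul_one]; module)
      · obtain ⟨i', f1, f2, f3, f4⟩ := hexit 0 i h1 h2
        by_cases h : i' ≤ j
        · refine ⟨_, hmv _ f4, _, ?_, step_mul_right hb.inv _⟩
          refine ⟨i' - 1, by omega, by omega, ?_⟩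
          simp only [hcoord]
          rw [show min i' (j : ℤ) = i' by omega, show min (i' - 1) (j : ℤ) = i' - 1 by omega,
            show max 0 (i' - (j : ℤ)) = 0 by omega, show max 0 (i' - 1 - (j : ℤ)) = 0 by omega]
          (apply Additive.ofMul.injective; simp only [ofMul_mul, ofMul_zpow, ofMul_inv, ofMul_pow, ofMul_one]; module)
        · refine ⟨_, hmv _ f4, _, ?_, step_mul_right ha.inv _⟩
          by_cases h' : i' = j + k - 1
          · refine ⟨0, by omega, by omega, ?_⟩
            simp only [hcoord]
            rw [show min i' (j : ℤ) = j by omega, show min 0 (j : ℤ) = 0 by omega,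
              show max 0 (i' - (j : ℤ)) = k - 1 by omega,
              show max 0 (0 - (j : ℤ)) = 0 by omega]
            have := hrelq 1
            rw [← mul_one (β q * (a ^ (n' - 0) * b ^ (n' + 0))), ← this]
            (apply Additive.ofMul.injective; simp only [ofMul_mul, ofMul_zpow, ofMul_inv, ofMul_pow, ofMul_one]; module)
          · refine ⟨i' + 1, by omega, by omega, ?_⟩
            simp only [hcoord]
            rw [show min i' (j : ℤ) = j by omega, show min (i' + 1) (j : ℤ) = j by omega,
              show max 0 (i' - (j : ℤ)) = i' - j by omega,
              show max 0 (i' + 1 - (j : ℤ)) = i' + 1 - j by omega]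
            (apply Additive.ofMul.injective; simp only [ofMul_mul, ofMul_zpow, ofMul_inv, ofMul_pow, ofMul_one]; module)

/-- The ladder of width two over the powers `1, b, …, b ^ (k - 1)`. -/
def ladderSet (a b : A) (k : ℕ) : Set A :=
  {x | ∃ f i : ℤ, 0 ≤ f ∧ f < 2 ∧ 0 ≤ i ∧ i < k ∧ x = a ^ f * b ^ i}

/-- Bricks which are ladders, when `⟨a, b⟩` has finite index. A strip of width four meets each coset
in two adjacent ladders; it is traversed by passing through the cosets along the first ladders and
returning along the second ones. -/
theorem ham_grid (hrep : K.Rep) (a b : A) (ha : K.Step 1 a) (hb : K.Step 1 b) (k : ℕ) (j : ℤ)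
    (hk : 2 ≤ k)
    (hker : ∀ m n : ℤ, a ^ m * b ^ n = 1 → ∃ q : ℤ, m = -(j * q) ∧ n = k * q)
    (hrel : b ^ (k : ℤ) = a ^ j)
    (hfin : Finite (A ⧸ (Subgroup.zpowers a ⊔ Subgroup.zpowers b)))
    (h1 : K.Tr (ladderSet a b k) 1 a) (h2 : K.Tr (ladderSet a b k) a (a * b))
    (h3 : K.Tr (ladderSet a b k) 1 b) : TwoWay K.adj := by
  obtain ⟨J, R, β, hs, hR, hst, hc, hu⟩ := hrep (Subgroup.zpowers a ⊔ Subgroup.zpowers b)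
  have hJ : Finite J := Finite.of_injective
    (fun j => (β j : A ⧸ (Subgroup.zpowers a ⊔ Subgroup.zpowers b)))
    (fun i j h => hu i j (QuotientGroup.eq.1 h))
  obtain ⟨l, l1, l2, l3, l4⟩ : ∃ l : List J, l ≠ [] ∧ l.Nodup ∧ (∀ x, x ∈ l) ∧ l.IsChain R := by
    rcases hR with h | ⟨f, hf, -⟩
    · exact h
    · exact absurd (Finite.of_injective f hf.1) (not_finite_iff_infinite.2 inferInstance)
  have huniq : ∀ q q' (f i f' i' : ℤ), 0 ≤ i → i < k → 0 ≤ i' → i' < k →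
      β q * (a ^ f * b ^ i) = β q' * (a ^ f' * b ^ i') → q = q' ∧ f = f' ∧ i = i' := by
    intro q q' f i f' i' h1 h2 h3 h4 h
    obtain ⟨h, e⟩ := coords_unique hu h
    obtain ⟨r, e1, e2⟩ := hker _ _ e
    have hr : r = 0 := by
      by_contra hr
      rcases lt_or_gt_of_ne hr with h | h
      · nlinarith
      · nlinarith
    subst hr
    simp only [mul_zero, neg_zero] at e1 e2
    exact ⟨h, by omega, by omega⟩
  -- the ladder in row `q` occupying the columns `c` and `c + 1`
  let Lad : J → ℤ → Set A := fun q c =>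
    {x | ∃ f i : ℤ, c ≤ f ∧ f < c + 2 ∧ 0 ≤ i ∧ i < k ∧ x = β q * (a ^ f * b ^ i)}
  have hLad : ∀ q c α γ, K.Tr (ladderSet a b k) α γ →
      K.Tr (Lad q c) (β q * a ^ c * α) (β q * a ^ c * γ) := by
    intro q c α γ h
    refine h.mul _ fun y => ?_
    simp only [Lad, ladderSet, Set.mem_ofPred_eq]
    constructor
    · rintro ⟨f, i, f1, f2, f3, f4, e⟩
      refine ⟨f - c, i, by omega, by omega, f3, f4, ?_⟩
      rw [← mul_right_inj (β q * a ^ c), e]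
      (apply Additive.ofMul.injective; simp only [ofMul_mul, ofMul_zpow, ofMul_inv, ofMul_pow, ofMul_one]; module)
    · rintro ⟨f, i, f1, f2, f3, f4, rfl⟩
      exact ⟨f + c, i, by omega, by omega, f3, f4, by (apply Additive.ofMul.injective; simp only [ofMul_mul, ofMul_zpow, ofMul_inv, ofMul_pow, ofMul_one]; module)⟩
  let W : List J → Set A := fun rows =>
    {x | ∃ q ∈ rows, ∃ f i : ℤ, 0 ≤ f ∧ f < 4 ∧ 0 ≤ i ∧ i < k ∧ x = β q * (a ^ f * b ^ i)}
  have key : ∀ (rows : List J) (r : J), (r :: rows).Nodup → (r :: rows).IsChain R →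
      K.Tr (W (r :: rows)) (β r * a ^ (0 : ℤ)) (β r * a ^ (3 : ℤ)) ∧
      K.Tr (W (r :: rows)) (β r * a ^ (1 : ℤ)) (β r * a ^ (2 : ℤ)) := by
    intro rows
    have hdisj : ∀ r, Disjoint (Lad r 0) (Lad r 2) := by
      intro r
      rw [Set.disjoint_left]
      rintro x ⟨f, i, f1, f2, f3, f4, rfl⟩ ⟨f', i', f1', f2', f3', f4', e⟩
      have := (huniq _ _ _ _ _ _ f3 f4 f3' f4' e).2.1
      omega
    induction rows with
    | nil =>
      intro r _ _
      have hW : Lad r 0 ∪ Lad r 2 = W [r] := by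
        ext x
        constructor
        · rintro (⟨f, i, f1, f2, f3, f4, rfl⟩ | ⟨f, i, f1, f2, f3, f4, rfl⟩)
          · exact ⟨r, by simp, f, i, by omega, by omega, f3, f4, rfl⟩
          · exact ⟨r, by simp, f, i, by omega, by omega, f3, f4, rfl⟩
        · rintro ⟨q, hq, f, i, f1, f2, f3, f4, rfl⟩
          obtain rfl : q = r := by simpa using hq
          by_cases h : f < 2
          · exact Or.inl ⟨f, i, by omega, by omega, f3, f4, rfl⟩
          · exact Or.inr ⟨f, i, by omega, by omega, f3, f4, rfl⟩
      constructor
      · have := ((hLad r 0 _ _ h1).trans (hLad r 2 _ _ h1) (by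
          convert step_mul_right ha _ using 1; (apply Additive.ofMul.injective; simp only [ofMul_mul, ofMul_zpow, ofMul_inv, ofMul_pow, ofMul_one]; module)) (hdisj r)).congr hW
        convert this using 1
        · (apply Additive.ofMul.injective; simp only [ofMul_mul, ofMul_zpow, ofMul_inv, ofMul_pow, ofMul_one]; module)
        · (apply Additive.ofMul.injective; simp only [ofMul_mul, ofMul_zpow, ofMul_inv, ofMul_pow, ofMul_one]; module)
      · have := ((hLad r 0 _ _ h2).trans (hLad r 2 _ _ h3.symm) (by
          convert step_mul_right ha _ using 1; (apply Additive.ofMul.injective; simp only [ofMul_mul, ofMul_zpow, ofMul_inv, ofMul_pow, ofMul_one]; module)) (hdisj r)).congr hW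
        convert this using 1
        · (apply Additive.ofMul.injective; simp only [ofMul_mul, ofMul_zpow, ofMul_inv, ofMul_pow, ofMul_one]; module)
        · (apply Additive.ofMul.injective; simp only [ofMul_mul, ofMul_zpow, ofMul_inv, ofMul_pow, ofMul_one]; module)
    | cons r' rows ih =>
      intro r hnd hch
      obtain ⟨ih1, ih2⟩ := ih r' (List.nodup_cons.1 hnd).2 hch.tail
      have hst' : ∀ c : ℤ, K.Step (β r * a ^ c) (β r' * a ^ c) := by
        intro c
        convert step_mul_right (hst r r' ((List.isChain_cons.1 hch).1 r' (by simp))) _ using 1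
        (apply Additive.ofMul.injective; simp only [ofMul_mul, ofMul_zpow, ofMul_inv, ofMul_pow, ofMul_one]; module)
      have hWL : ∀ c, Disjoint (Lad r c) (W (r' :: rows)) := by
        intro c
        rw [Set.disjoint_left]
        rintro x ⟨f, i, f1, f2, f3, f4, rfl⟩ ⟨q, hq, f', i', f1', f2', f3', f4', e⟩
        have := (huniq _ _ _ _ _ _ f3 f4 f3' f4' e).1
        subst this
        exact (List.nodup_cons.1 hnd).1 hq
      have hD : Disjoint (Lad r 0 ∪ W (r' :: rows)) (Lad r 2) :=
        Set.disjoint_union_left.2 ⟨hdisj r, (hWL 2).symm⟩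
      have hW : (Lad r 0 ∪ W (r' :: rows)) ∪ Lad r 2 = W (r :: r' :: rows) := by
        ext x
        constructor
        · rintro ((⟨f, i, f1, f2, f3, f4, rfl⟩ | ⟨q, hq, h⟩) | ⟨f, i, f1, f2, f3, f4, rfl⟩)
          · exact ⟨r, by simp, f, i, by omega, by omega, f3, f4, rfl⟩
          · exact ⟨q, List.mem_cons_of_mem _ hq, h⟩
          · exact ⟨r, by simp, f, i, by omega, by omega, f3, f4, rfl⟩
        · rintro ⟨q, hq, f, i, f1, f2, f3, f4, rfl⟩
          rcases List.mem_cons.1 hq with rfl | hq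
          · by_cases h : f < 2
            · exact Or.inl (Or.inl ⟨f, i, by omega, by omega, f3, f4, rfl⟩)
            · exact Or.inr ⟨f, i, by omega, by omega, f3, f4, rfl⟩
          · exact Or.inl (Or.inr ⟨q, hq, f, i, by omega, by omega, f3, f4, rfl⟩)
      constructor
      · have := (((hLad r 0 _ _ h1).trans ih2 (by
          convert hst' 1 using 1; (apply Additive.ofMul.injective; simp only [ofMul_mul, ofMul_zpow, ofMul_inv, ofMul_pow, ofMul_one]; module)) (hWL 0)).trans (hLad r 2 _ _ h1) (by
          convert (hst' 2).symm using 1; (apply Additive.ofMul.injective; simp only [ofMul_mul, ofMul_zpow, ofMul_inv, ofMul_pow, ofMul_one]; module)) hD).congr hW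
        convert this using 1
        · (apply Additive.ofMul.injective; simp only [ofMul_mul, ofMul_zpow, ofMul_inv, ofMul_pow, ofMul_one]; module)
        · (apply Additive.ofMul.injective; simp only [ofMul_mul, ofMul_zpow, ofMul_inv, ofMul_pow, ofMul_one]; module)
      · have := (((hLad r 0 _ _ h1.symm).trans ih1 (by
          convert hst' 0 using 1; (apply Additive.ofMul.injective; simp only [ofMul_mul, ofMul_zpow, ofMul_inv, ofMul_pow, ofMul_one]; module)) (hWL 0)).trans (hLad r 2 _ _ h1.symm) (by
          convert (hst' 3).symm using 1; (apply Additive.ofMul.injective; simp only [ofMul_mul, ofMul_zpow, ofMul_inv, ofMul_pow, ofMul_one]; module)) hD).congr hW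
        convert this using 1
        · (apply Additive.ofMul.injective; simp only [ofMul_mul, ofMul_zpow, ofMul_inv, ofMul_pow, ofMul_one]; module)
        · (apply Additive.ofMul.injective; simp only [ofMul_mul, ofMul_zpow, ofMul_inv, ofMul_pow, ofMul_one]; module)
  obtain ⟨r, rows, rfl⟩ := List.exists_cons_of_ne_nil l1
  have hT := (key rows r l2 l4).1
  refine ham_of_blocks
    (fun n => {x | ∃ q, ∃ f i : ℤ, 4 * n ≤ f ∧ f < 4 * n + 4 ∧ 0 ≤ i ∧ i < k ∧
      x = β q * (a ^ f * b ^ i)})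
    (fun n => a ^ (4 * n) * (β r * a ^ (0 : ℤ))) (fun n => a ^ (4 * n) * (β r * a ^ (3 : ℤ)))
    (fun n => hT.mul _ fun y => ?_) (fun n => ?_) ?_ ?_
  · simp only [W, Set.mem_ofPred_eq]
    constructor
    · rintro ⟨q, f, i, f1, f2, f3, f4, e⟩
      refine ⟨q, l3 q, f - 4 * n, i, by omega, by omega, f3, f4, ?_⟩
      rw [← mul_right_inj (a ^ (4 * n)), e]
      (apply Additive.ofMul.injective; simp only [ofMul_mul, ofMul_zpow, ofMul_inv, ofMul_pow, ofMul_one]; module)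
    · rintro ⟨q, -, f, i, f1, f2, f3, f4, rfl⟩
      exact ⟨q, f + 4 * n, i, by omega, by omega, f3, f4, by (apply Additive.ofMul.injective; simp only [ofMul_mul, ofMul_zpow, ofMul_inv, ofMul_pow, ofMul_one]; module)⟩
  · convert step_mul_right ha _ using 1
    (apply Additive.ofMul.injective; simp only [ofMul_mul, ofMul_zpow, ofMul_inv, ofMul_pow, ofMul_one]; module)
  · rintro n n' x ⟨q, f, i, f1, f2, f3, f4, rfl⟩ ⟨q', f', i', f1', f2', f3', f4', e⟩
    have := (huniq _ _ _ _ _ _ f3 f4 f3' f4' e).2.1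
    omega
  · intro x
    obtain ⟨q, m, n, rfl⟩ := exists_coords hc x
    have hpos : (0 : ℤ) < k := by omega
    have r0 := Int.emod_nonneg n hpos.ne'
    have r1 := Int.emod_lt_of_pos n hpos
    have r2 := Int.mul_ediv_add_emod n k
    refine ⟨(m + j * (n / k)) / 4, q, m + j * (n / k), n % k, by omega, by omega, r0, r1, ?_⟩
    conv_lhs => rw [← r2, zpow_add, zpow_mul b, hrel]
    (apply Additive.ofMul.injective; simp only [ofMul_mul, ofMul_zpow, ofMul_inv, ofMul_pow, ofMul_one]; module)

end Cover

end HamPath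

namespace HamPath

/-! ### Orders and dependence in abelian groups -/

theorem zpow_eq_zero_of_not_finOrder {A : Type*} [Group A] {a : A} (ha : ¬ IsOfFinOrder a) {m : ℤ}
    (h : a ^ m = 1) : m = 0 := by
  by_contra hm
  exact ha (isOfFinOrder_iff_zpow_eq_one.2 ⟨m, hm, h⟩)

/-- Some positive power of `b` is a power of `a`. -/
def Dep {A : Type*} [Group A] (a b : A) : Prop := ∃ k : ℕ, 0 < k ∧ b ^ k ∈ Subgroup.zpowers a

/-- If `a` has infinite order and `b` depends on it, the relation `b ^ k = a ^ j` with `k` minimal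
generates all relations between `a` and `b`. -/
theorem exists_relation {A : Type*} [CommGroup A] {a b : A} (ha : ¬ IsOfFinOrder a)
    (h : Dep a b) : ∃ (k : ℕ) (j : ℤ), 1 ≤ k ∧ b ^ (k : ℤ) = a ^ j ∧
      ∀ m n : ℤ, a ^ m * b ^ n = 1 → ∃ q : ℤ, m = -(j * q) ∧ n = k * q := by
  classical
  obtain ⟨hk, hkm⟩ := Nat.find_spec h
  set k := Nat.find h
  obtain ⟨j, hj⟩ := Subgroup.mem_zpowers_iff.1 hkm
  refine ⟨k, j, hk, by rw [zpow_natCast, hj], fun m n hmn => ?_⟩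
  have hrel : b ^ (k : ℤ) = a ^ j := by rw [zpow_natCast, hj]
  have hpos : (0 : ℤ) < k := by omega
  have r0 := Int.emod_nonneg n hpos.ne'
  have r1 := Int.emod_lt_of_pos n hpos
  have r2 := Int.mul_ediv_add_emod n k
  have hb : b ^ (n % k) = a ^ (-m - j * (n / k)) := by
    have e1 : b ^ (n % k) = b ^ n * (b ^ (k : ℤ)) ^ (-(n / k)) := by
      rw [← zpow_mul, ← zpow_add]; congr 1; rw [mul_neg]; omega
    have e2 : b ^ n = a ^ (-m) := by
      rw [zpow_neg]; exact eq_inv_of_mul_eq_one_right hmn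
    rw [e1, e2, hrel, ← zpow_mul, ← zpow_add]; congr 1; ring
  have hz : n % k = 0 := by
    by_contra hne
    refine Nat.find_min h (m := (n % k).toNat) (by omega) ⟨by omega, ?_⟩
    rw [← zpow_natCast, Int.toNat_of_nonneg r0, hb]
    exact Subgroup.zpow_mem_zpowers _ _
  refine ⟨n / k, ?_, by omega⟩
  rw [hz, zpow_zero] at hb
  have := zpow_eq_zero_of_not_finOrder ha hb.symm
  omega

theorem independent_of_not_dep {A : Type*} [CommGroup A] {a b : A} (ha : ¬ IsOfFinOrder a)
    (h : ¬ Dep a b) (m n : ℤ) (hmn : a ^ m * b ^ n = 1) : m = 0 ∧ n = 0 := by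
  have hn : n = 0 := by
    by_contra hn
    have e : b ^ n = a ^ (-m) := by rw [zpow_neg]; exact eq_inv_of_mul_eq_one_right hmn
    rcases lt_or_gt_of_ne hn with h1 | h1
    · refine h ⟨(-n).toNat, by omega, Subgroup.mem_zpowers_iff.2 ⟨m, ?_⟩⟩
      rw [← zpow_natCast, Int.toNat_of_nonneg (by omega), zpow_neg, e, zpow_neg, inv_inv]
    · refine h ⟨n.toNat, by omega, Subgroup.mem_zpowers_iff.2 ⟨-m, ?_⟩⟩
      rw [← zpow_natCast, Int.toNat_of_nonneg (by omega), e]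
  subst hn
  exact ⟨zpow_eq_zero_of_not_finOrder ha (by simpa using hmn), rfl⟩

/-- An element of infinite order has no non-trivial power in a subgroup of finite order elements. -/
theorem zpow_mem_torsion {A : Type*} [Group A] {a : A} (ha : ¬ IsOfFinOrder a) (F : Subgroup A)
    (hF : ∀ f ∈ F, IsOfFinOrder f) (m : ℤ) (h : a ^ m ∈ F) : m = 0 := by
  obtain ⟨n, hn, e⟩ := isOfFinOrder_iff_zpow_eq_one.1 (hF _ h)
  rw [← zpow_mul] at e
  have := zpow_eq_zero_of_not_finOrder ha e
  rcases mul_eq_zero.1 this with h | h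
  · exact h
  · exact absurd h hn

theorem dep_inv {A : Type*} [Group A] {a b : A} (h : Dep a b) : Dep a⁻¹ b := by
  obtain ⟨k, hk, h⟩ := h
  exact ⟨k, hk, by rwa [Subgroup.zpowers_inv]⟩

namespace Cover

variable {V G A : Type*} [Group G] [MulAction G V] [CommGroup A] {K : Cover V G A}

/-! ### Good cycles as bricks -/

theorem Good.tr_range {v : ℕ → A} {m : ℕ} (h : K.Good ((List.range m).map v)) {i : ℕ}
    (hi : i + 1 < m) : K.Tr {x | ∃ r < m, x = v r} (v i) (v (i + 1)) := by
  obtain ⟨r, rfl⟩ : ∃ r, m = i + (r + 2) := ⟨m - i - 2, by omega⟩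
  have e : (List.range (i + (r + 2))).map v = (List.range i).map v ++ v i :: v (i + 1) ::
      (List.range r).map (fun n => v (i + (n + 2))) := by
    rw [List.range_add, List.map_append, List.range_succ_eq_map, List.range_succ_eq_map]
    simp [Function.comp_def]
  have hT := Good.tr_adj (e ▸ h)
  rw [← e] at hT
  refine hT.congr ?_
  ext x; simp [eq_comm]

/-- A good cycle `1, a, …, a ^ (n - 1)`, where `n` is the order of `a`, makes the subgroup `⟨a⟩` a
traversable brick. -/
theorem ham_single_good [Infinite A] (hrep : K.Rep) (a : A) (ha : IsOfFinOrder a)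
    (h : K.Good ((List.range (orderOf a)).map (a ^ ·))) : TwoWay K.adj := by
  have hpos := ha.orderOf_pos
  refine ham_single hrep (Subgroup.zpowers a) ?_ (f := a ^ (orderOf a - 1))
    ((h.tr_ends (α := 1) (β := a ^ (orderOf a - 1)) ?_ ?_).congr ?_)
  · exact ha.finite_zpowers
  · rw [List.head?_map, List.head?_range]; simp [hpos.ne']
  · rw [List.getLast?_map, List.getLast?_range]; simp [hpos.ne']
  · ext x
    simp only [List.mem_map, List.mem_range, Set.mem_ofPred_eq, SetLike.mem_coe]
    rw [← ha.mem_powers_iff_mem_zpowers]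
    constructor
    · rintro ⟨i, -, rfl⟩; exact ⟨i, rfl⟩
    · rintro ⟨i, rfl⟩
      exact ⟨i % orderOf a, Nat.mod_lt _ hpos, by simp [pow_mod_orderOf]⟩

/-- The boundary of a ladder: `1, b, …, b ^ (n - 1)` and back along the translate by `z`. -/
def ladderList (b z : A) (n : ℕ) : List A :=
  (List.range n).map (b ^ ·) ++ ((List.range n).map (fun i => b ^ i * z)).reverse

theorem mem_ladderList {b z : A} {n : ℕ} {x : A} :
    x ∈ ladderList b z n ↔ ∃ i < n, x = b ^ i ∨ x = b ^ i * z := by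
  simp only [ladderList, List.mem_append, List.mem_map, List.mem_range, List.mem_reverse]
  constructor
  · rintro (⟨i, hi, rfl⟩ | ⟨i, hi, rfl⟩)
    · exact ⟨i, hi, Or.inl rfl⟩
    · exact ⟨i, hi, Or.inr rfl⟩
  · rintro ⟨i, hi, rfl | rfl⟩
    · exact Or.inl ⟨i, hi, rfl⟩
    · exact Or.inr ⟨i, hi, rfl⟩

theorem Good.tr_ladder {b z : A} {n : ℕ} (hn : 2 ≤ n) (h : K.Good (ladderList b z n)) :
    K.Tr {x | x ∈ ladderList b z n} 1 z ∧ K.Tr {x | x ∈ ladderList b z n} 1 b ∧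
      K.Tr {x | x ∈ ladderList b z n} (b * z) z := by
  obtain ⟨m, rfl⟩ : ∃ m, n = m + 2 := ⟨n - 2, by omega⟩
  have e : ladderList b z (m + 2) = 1 :: b :: ((List.range m).map (fun i => b ^ (i + 2)) ++
      ((List.range m).map (fun i => b ^ (i + 2) * z)).reverse) ++ [b * z, z] := by
    rw [ladderList, List.range_succ_eq_map, List.range_succ_eq_map]
    simp [Function.comp_def]
  refine ⟨h.tr_ends ?_ ?_, ?_, ?_⟩
  · rw [e]; simp
  · rw [e, List.getLast?_append]; simp
  · have := Good.tr_adj (K := K) (l₁ := []) (α := 1) (β := b) (by rw [e] at h; exact h)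
    rw [e]; exact this
  · have := Good.tr_adj (K := K) (l₂ := []) (α := b * z) (β := z) (by rw [e] at h; exact h)
    rw [e]; exact this

theorem nodup_ladderList {b z : A} {n : ℕ} (h1 : ∀ i j, i < n → j < n → b ^ i = b ^ j → i = j)
    (h2 : ∀ i j, i < n → j < n → b ^ i ≠ b ^ j * z) : (ladderList b z n).Nodup := by
  rw [ladderList, List.nodup_append']
  refine ⟨List.Nodup.map_on ?_ List.nodup_range, ?_, ?_⟩
  · intro i hi j hj e
    exact h1 i j (List.mem_range.1 hi) (List.mem_range.1 hj) e
  · rw [List.nodup_reverse]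
    refine List.Nodup.map_on ?_ List.nodup_range
    intro i hi j hj e
    exact h1 i j (List.mem_range.1 hi) (List.mem_range.1 hj) (mul_right_cancel e)
  · intro x hx hx'
    simp only [List.mem_map, List.mem_range, List.mem_reverse] at hx hx'
    obtain ⟨i, hi, rfl⟩ := hx
    obtain ⟨j, hj, e⟩ := hx'
    exact h2 i j hi hj e.symm

/-- A good ladder over a finite cyclic group `⟨b⟩` in a direction `z` of infinite order makes
`⟨b⟩ ∪ ⟨b⟩ z` a brick which can be left in either layer. -/
theorem ham_pair_ladder (hrep : K.Rep) (b z : A) (hz : K.Step 1 z) (hb : IsOfFinOrder b)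
    (hb1 : b ≠ 1) (hzi : ¬ IsOfFinOrder z) (h : K.Good (ladderList b z (orderOf b))) :
    TwoWay K.adj := by
  have hpos := hb.orderOf_pos
  have hn : 2 ≤ orderOf b := by
    have : orderOf b ≠ 1 := fun h => hb1 (orderOf_eq_one_iff.1 h)
    omega
  obtain ⟨t1, t2, t3⟩ := h.tr_ladder hn
  have hset : {x | x ∈ ladderList b z (orderOf b)} = pairSet (Subgroup.zpowers b) z := by
    ext x
    simp only [Set.mem_ofPred_eq, mem_ladderList, pairSet]
    constructor
    · rintro ⟨i, hi, rfl | rfl⟩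
      · exact ⟨0, le_rfl, by omega, by simpa using Subgroup.npow_mem_zpowers b i⟩
      · exact ⟨1, by omega, le_rfl, by simpa using Subgroup.npow_mem_zpowers b i⟩
    · rintro ⟨ε, h1, h2, h3⟩
      rw [← hb.mem_powers_iff_mem_zpowers] at h3
      obtain ⟨i, hi⟩ := h3
      refine ⟨i % orderOf b, Nat.mod_lt _ hpos, ?_⟩
      rw [pow_mod_orderOf]
      obtain rfl | rfl : ε = 0 ∨ ε = 1 := by omega
      · left; simpa using hi.symm
      · right; simp only at hi; rw [hi]; simp
  rw [hset] at t1 t2 t3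
  refine ham_pair hrep (Subgroup.zpowers b) z hz ?_ ⟨1, one_mem _, b, Subgroup.mem_zpowers b, t2⟩
    ⟨1, one_mem _, 1, one_mem _, by simpa using t1⟩
    ⟨b, Subgroup.mem_zpowers b, 1, one_mem _, by simpa using t3⟩
  refine zpow_mem_torsion hzi _ ?_
  intro f hf
  obtain ⟨m, rfl⟩ := Subgroup.mem_zpowers_iff.1 hf
  exact hb.zpow

/-- A good square spanned by independent elements tiles `⟨a, b⟩`. -/
theorem ham_square_good (hrep : K.Rep) (a b : A) (ha : K.Step 1 a) (hb : K.Step 1 b)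
    (hai : ¬ IsOfFinOrder a) (hdep : ¬ Dep a b) (h : K.Good [1, a, a * b, b]) : TwoWay K.adj := by
  have hset : {x | x ∈ [1, a, a * b, b]} = squareSet a b := by
    ext x
    simp only [Set.mem_ofPred_eq, squareSet, List.mem_cons, List.not_mem_nil, or_false]
    constructor
    · rintro (rfl | rfl | rfl | rfl)
      · exact ⟨0, 0, by simp⟩
      · exact ⟨1, 0, by simp⟩
      · exact ⟨1, 1, by simp⟩
      · exact ⟨0, 1, by simp⟩
    · rintro ⟨ε, δ, h1, h2, h3, h4, rfl⟩
      obtain rfl | rfl : ε = 0 ∨ ε = 1 := by omega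
      · obtain rfl | rfl : δ = 0 ∨ δ = 1 := by omega
        · simp
        · simp
      · obtain rfl | rfl : δ = 0 ∨ δ = 1 := by omega
        · simp
        · simp
  have t1 := (Good.tr_adj (l₁ := []) (α := 1) (β := a) h).congr hset
  have t2 := (Good.tr_adj (l₁ := [1]) (α := a) (β := a * b) h).congr hset
  have t3 := (Good.tr_adj (l₁ := [1, a]) (α := a * b) (β := b) h).congr hset
  have t4 := (h.tr_ends (α := 1) (β := b) rfl rfl).congr hset
  refine ham_square hrep a b ha hb (independent_of_not_dep hai hdep) ?_ ?_
  · intro ε δ h1 h2 h3 h4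
    obtain rfl | rfl : ε = 0 ∨ ε = 1 := by omega
    · obtain rfl | rfl : δ = 0 ∨ δ = 1 := by omega
      · simpa using t1
      · simpa using t3.symm
    · obtain rfl | rfl : δ = 0 ∨ δ = 1 := by omega
      · simpa using t1.symm
      · simpa using t3
  · intro ε δ h1 h2 h3 h4
    obtain rfl | rfl : ε = 0 ∨ ε = 1 := by omega
    · obtain rfl | rfl : δ = 0 ∨ δ = 1 := by omega
      · simpa using t4
      · simpa using t4.symm
    · obtain rfl | rfl : δ = 0 ∨ δ = 1 := by omega
      · simpa using t2
      · simpa using t2.symm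

theorem gammaPt_injOn {a b : A} {j k : ℕ}
    (hker : ∀ m n : ℤ, a ^ m * b ^ n = 1 → ∃ q : ℤ, m = -(j * q) ∧ n = k * q) {i i' : ℤ}
    (h0 : 0 ≤ i) (h1 : i < j + k) (h0' : 0 ≤ i') (h1' : i' < j + k)
    (h : gammaPt a b j i = gammaPt a b j i') : i = i' := by
  have e : a ^ (min i' (j : ℤ) - min i j) * b ^ (max 0 (i - (j : ℤ)) - max 0 (i' - j)) = 1 := by
    have : a ^ (min i' (j : ℤ) - min i j) * b ^ (max 0 (i - (j : ℤ)) - max 0 (i' - j)) =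
      gammaPt a b j i * (gammaPt a b j i')⁻¹ := by
      simp only [gammaPt]; (apply Additive.ofMul.injective; simp only [ofMul_mul, ofMul_zpow, ofMul_inv, ofMul_pow, ofMul_one]; module)
    rw [this, h, mul_inv_cancel]
  obtain ⟨r, e1, e2⟩ := hker _ _ e
  have hi : (i - i' : ℤ) = (j + k) * r := by rw [add_mul]; omega
  have hr : r = 0 := by
    by_contra hr
    rcases lt_or_gt_of_ne hr with h | h
    · nlinarith
    · nlinarith
  subst hr
  omega

/-- A good cycle given by the generating relation `b ^ k = a ^ j` is a brick for `ham_gamma`. -/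
theorem ham_gamma_good (hrep : K.Rep) (a b : A) (ha : K.Step 1 a) (hb : K.Step 1 b) (j k : ℕ)
    (hj : 1 ≤ j) (hk : 1 ≤ k) (hjk : 3 ≤ j + k)
    (hker : ∀ m n : ℤ, a ^ m * b ^ n = 1 → ∃ q : ℤ, m = -(j * q) ∧ n = k * q)
    (hrel : b ^ (k : ℤ) = a ^ (j : ℤ))
    (h : K.Good ((List.range (j + k)).map fun i : ℕ => gammaPt a b j i)) : TwoWay K.adj := by
  have hset : {x | ∃ r < j + k, x = gammaPt a b j (r : ℕ)} = gammaSet a b j k := by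
    ext x
    constructor
    · rintro ⟨r, hr, rfl⟩; exact ⟨r, by omega, by omega, rfl⟩
    · rintro ⟨i, h0, h1, rfl⟩; exact ⟨i.toNat, by omega, by rw [Int.toNat_of_nonneg h0]⟩
  refine ham_gamma hrep a b ha hb j k hj hk hjk hker hrel ?_ ?_
  · intro i h0 h1
    obtain ⟨n, rfl⟩ : ∃ n : ℕ, i = n := ⟨i.toNat, by omega⟩
    have := (Good.tr_range h (i := n) (by omega)).congr hset
    simpa using this
  · have := (h.tr_ends (α := gammaPt a b j (0 : ℕ)) (β := gammaPt a b j ((j + k - 1 : ℕ) : ℤ))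
      (by rw [List.head?_map, List.head?_range]; simp; omega)
      (by rw [List.getLast?_map, List.getLast?_range]; simp; omega)).symm
    rw [show ((j + k - 1 : ℕ) : ℤ) = j + k - 1 by omega] at this
    refine (this.congr ?_)
    rw [← hset]; ext x; simp [eq_comm]

/-- A good ladder along the powers `1, b, …, b ^ (k - 1)` of a dependent element is a brick for
`ham_grid`. -/
theorem ham_grid_good (hrep : K.Rep) (a b : A) (ha : K.Step 1 a) (hb : K.Step 1 b) (k : ℕ) (j : ℤ)
    (hk : 2 ≤ k)
    (hker : ∀ m n : ℤ, a ^ m * b ^ n = 1 → ∃ q : ℤ, m = -(j * q) ∧ n = k * q)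
    (hrel : b ^ (k : ℤ) = a ^ j)
    (hfin : Finite (A ⧸ (Subgroup.zpowers a ⊔ Subgroup.zpowers b)))
    (h : K.Good (ladderList b a k)) : TwoWay K.adj := by
  obtain ⟨t1, t2, t3⟩ := h.tr_ladder hk
  have hset : {x | x ∈ ladderList b a k} = ladderSet a b k := by
    ext x
    simp only [Set.mem_ofPred_eq, mem_ladderList, ladderSet]
    constructor
    · rintro ⟨i, hi, rfl | rfl⟩
      · exact ⟨0, i, by omega, by omega, by omega, by omega, by simp⟩
      · exact ⟨1, i, by omega, by omega, by omega, by omega, by simp [mul_comm]⟩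
    · rintro ⟨f, i, h1, h2, h3, h4, rfl⟩
      refine ⟨i.toNat, by omega, ?_⟩
      rw [← zpow_natCast, Int.toNat_of_nonneg h3]
      obtain rfl | rfl : f = 0 ∨ f = 1 := by omega
      · left; simp
      · right; simp [mul_comm]
  rw [hset] at t1 t2 t3
  exact ham_grid hrep a b ha hb k j hk hker hrel hfin t1 (by rw [mul_comm]; exact t3.symm) t2

end Cover

end HamPath

namespace HamPath

theorem isChain_map_range {Q : Type*} {R : Q → Q → Prop} {f : ℕ → Q} {n : ℕ}
    (h : ∀ i, i + 1 < n → R (f i) (f (i + 1))) : ((List.range n).map f).IsChain R := by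
  rw [List.isChain_iff_getElem]
  intro i hi
  simpa using h i (by simpa using hi)

theorem head?_map_range {Q : Type*} {f : ℕ → Q} {n : ℕ} (hn : 0 < n) :
    ((List.range n).map f).head? = some (f 0) := by
  rw [List.head?_map, List.head?_range]; simp [hn.ne']

theorem getLast?_map_range {Q : Type*} {f : ℕ → Q} {n : ℕ} (hn : 0 < n) :
    ((List.range n).map f).getLast? = some (f (n - 1)) := by
  rw [List.getLast?_map, List.getLast?_range]; simp [hn.ne']

theorem isChain_append_reverse {Q : Type*} {R : Q → Q → Prop} (hs : ∀ x y, R x y → R y x)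
    {f g : ℕ → Q} {n : ℕ} (hn : 0 < n) (h1 : ∀ i, i + 1 < n → R (f i) (f (i + 1)))
    (h2 : ∀ i, i + 1 < n → R (g i) (g (i + 1))) (h3 : R (f (n - 1)) (g (n - 1))) :
    ((List.range n).map f ++ ((List.range n).map g).reverse).IsChain R := by
  rw [List.isChain_append]
  refine ⟨isChain_map_range h1, isChain_reverse_symm hs (isChain_map_range h2), ?_⟩
  rw [getLast?_map_range hn, List.head?_reverse, getLast?_map_range hn]
  simpa using h3

theorem head?_append_reverse {Q : Type*} {f g : ℕ → Q} {n : ℕ} (hn : 0 < n) :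
    ((List.range n).map f ++ ((List.range n).map g).reverse).head? = some (f 0) := by
  rw [List.head?_append, head?_map_range hn]; rfl

theorem getLast?_append_reverse {Q : Type*} {f g : ℕ → Q} {n : ℕ} (hn : 0 < n) :
    ((List.range n).map f ++ ((List.range n).map g).reverse).getLast? = some (g 0) := by
  rw [List.getLast?_append, List.getLast?_reverse, head?_map_range hn]; rfl

theorem pow_inj_of_lt_orderOf {A : Type*} [Group A] {b : A} {i j : ℕ} (hi : i < orderOf b)
    (hj : j < orderOf b) (h : b ^ i = b ^ j) : i = j :=
  pow_injOn_Iio_orderOf hi hj h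

theorem ladder_disjoint {A : Type*} [Group A] {b z : A} (hb : IsOfFinOrder b)
    (hz : ¬ IsOfFinOrder z) (i j : ℕ) : b ^ i ≠ b ^ j * z := by
  intro h
  have : z = b ^ (-(j : ℤ) + i) := by
    rw [zpow_add, zpow_neg, zpow_natCast, zpow_natCast, h]; simp
  exact hz (this ▸ hb.zpow)

namespace Cover

variable {V G A : Type*} [Group G] [MulAction G V] [CommGroup A] {K : Cover V G A}

/-! ### Loops and digons -/

/-- An edge inside a fibre makes the one-element list good, so that fibres are bricks. -/
theorem ham_loop [Infinite A] (hrep : K.Rep) (hirr : ∀ v, ¬ K.adj v v) (h : K.Step 1 1) :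
    TwoWay K.adj := by
  obtain ⟨v, w, hv, hw, ha⟩ := h
  obtain ⟨c, hc, rfl⟩ := K.fib v w (by rw [hv, hw])
  refine ham_single_good hrep 1 IsOfFinOrder.one ⟨by simp, [v], by simp [hv], by simp, c, hc, ?_,
    v, v, rfl, rfl, ha⟩
  rintro rfl
  exact hirr v (by simpa using ha)

theorem exists_smul (K : Cover V G A) (v w : V) : ∃ g : G, g • v = w := by
  obtain ⟨g, hg⟩ := K.φ_surj (K.π w * (K.π v)⁻¹)
  obtain ⟨c, hc, e⟩ := K.fib (g • v) w (by rw [K.π_smul, hg]; simp)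
  exact ⟨c * g, by rw [mul_smul, e]⟩

/-- A vertex with two neighbours in one fibre produces a digon. -/
theorem digon_of_two {v w : V} {c : G} (hc : c ∈ K.C) (hc1 : c ≠ 1) (h1 : K.adj v w)
    (h2 : K.adj v (c • w)) : K.Digon ((K.π v)⁻¹ * K.π w) := by
  intro v' u hu
  obtain ⟨h, rfl⟩ := K.exists_smul v v'
  obtain ⟨d, hd, e⟩ := K.fib u (h • w) (by rw [hu, K.π_smul, K.π_smul]; simp [mul_assoc])
  have h1' := K.inv h _ _ h1
  have h2' := K.inv h _ _ h2
  rw [← e] at h1'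
  by_cases hd1 : d = 1
  · refine ⟨h * c * h⁻¹ * d, K.C.mul_mem (K.normal.conj_mem c hc h) hd, ?_, ?_⟩
    · subst hd1; simpa using hc1
    · rw [mul_smul, e, smul_smul]; simpa [mul_smul] using h2'
  · exact ⟨d, hd, hd1, h1'⟩

theorem Digon.inv {x : A} (h : K.Digon x) : K.Digon x⁻¹ := by
  intro v u hu
  obtain ⟨c, hc, hc1, ha⟩ := h u v (by rw [hu]; simp)
  refine ⟨c⁻¹, K.C.inv_mem hc, by simpa using hc1, K.symm _ _ ?_⟩
  simpa using K.inv c⁻¹ _ _ ha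

theorem Digon.step {x : A} (h : K.Digon x) : K.Step 1 x := by
  obtain ⟨v, hv⟩ := K.π_surj 1
  obtain ⟨u, hu⟩ := K.π_surj x
  obtain ⟨c, hc, -, ha⟩ := h v u (by rw [hu, hv, one_mul])
  exact ⟨v, c • u, hv, by rw [K.π_smul, K.φ_C c hc, one_mul, hu], ha⟩

theorem step_gammaPt {a b : A} {j : ℕ} (ha : K.Step 1 a) (hb : K.Step 1 b) (i : ℤ) :
    K.Step (gammaPt a b j i) (gammaPt a b j (i + 1)) := by
  rcases lt_or_ge i j with h | h
  · have : gammaPt a b j (i + 1) = gammaPt a b j i * a⁻¹ := by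
      rw [gammaPt, gammaPt, min_eq_left (by omega), min_eq_left (by omega), max_eq_left (by omega),
        max_eq_left (by omega)]
      (apply Additive.ofMul.injective; simp only [ofMul_mul, ofMul_zpow, ofMul_inv, ofMul_pow, ofMul_one]; module)
    rw [this]; exact step_mul_right ha.inv _
  · have : gammaPt a b j (i + 1) = gammaPt a b j i * b := by
      rw [gammaPt, gammaPt, min_eq_right (by omega), min_eq_right (by omega),
        max_eq_right (by omega), max_eq_right (by omega)]
      (apply Additive.ofMul.injective; simp only [ofMul_mul, ofMul_zpow, ofMul_inv, ofMul_pow, ofMul_one]; module)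
    rw [this]; exact step_mul_right hb _

theorem gammaPt_zero {a b : A} {j : ℕ} : gammaPt a b j 0 = 1 := by
  simp [gammaPt]

theorem gammaPt_last {a b : A} {j k : ℕ} (hrel : b ^ (k : ℤ) = a ^ (j : ℤ)) :
    gammaPt a b j (j + k) = 1 := by
  rw [gammaPt, min_eq_right (by omega), max_eq_right (by omega), add_sub_cancel_left, hrel]
  simp

theorem ham_gamma_digon (hrep : K.Rep) {a b : A} (ha : K.Digon a) (hb : K.Step 1 b) {j k : ℕ}
    (hj : 1 ≤ j) (hk : 1 ≤ k) (hjk : 3 ≤ j + k)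
    (hker : ∀ m n : ℤ, a ^ m * b ^ n = 1 → ∃ q : ℤ, m = -(j * q) ∧ n = k * q)
    (hrel : b ^ (k : ℤ) = a ^ (j : ℤ)) : TwoWay K.adj := by
  refine ham_gamma_good hrep a b ha.step hb j k hj hk hjk hker hrel ?_
  obtain ⟨m, hm⟩ : ∃ m, j + k = m + 1 := ⟨j + k - 1, by omega⟩
  have e1 : (List.range (j + k)).map (fun i : ℕ => gammaPt a b j i) =
      [gammaPt a b j 0] ++ (List.range m).map (fun i : ℕ => gammaPt a b j (i + 1 : ℕ)) := by
    rw [hm, List.range_succ_eq_map]; simp [Function.comp_def]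
  have e2 : (List.range m).map (fun i : ℕ => gammaPt a b j (i + 1 : ℕ)) ++ [gammaPt a b j 0] =
      (List.range (m + 1)).map (fun i : ℕ => gammaPt a b j (i + 1 : ℕ)) := by
    rw [List.range_succ]
    simp only [List.map_append, List.map_cons, List.map_nil]
    rw [gammaPt_zero, ← hm]; push_cast; rw [gammaPt_last hrel]
  have hnd : ((List.range (j + k)).map (fun i : ℕ => gammaPt a b j i)).Nodup := by
    refine List.Nodup.map_on ?_ List.nodup_range
    intro x hx y hy e
    rw [List.mem_range] at hx hy
    have := gammaPt_injOn hker (by omega) (by omega) (by omega) (by omega) e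
    omega
  rw [e1]
  refine Good.rotate ?_
  have hnd' := List.perm_append_comm.nodup_iff.1 (e1 ▸ hnd)
  rw [e2] at hnd' ⊢
  refine good_of_digon hnd' (isChain_map_range fun i _ => ?_) (head?_map_range (by omega))
    (getLast?_map_range (by omega)) ?_
  · have := step_gammaPt ha.step hb (j := j) (i + 1 : ℕ)
    simpa using this
  · have h0 : gammaPt a b j ((m + 1 - 1 + 1 : ℕ) : ℤ) = 1 := by
      rw [← gammaPt_last hrel]; congr 1; omega
    have h1 : gammaPt a b j ((0 + 1 : ℕ) : ℤ) = a⁻¹ := by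
      rw [gammaPt, min_eq_left (by omega), max_eq_left (by omega)]; simp
    rw [h0, h1]; simpa using ha.inv

theorem ham_digon_cyclic {a : A} (ha : K.Digon a) (hai : ¬ IsOfFinOrder a)
    (hgen : Subgroup.zpowers a = ⊤) : TwoWay K.adj := by
  have hne : a ≠ 1 := by rintro rfl; exact hai IsOfFinOrder.one
  have hg : K.Good [1, a] := good_of_digon (by simpa using hne.symm)
    (by simpa using ha.step) rfl rfl (by simpa using ha.inv)
  have hT := hg.tr_ends (α := 1) (β := a) rfl rfl
  refine ham_of_blocks (fun n => {x | x = a ^ (2 * n) ∨ x = a ^ (2 * n + 1)})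
    (fun n => a ^ (2 * n)) (fun n => a ^ (2 * n + 1)) (fun n => ?_) (fun n => ?_) ?_ ?_
  · have := hT.mul (a ^ (2 * n)) (B' := {x | x = a ^ (2 * n) ∨ x = a ^ (2 * n + 1)}) (by
      intro y; simp [zpow_add_one])
    simpa [zpow_add_one] using this
  · have := step_mul_right ha.step (a ^ (2 * n + 1))
    rwa [← zpow_add_one, show 2 * n + 1 + 1 = 2 * (n + 1) by ring] at this
  · intro i j x hx hy
    have hinj : ∀ m n : ℤ, a ^ m = a ^ n → m = n := fun m n h => by
      have := zpow_eq_zero_of_not_finOrder hai (m := m - n) (by rw [zpow_sub, h]; simp)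
      omega
    rcases hx with rfl | rfl <;> rcases hy with h | h <;> have := hinj _ _ h <;> omega
  · intro x
    obtain ⟨m, rfl⟩ := Subgroup.mem_zpowers_iff.1 (hgen ▸ Subgroup.mem_top x)
    rcases Int.even_or_odd' m with ⟨n, rfl | rfl⟩
    · exact ⟨n, Or.inl rfl⟩
    · exact ⟨n, Or.inr rfl⟩

/-- A cover with a digon has a two-way hamiltonian path. -/
theorem ham_digon [Infinite A] (hrep : K.Rep) (hirr : ∀ v, ¬ K.adj v v)
    (hgen : Subgroup.closure {s | K.Step 1 s} = ⊤) {a : A} (ha : K.Digon a) : TwoWay K.adj := by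
  by_cases hloop : K.Step 1 1
  · exact ham_loop hrep hirr hloop
  have hS1 : ∀ s, K.Step 1 s → s ≠ 1 := by rintro s hs rfl; exact hloop hs
  by_cases haf : IsOfFinOrder a
  · refine ham_single_good hrep a haf (good_of_digon ?_ (isChain_map_range fun i _ => ?_)
      (head?_map_range haf.orderOf_pos) (getLast?_map_range haf.orderOf_pos) ?_)
    · refine List.Nodup.map_on (fun i hi j hj e => ?_) List.nodup_range
      exact pow_inj_of_lt_orderOf (List.mem_range.1 hi) (List.mem_range.1 hj) e
    · rw [pow_succ]; exact step_mul_right ha.step _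
    · have : (a ^ (orderOf a - 1))⁻¹ * a ^ 0 = a := by
        rw [pow_zero, mul_one, inv_eq_iff_mul_eq_one, ← pow_succ,
          Nat.sub_add_cancel haf.orderOf_pos, pow_orderOf_eq_one]
      rwa [this]
  by_cases htor : ∃ b, K.Step 1 b ∧ IsOfFinOrder b
  · obtain ⟨b, hb, hbf⟩ := htor
    refine ham_pair_ladder hrep b a ha.step hbf (hS1 b hb) haf (good_of_digon
      (nodup_ladderList (fun i j => pow_inj_of_lt_orderOf) fun i j _ _ => ladder_disjoint hbf haf i j)
      (isChain_append_reverse (fun _ _ h => h.symm) hbf.orderOf_pos (fun i _ => ?_) (fun i _ => ?_)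
        (step_mul_right ha.step _)) (head?_append_reverse hbf.orderOf_pos)
        (getLast?_append_reverse hbf.orderOf_pos) (by simpa using ha.inv))
    · rw [pow_succ]; exact step_mul_right hb _
    · rw [pow_succ, mul_right_comm]; exact step_mul_right hb _
  push Not at htor
  by_cases hind : ∃ b, K.Step 1 b ∧ ¬ Dep a b
  · obtain ⟨b, hb, hd⟩ := hind
    refine ham_square_good hrep a b ha.step hb haf hd (Good.rotate (l₁ := [a, a * b, b]) (l₂ := [1])
      (good_of_digon (α := a) (β := 1) ?_ ?_ rfl rfl (by simpa using ha)))
    · have hk := independent_of_not_dep haf hd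
      have n1 : a ≠ b := by
        rintro rfl; exact hd ⟨1, one_pos, by simp⟩
      have n2 : a * b ≠ 1 := fun h => by simpa using (hk 1 1 (by simpa using h)).1
      have n3 : a ≠ 1 := hS1 a ha.step
      have n4 : b ≠ 1 := hS1 b hb
      simp [n1, n2, n3, n4]
    · have s1 := step_mul_right hb a
      have s2 := step_mul_right ha.step.inv (a * b)
      have s3 := step_mul_right hb.inv b
      simp only [mul_inv_cancel] at s3
      rw [mul_comm a b, mul_inv_cancel_right, mul_comm b a] at s2
      simp [s1, s2, s3]
  push Not at hind
  by_cases hex : ∃ b, K.Step 1 b ∧ b ≠ a ∧ b ≠ a⁻¹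
  · obtain ⟨b, hb, h1, h2⟩ := hex
    obtain ⟨k, j, hk, hrel, hker⟩ := exists_relation haf (hind b hb)
    have hj : j ≠ 0 := by
      rintro rfl
      rw [zpow_zero] at hrel
      have := zpow_eq_zero_of_not_finOrder (htor b hb) hrel
      omega
    rcases lt_or_gt_of_ne hj with hj | hj
    · obtain ⟨j', rfl⟩ : ∃ j' : ℕ, j = -j' := ⟨(-j).toNat, by omega⟩
      refine ham_gamma_digon hrep ha.inv hb (j := j') (k := k) (by omega) hk ?_ ?_ ?_
      · by_contra hlt
        obtain ⟨rfl, rfl⟩ : j' = 1 ∧ k = 1 := by omega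
        exact h2 (by simpa using hrel)
      · intro m n h
        obtain ⟨q, e1, e2⟩ := hker (-m) n (by simpa using h)
        exact ⟨q, by rw [neg_mul] at e1; omega, e2⟩
      · rw [hrel]; simp
    · obtain ⟨j', rfl⟩ : ∃ j' : ℕ, j = j' := ⟨j.toNat, by omega⟩
      refine ham_gamma_digon hrep ha hb (j := j') (k := k) (by omega) hk ?_ hker hrel
      by_contra hlt
      obtain ⟨rfl, rfl⟩ : j' = 1 ∧ k = 1 := by omega
      exact h1 (by simpa using hrel)
  push Not at hex
  refine ham_digon_cyclic ha haf ?_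
  rw [eq_top_iff, ← hgen, Subgroup.closure_le]
  intro s hs
  by_cases h : s = a
  · exact h ▸ Subgroup.mem_zpowers a
  · rw [hex s hs h]; exact inv_mem (Subgroup.mem_zpowers a)

end Cover

end HamPath

namespace HamPath

/-! ### Cayley graphs of groups with commutator subgroup of prime order -/

/-- A group `G` with a surjection onto an abelian group whose kernel has prime order, and a
symmetric set `S` of elements of `G`, the connection set of a Cayley graph. -/
structure Cayley (G A : Type*) [Group G] [CommGroup A] where
  /-- the projection onto the abelian group -/
  φ : G →* A
  surj : Function.Surjective φ
  /-- the connection set -/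
  S : Set G
  S_inv : ∀ s ∈ S, s⁻¹ ∈ S
  /-- the order of the kernel -/
  p : ℕ
  hp : p.Prime
  card : Nat.card φ.ker = p

namespace Cayley

open Cover

variable {G A : Type*} [Group G] [CommGroup A]

/-- The Cayley graph as a cover, with `G` acting by left translations. -/
def cover (D : Cayley G A) : Cover G G A where
  adj u w := u⁻¹ * w ∈ D.S
  symm u w h := by simpa using D.S_inv _ h
  inv g u w h := by simpa [mul_assoc] using h
  φ := D.φ
  φ_surj := D.surj
  π := D.φ
  π_smul g v := by simp
  π_surj := D.surj
  C := D.φ.ker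
  normal := inferInstance
  p := D.p
  hp := D.hp
  card := D.card
  φ_C c hc := hc
  fib v w h := ⟨w * v⁻¹, by simp [MonoidHom.mem_ker, h], by simp⟩
  free c _ v h := by simpa using h

variable {D : Cayley G A}

theorem step_cover {x y : A} : D.cover.Step x y ↔ x⁻¹ * y ∈ D.φ '' D.S := by
  constructor
  · rintro ⟨v, w, rfl, rfl, h⟩
    exact ⟨_, h, by simp [cover]⟩
  · rintro ⟨s, hs, e⟩
    obtain ⟨v, rfl⟩ := D.surj x
    exact ⟨v, v * s, rfl, by simp [cover, e], by simpa [cover] using hs⟩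

theorem step_of_mem {s : G} (hs : s ∈ D.S) : D.cover.Step 1 (D.φ s) :=
  step_cover.2 ⟨s, hs, by simp⟩

theorem rep (hfin : D.S.Finite) (hgen : Subgroup.closure D.S = ⊤) : D.cover.Rep := by
  intro F
  have e : {s | D.cover.Step 1 s} = D.φ '' D.S := by
    ext x; rw [Set.mem_ofPred_eq, step_cover]; simp
  rw [e]
  refine travRep _ (hfin.image _) ?_ F ?_
  · rintro _ ⟨s, hs, rfl⟩; exact ⟨s⁻¹, D.S_inv s hs, by simp⟩
  · rw [← MonoidHom.map_closure, hgen, ← MonoidHom.range_eq_map, MonoidHom.range_eq_top.2 D.surj]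
    simp

/-- A path in the Cayley graph starting at `1` whose closing edge leads to a non-trivial element of
the kernel. -/
theorem good_of_path {L : List G} {w c : G} (hnd : (L.map D.φ).Nodup)
    (hch : L.IsChain D.cover.adj) (hh : L.head? = some 1) (hl : L.getLast? = some w)
    (hc : D.φ c = 1) (hc1 : c ≠ 1) (hw : w⁻¹ * c ∈ D.S) : D.cover.Good (L.map D.φ) :=
  ⟨hnd, L, rfl, hch, c, hc, hc1, 1, w, hh, hl, by simpa [cover] using hw⟩

theorem adj_mul {s : G} (hs : s ∈ D.S) (x : G) : D.cover.adj x (x * s) := by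
  simpa [cover] using hs

/-- A generator has the same order as its image, unless there is a two-way hamiltonian path: the
cycle of its powers in `A` closes up with `s ^ orderOf (D.φ s)`. -/
theorem ham_of_pow_ne [Infinite A] (hrep : D.cover.Rep) {s : G} (hs : s ∈ D.S)
    (hf : IsOfFinOrder (D.φ s)) (hne : s ^ orderOf (D.φ s) ≠ 1) : TwoWay D.cover.adj := by
  refine ham_single_good hrep (D.φ s) hf ?_
  have hpos := hf.orderOf_pos
  set n := orderOf (D.φ s) with hn
  have e : (List.range n).map (D.φ s ^ ·) = ((List.range n).map (s ^ ·)).map D.φ := by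
    simp [Function.comp_def]
  rw [e]
  refine good_of_path ?_ (isChain_map_range fun i _ => ?_) ((head?_map_range hpos).trans (by simp))
    (getLast?_map_range hpos) (c := s ^ n) (by rw [map_pow, hn, pow_orderOf_eq_one]) hne ?_
  · rw [← e]
    refine List.Nodup.map_on (fun i hi j hj e => ?_) List.nodup_range
    exact pow_inj_of_lt_orderOf (List.mem_range.1 hi) (List.mem_range.1 hj) e
  · rw [pow_succ]; exact adj_mul hs _
  · rw [← pow_sub_one_mul hpos.ne' s]; simpa using hs

/-- The lift of the ladder closes up with the commutator of `b ^ (n - 1)` and `z`. -/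
theorem good_ladder {b z : G} (hb : b ∈ D.S) (hz : z ∈ D.S) {n : ℕ} (hn : 0 < n)
    (hnd : (ladderList (D.φ b) (D.φ z) n).Nodup) (hne : b ^ (n - 1) * z ≠ z * b ^ (n - 1)) :
    D.cover.Good (ladderList (D.φ b) (D.φ z) n) := by
  set g := b ^ (n - 1) * z * (b ^ (n - 1))⁻¹ with hg
  have e : ladderList (D.φ b) (D.φ z) n = ((List.range n).map (b ^ ·) ++
      ((List.range n).map (fun i => g * b ^ i)).reverse).map D.φ := by
    simp [ladderList, Function.comp_def, hg, mul_comm]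
  rw [e] at hnd ⊢
  refine good_of_path hnd (isChain_append_reverse D.cover.symm hn (fun i _ => ?_) (fun i _ => ?_) ?_)
    (by rw [head?_append_reverse hn, pow_zero]) (getLast?_append_reverse hn)
    (c := g * z⁻¹) (by simp [hg]) ?_ (by simpa using D.S_inv z hz)
  · rw [pow_succ]; exact adj_mul hb _
  · rw [pow_succ, ← mul_assoc]; exact adj_mul hb _
  · rw [hg, inv_mul_cancel_right]; exact adj_mul hz _
  · intro h
    rw [mul_inv_eq_one, hg, mul_inv_eq_iff_eq_mul] at h
    exact hne h

/-- A torsion generator commutes with every generator of infinite order, unless there is a two-way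
hamiltonian path. -/
theorem ham_torsion_infinite [Infinite A] (hrep : D.cover.Rep) {s z : G} (hs : s ∈ D.S)
    (hz : z ∈ D.S) (hs1 : D.φ s ≠ 1) (hf : IsOfFinOrder (D.φ s)) (hi : ¬ IsOfFinOrder (D.φ z))
    (hne : s * z ≠ z * s) : TwoWay D.cover.adj := by
  by_cases h1 : s ^ orderOf (D.φ s) = 1
  · refine ham_pair_ladder hrep _ _ (step_of_mem hz) hf hs1 hi (good_ladder hs hz hf.orderOf_pos
      (nodup_ladderList (fun i j => pow_inj_of_lt_orderOf)
        fun i j _ _ => ladder_disjoint hf hi i j) fun h => hne ?_)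
    have e : s ^ (orderOf (D.φ s) - 1) = s⁻¹ := by
      rw [eq_inv_iff_mul_eq_one, ← pow_succ, Nat.sub_add_cancel hf.orderOf_pos, h1]
    rw [e] at h
    exact (Commute.inv_left_iff.1 h).eq
  · exact ham_of_pow_ne hrep hs hf h1

/-- The square spanned by `a` and `b` closes up with their commutator. -/
theorem ham_independent (hrep : D.cover.Rep) {a b : G} (ha : a ∈ D.S) (hb : b ∈ D.S)
    (hi : ¬ IsOfFinOrder (D.φ a)) (hd : ¬ Dep (D.φ a) (D.φ b)) (hne : a * b ≠ b * a) :
    TwoWay D.cover.adj := by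
  refine ham_square_good hrep _ _ (step_of_mem ha) (step_of_mem hb) hi hd ?_
  have e : [1, D.φ a, D.φ a * D.φ b, D.φ b] = [1, a, a * b, a * b * a⁻¹].map D.φ := by simp
  have hk := independent_of_not_dep hi hd
  rw [e]
  refine good_of_path (w := a * b * a⁻¹) ?_ ?_ rfl rfl (c := a * b * a⁻¹ * b⁻¹) (by simp) ?_
    (by rw [inv_mul_cancel_left]; exact D.S_inv b hb)
  · rw [← e]
    have n1 : D.φ a ≠ D.φ b := fun h => by
      simpa using (hk 1 (-1) (by simp [h])).1
    have n2 : D.φ a * D.φ b ≠ 1 := fun h => by simpa using (hk 1 1 (by simpa using h)).1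
    have n3 : D.φ a ≠ 1 := fun h => by simpa using (hk 1 0 (by simp [h])).1
    have n4 : D.φ b ≠ 1 := fun h => by simpa using (hk 0 1 (by simp [h])).2
    simp only [List.nodup_cons, List.mem_cons, List.not_mem_nil, or_false, not_or, not_false_eq_true,
      List.nodup_nil, and_true, right_eq_mul₀, left_eq_mul]
    exact ⟨⟨n3.symm, n2.symm, n4.symm⟩, ⟨n4, n1⟩, by simpa using n3⟩
  · have s1 : D.cover.adj 1 a := by simpa using adj_mul ha 1
    simp [s1, adj_mul hb, adj_mul (D.S_inv a ha)]
  · intro h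
    rw [mul_inv_eq_one, mul_inv_eq_iff_eq_mul] at h
    exact hne h

/-- The cycle given by the relation `b ^ k = a ^ j` in `A` closes up with `a ^ (-j) * b ^ k`. -/
theorem ham_dependent (hrep : D.cover.Rep) {a b : G} (ha : a ∈ D.S) (hb : b ∈ D.S) {j k : ℕ}
    (hj : 1 ≤ j) (hk : 1 ≤ k) (hjk : 3 ≤ j + k)
    (hker : ∀ m n : ℤ, D.φ a ^ m * D.φ b ^ n = 1 → ∃ q : ℤ, m = -(j * q) ∧ n = k * q)
    (hrel : D.φ b ^ (k : ℤ) = D.φ a ^ (j : ℤ)) (hne : b ^ k ≠ a ^ j) : TwoWay D.cover.adj := by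
  refine ham_gamma_good hrep _ _ (step_of_mem ha) (step_of_mem hb) j k hj hk hjk hker hrel ?_
  have e : (List.range (j + k)).map (fun i : ℕ => gammaPt (D.φ a) (D.φ b) j i) =
      ((List.range (j + k)).map fun i : ℕ => a ^ (-min (i : ℤ) j) * b ^ (max 0 ((i : ℤ) - j))).map
        D.φ := by
    simp [gammaPt, Function.comp_def]
  rw [e]
  refine good_of_path ?_ (isChain_map_range fun i _ => ?_) ((head?_map_range (by omega)).trans ?_)
    (getLast?_map_range (by omega)) (c := a ^ (-(j : ℤ)) * b ^ (k : ℤ)) (by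
      rw [map_mul, map_zpow, map_zpow, hrel]; simp) ?_ ?_
  · rw [← e]
    refine List.Nodup.map_on ?_ List.nodup_range
    intro x hx y hy e
    rw [List.mem_range] at hx hy
    have := gammaPt_injOn hker (by omega) (by omega) (by omega) (by omega) e
    omega
  · rcases lt_or_ge i j with h | h
    · rw [min_eq_left (by omega), min_eq_left (by omega), max_eq_left (by omega),
        max_eq_left (by omega)]
      have := adj_mul (D.S_inv a ha) (a ^ (-(i : ℤ)))
      rw [← zpow_neg_one, ← zpow_add] at this
      simpa [add_comm] using this
    · rw [min_eq_right (by omega), min_eq_right (by omega), max_eq_right (by omega),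
        max_eq_right (by omega)]
      have := adj_mul hb (a ^ (-(j : ℤ)) * b ^ ((i : ℤ) - j))
      rw [mul_assoc, ← zpow_add_one] at this
      convert this using 3; omega
  · simp
  · intro h
    rw [zpow_neg, inv_mul_eq_one, zpow_natCast, zpow_natCast] at h
    exact hne h.symm
  · rw [min_eq_right (by omega), max_eq_right (by omega), mul_inv_rev, mul_assoc,
      inv_mul_cancel_left, ← zpow_neg, ← zpow_add]
    convert hb
    rw [show -(((j + k - 1 : ℕ) : ℤ) - j) + k = 1 by omega, zpow_one]

end Cayley

end HamPath

namespace HamPath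

/-- The list `l` followed by its translate by `z`, backwards. -/
def fold {G : Type*} [Group G] (z : G) (l : List G) : List G := l ++ (l.map (· * z)).reverse

theorem head?_fold {G : Type*} [Group G] (z x : G) (l : List G) :
    (fold z (x :: l)).head? = some x := by simp [fold]

theorem getLast?_fold {G : Type*} [Group G] (z x : G) (l : List G) :
    (fold z (x :: l)).getLast? = some (x * z) := by
  rw [fold, List.getLast?_append, List.getLast?_reverse]; rfl

theorem map_fold {G A : Type*} [Group G] [Group A] (φ : G →* A) (z : G) (l : List G) :
    (fold z l).map φ = fold (φ z) (l.map φ) := by simp [fold, Function.comp_def]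

namespace Cayley

open Cover

variable {G A : Type*} [Group G] [CommGroup A] {D : Cayley G A}

/-! ### Two non-commuting torsion generators -/

/-- The Cayley graph with respect to two of the generators and their inverses. -/
def two (D : Cayley G A) (s t : G) : Cayley G A where
  φ := D.φ
  surj := D.surj
  S := {s, s⁻¹, t, t⁻¹}
  S_inv x hx := by
    rcases hx with rfl | rfl | rfl | rfl <;> simp
  p := D.p
  hp := D.hp
  card := D.card

theorem isChain_fold {s t z : G} (hs : s ∈ D.S) (ht : t ∈ D.S) (hz : z ∈ D.S)
    (hsz : Commute s z) (htz : Commute t z) {M : List G} (hM : M.IsChain (D.two s t).cover.adj) :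
    (fold z M).IsChain D.cover.adj := by
  have hS : ∀ x ∈ (D.two s t).S, x ∈ D.S ∧ Commute x z := by
    rintro x (rfl | rfl | rfl | rfl)
    · exact ⟨hs, hsz⟩
    · exact ⟨D.S_inv _ hs, hsz.inv_left⟩
    · exact ⟨ht, htz⟩
    · exact ⟨D.S_inv _ ht, htz.inv_left⟩
  rw [fold, List.isChain_append]
  refine ⟨hM.imp fun _ _ h => (hS _ h).1, isChain_reverse_symm D.cover.symm ?_, ?_⟩
  · rw [List.isChain_map]
    refine hM.imp fun x y h => ?_
    obtain ⟨h1, h2⟩ := hS _ h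
    have e : (x * z)⁻¹ * (y * z) = x⁻¹ * y := by
      rw [mul_inv_rev, mul_assoc, ← mul_assoc x⁻¹, h2.eq, inv_mul_cancel_left]
    change (x * z)⁻¹ * (y * z) ∈ D.S
    rwa [e]
  · intro x hx y hy
    rw [List.head?_reverse, List.getLast?_map] at hy
    rw [Option.mem_def] at hx
    rw [hx] at hy
    simp only [Option.map_some, Option.mem_some_iff] at hy
    rw [← hy]; exact adj_mul hz x

/-- Let `α :: p` and `α t :: q` be paths with steps `s` and `t` which, together with the two points
`α s` and `α s t`, list a subgroup `F` once. The prism formed by `F` and `F z` then has a hamiltonian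
cycle: up and down over the path `α t :: q`, through `α s t` and `α s`, and over the path `α :: p`.
Since `z` commutes with `s` and `t`, its lift closes up with a conjugate of the commutator of `s` and
`t`. -/
theorem ham_prism (hrep : D.cover.Rep) {s t z : G} (hs : s ∈ D.S) (ht : t ∈ D.S) (hz : z ∈ D.S)
    (hsz : Commute s z) (htz : Commute t z) (hst : t * s ≠ s * t) (F : Subgroup A)
    (hzF : ∀ m : ℤ, D.φ z ^ m ∈ F → m = 0) {α : A} {p q : List A}
    (hp : (α :: p).IsChain (D.two s t).cover.Step)
    (hq : (α * D.φ t :: q).IsChain (D.two s t).cover.Step)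
    (hnd : ((α :: p) ++ (α * D.φ t :: q) ++ [α * D.φ s, α * D.φ s * D.φ t]).Nodup)
    (hF : ∀ x, x ∈ ((α :: p) ++ (α * D.φ t :: q) ++ [α * D.φ s, α * D.φ s * D.φ t]) ↔ x ∈ F) :
    TwoWay D.cover.adj := by
  classical
  obtain ⟨u, rfl⟩ := D.surj α
  obtain ⟨P, hP, hPc, hPh⟩ := exists_lift hp u (by simp [two, cover])
  obtain ⟨Q, hQ, hQc, hQh⟩ := exists_lift hq (u * t) (by simp [two, cover])
  obtain ⟨P, rfl⟩ := List.head?_eq_some_iff.1 (hPh (by simp))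
  obtain ⟨Q, rfl⟩ := List.head?_eq_some_iff.1 (hQh (by simp))
  have hP : (u :: P).map D.φ = D.φ u :: p := hP
  have hQ : ((u * t) :: Q).map D.φ = D.φ u * D.φ t :: q := hQ
  set T := (D.φ u :: p) ++ (D.φ u * D.φ t :: q) ++ [D.φ u * D.φ s, D.φ u * D.φ s * D.φ t] with hT
  set γ := u * t * s * t⁻¹ * s⁻¹ * u⁻¹ with hγ
  have hγ1 : D.φ γ = 1 := by
    simp only [hγ, map_mul, map_inv]; rw [mul_right_comm _ (D.φ s)]; simp [mul_right_comm]
  set L := fold z ((u * t) :: Q) ++ ([u * t * s * z, u * t * s, u * t * s * t⁻¹,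
    u * t * s * t⁻¹ * z] ++ ((fold z (u :: P)).map (γ * ·)).reverse) with hL
  set l := fold (D.φ z) (D.φ u * D.φ t :: q) ++ ([D.φ u * D.φ s * D.φ t * D.φ z,
    D.φ u * D.φ s * D.φ t, D.φ u * D.φ s, D.φ u * D.φ s * D.φ z] ++
    (fold (D.φ z) (D.φ u :: p)).reverse) with hl
  have hLl : L.map D.φ = l := by
    rw [hL, hl, List.map_append, List.map_append, map_fold, hQ, List.map_reverse, List.map_map,
      show ((D.φ : G → A) ∘ fun x => γ * x) = D.φ by ext x; simp [hγ1], map_fold, hP]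
    simp [mul_right_comm _ (D.φ t)]
  have hperm : l.Perm (T ++ T.map (· * D.φ z)) := by
    rw [List.perm_iff_count]
    intro x
    simp only [hl, hT, fold, List.count_append, List.count_cons, List.count_reverse,
      List.map_append, List.map_cons, List.map_nil, List.reverse_append, List.reverse_reverse,
      List.count_nil]
    ring
  have hzne : ∀ x ∈ F, x * D.φ z ∉ F := by
    intro x hx hx'
    have := hzF 1 (by simpa using F.mul_mem (F.inv_mem hx) hx')
    omega
  have hlnd : l.Nodup := by
    rw [hperm.nodup_iff, List.nodup_append']
    refine ⟨hnd, hnd.map (mul_left_injective _), fun x hx hx' => ?_⟩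
    obtain ⟨y, hy, rfl⟩ := List.mem_map.1 hx'
    exact hzne y ((hF y).1 hy) ((hF _).1 hx)
  have hset : {x | x ∈ l} = pairSet F (D.φ z) := by
    ext x
    simp only [Set.mem_ofPred_eq, hperm.mem_iff, List.mem_append (s := T), hF, pairSet,
      List.mem_map]
    constructor
    · rintro (h | ⟨y, hy, rfl⟩)
      · exact ⟨0, le_rfl, by omega, by simpa using h⟩
      · exact ⟨1, by omega, le_rfl, by simpa using hy⟩
    · rintro ⟨ε, h1, h2, h3⟩
      obtain rfl | rfl : ε = 0 ∨ ε = 1 := by omega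
      · left; simpa using h3
      · right; exact ⟨_, h3, by simp⟩
  have hgood : D.cover.Good l := by
    refine ⟨hlnd, L, hLl, ?_, γ, hγ1, ?_, u * t, γ * u, ?_, ?_, ?_⟩
    · rw [hL, List.isChain_append, List.isChain_append]
      refine ⟨isChain_fold hs ht hz hsz htz hQc, ⟨?_, isChain_reverse_symm D.cover.symm
        (smul_isChain (isChain_fold hs ht hz hsz htz hPc) γ), ?_⟩, ?_⟩
      · have e1 := adj_mul (D.S_inv z hz) (u * t * s * z)
        have e2 := adj_mul (D.S_inv t ht) (u * t * s)
        have e3 := adj_mul hz (u * t * s * t⁻¹)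
        rw [mul_inv_cancel_right] at e1
        simp [e1, e2, e3]
      · intro x hx y hy
        rw [List.head?_reverse, List.getLast?_map, getLast?_fold] at hy
        simp at hx hy
        subst hx hy
        have := adj_mul (D.S_inv s hs) (u * t * s * t⁻¹ * z)
        rw [mul_assoc _ z, ← hsz.inv_left.eq] at this
        simpa [hγ, mul_assoc] using this
      · intro x hx y hy
        rw [getLast?_fold] at hx
        simp at hx hy
        subst hx hy
        have := adj_mul hs (u * t * z)
        rwa [mul_assoc _ z, ← hsz.eq, ← mul_assoc] at this
    · intro h
      rw [hγ, mul_inv_eq_one, mul_inv_eq_iff_eq_mul, mul_inv_eq_iff_eq_mul, mul_assoc, mul_assoc] at h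
      exact hst (mul_left_cancel h)
    · rw [hL, List.head?_append, head?_fold]; rfl
    · rw [hL, List.getLast?_append, List.getLast?_append, List.getLast?_reverse, List.head?_map,
        head?_fold]; rfl
    · simp only [cover, smul_eq_mul]
      convert ht using 1
      group
  have t1 := (hgood.tr_ends (α := D.φ u * D.φ t) (β := D.φ u)
    (by rw [hl, List.head?_append, head?_fold]; rfl)
    (by rw [hl, List.getLast?_append, List.getLast?_append, List.getLast?_reverse,
          head?_fold]; rfl)).congr hset
  have t2 := (Good.tr_adj (l₁ := fold (D.φ z) (D.φ u * D.φ t :: q)) hgood).congr hset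
  have e3 : l = (fold (D.φ z) (D.φ u * D.φ t :: q) ++ [D.φ u * D.φ s * D.φ t * D.φ z,
    D.φ u * D.φ s * D.φ t, D.φ u * D.φ s]) ++ D.φ u * D.φ s * D.φ z :: D.φ u * D.φ z ::
      (p.map (· * D.φ z) ++ (D.φ u :: p).reverse) := by
    rw [hl]; simp [fold]
  have t3 := Good.tr_adj (e3 ▸ hgood)
  rw [← e3] at t3
  have t3 := t3.congr hset
  have m1 : D.φ u ∈ F := (hF _).1 (by simp [hT])
  have m2 : D.φ u * D.φ t ∈ F := (hF _).1 (by simp [hT])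
  have m3 : D.φ u * D.φ s ∈ F := (hF _).1 (by simp [hT])
  have m4 : D.φ u * D.φ s * D.φ t ∈ F := (hF _).1 (by simp [hT])
  exact ham_pair hrep F (D.φ z) (step_of_mem hz) hzF ⟨_, m2, _, m1, t1⟩ ⟨_, m4, _, m4, t2.symm⟩
    ⟨_, m3, _, m1, t3⟩

theorem two_step {s t : G} {x y : A} (h : y = x * D.φ s ∨ x = y * D.φ s ∨ y = x * D.φ t ∨
    x = y * D.φ t) : (D.two s t).cover.Step x y := by
  rw [step_cover]
  rcases h with rfl | rfl | rfl | rfl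
  · exact ⟨s, by simp [two], by simp [two]⟩
  · exact ⟨s⁻¹, by simp [two], by simp [two]⟩
  · exact ⟨t, by simp [two], by simp [two]⟩
  · exact ⟨t⁻¹, by simp [two], by simp [two]⟩

/-- `ham_prism` applies to `F = ⟨s⟩` when `t` is a power of `s` other than `1` and `s ^ (± 1)` in the
abelian quotient: take `α = 1` and `p` empty. The exponents left over form the path
`m + 2, …, 2, m + 4, m + 5, …`, in which the step from `2` to `m + 4` is `t`. -/
theorem ham_torsion_cyclic (hrep : D.cover.Rep) {s t z : G} (hs : s ∈ D.S) (ht : t ∈ D.S)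
    (hz : z ∈ D.S) (hsz : Commute s z) (htz : Commute t z) (hst : t * s ≠ s * t)
    (hsf : IsOfFinOrder (D.φ s)) (hzi : ¬ IsOfFinOrder (D.φ z)) {m : ℕ}
    (hm : m + 4 ≤ orderOf (D.φ s)) (hrel : D.φ t = D.φ s ^ (m + 2)) : TwoWay D.cover.adj := by
  obtain ⟨r, hr⟩ : ∃ r, orderOf (D.φ s) = m + 4 + r := ⟨orderOf (D.φ s) - m - 4, by omega⟩
  set cl : List ℕ := [0] ++ (((List.range (m + 1)).map (2 + ·)).reverse ++
    (List.range r).map (m + 4 + ·)) ++ [1, m + 3] with hcl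
  have hmem : ∀ i, i ∈ cl ↔ i < m + 4 + r := by
    intro i
    simp only [hcl, List.mem_append, List.mem_cons, List.not_mem_nil, or_false, List.mem_reverse,
      List.mem_map, List.mem_range]
    constructor
    · rintro ((rfl | ⟨j, hj, rfl⟩ | ⟨j, hj, rfl⟩) | rfl | rfl) <;> omega
    · intro hi
      by_cases h0 : i = 0
      · exact Or.inl (Or.inl h0)
      by_cases h1 : i = 1
      · exact Or.inr (Or.inl h1)
      by_cases h2 : i = m + 3
      · exact Or.inr (Or.inr h2)
      rcases lt_or_ge i (m + 3) with h3 | h3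
      · exact Or.inl (Or.inr (Or.inl ⟨i - 2, by omega, by omega⟩))
      · exact Or.inl (Or.inr (Or.inr ⟨i - (m + 4), by omega, by omega⟩))
  -- a list of length `n` containing all numbers below `n` has no repetitions
  have hcnd : cl.Nodup := by
    have hsub : List.range (m + 4 + r) ⊆ cl := fun i hi => (hmem i).2 (List.mem_range.1 hi)
    have hp := (List.nodup_range.subperm hsub).perm_of_length_le (by simp [hcl]; omega)
    exact hp.nodup_iff.1 List.nodup_range
  have e : [1] ++ (1 * D.φ t :: (((List.range m).map (D.φ s ^ 2 * D.φ s ^ ·)).reverse ++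
      (List.range r).map (D.φ s ^ (m + 4) * D.φ s ^ ·))) ++ [1 * D.φ s, 1 * D.φ s * D.φ t] =
      cl.map (D.φ s ^ ·) := by
    rw [hcl, List.range_succ]
    simp [Function.comp_def, hrel, pow_add, pow_succ, mul_comm, mul_assoc]
  refine ham_prism hrep hs ht hz hsz htz hst (Subgroup.zpowers (D.φ s))
    (zpow_mem_torsion hzi _ fun f hf => ?_) (α := 1) (p := [])
    (q := ((List.range m).map (D.φ s ^ 2 * D.φ s ^ ·)).reverse ++
      (List.range r).map (D.φ s ^ (m + 4) * D.φ s ^ ·)) (by simp) ?_ (e.symm ▸ ?_)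
    fun x => e.symm ▸ ?_
  · obtain ⟨i, rfl⟩ := Subgroup.mem_zpowers_iff.1 hf
    exact hsf.zpow
  · have e' : 1 * D.φ t :: (((List.range m).map (D.φ s ^ 2 * D.φ s ^ ·)).reverse ++
      (List.range r).map (D.φ s ^ (m + 4) * D.φ s ^ ·)) =
      ((List.range (m + 1)).map (D.φ s ^ 2 * D.φ s ^ ·)).reverse ++
      (List.range r).map (D.φ s ^ (m + 4) * D.φ s ^ ·) := by
      rw [List.range_succ]; simp [hrel, pow_add, mul_comm]
    rw [e', List.isChain_append]
    refine ⟨isChain_reverse_symm (fun _ _ h => h.symm) (isChain_map_range fun i _ => ?_),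
      isChain_map_range fun i _ => ?_, ?_⟩
    · exact two_step (Or.inl (by rw [pow_succ _ i, mul_assoc]))
    · exact two_step (Or.inl (by rw [pow_succ _ i, mul_assoc]))
    · intro x hx y hy
      rw [List.getLast?_reverse, head?_map_range (by omega)] at hx
      rcases Nat.eq_zero_or_pos r with rfl | hr0
      · simp at hy
      rw [head?_map_range hr0] at hy
      simp only [Option.mem_some_iff] at hx hy
      subst hx hy
      refine two_step (Or.inr (Or.inr (Or.inl ?_)))
      rw [hrel, pow_zero, mul_one, mul_one, ← pow_add]; congr 1; omega
  · refine List.Nodup.map_on (fun i hi j hj e => ?_) hcnd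
    rw [hmem] at hi hj
    exact pow_inj_of_lt_orderOf (by omega) (by omega) e
  · rw [← hsf.mem_powers_iff_mem_zpowers, List.mem_map]
    constructor
    · rintro ⟨i, -, rfl⟩; exact ⟨i, rfl⟩
    · rintro ⟨i, rfl⟩
      refine ⟨i % orderOf (D.φ s), (hmem _).2 ?_, by simp [pow_mod_orderOf]⟩
      rw [← hr]; exact Nat.mod_lt _ hsf.orderOf_pos

/-- `ham_prism` applies to `F = ⟨s, t⟩` when `t` is not a power of `s` in the abelian quotient: `F` is a
grid with rows `⟨s⟩ t ^ i`. Without their last points, the row `⟨s⟩` is the first path and the row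
`⟨s⟩ t` the beginning of the second, which goes on through the other rows back and forth. -/
theorem ham_torsion_product (hrep : D.cover.Rep) {s t z : G} (hs : s ∈ D.S) (ht : t ∈ D.S)
    (hz : z ∈ D.S) (hsz : Commute s z) (htz : Commute t z) (hst : t * s ≠ s * t)
    (hsf : IsOfFinOrder (D.φ s)) (htf : IsOfFinOrder (D.φ t)) (hzi : ¬ IsOfFinOrder (D.φ z))
    (hs1 : D.φ s ≠ 1) (hnot : D.φ t ∉ Subgroup.zpowers (D.φ s)) : TwoWay D.cover.adj := by
  classical
  have hex : ∃ k : ℕ, 0 < k ∧ D.φ t ^ k ∈ Subgroup.zpowers (D.φ s) :=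
    ⟨orderOf (D.φ t), htf.orderOf_pos, by rw [pow_orderOf_eq_one]; exact one_mem _⟩
  obtain ⟨hk0, hkm⟩ := Nat.find_spec hex
  have hmin : ∀ m : ℕ, 0 < m → m < Nat.find hex → D.φ t ^ m ∉ Subgroup.zpowers (D.φ s) :=
    fun m h0 h1 h2 => Nat.find_min hex h1 ⟨h0, h2⟩
  generalize Nat.find hex = k at hk0 hkm hmin
  obtain ⟨k, rfl⟩ : ∃ k', k = k' + 2 := by
    refine ⟨k - 2, ?_⟩
    have : k ≠ 1 := by rintro rfl; simp at hkm; exact hnot hkm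
    omega
  obtain ⟨m, hm⟩ : ∃ m, orderOf (D.φ s) = m + 2 := by
    refine ⟨orderOf (D.φ s) - 2, ?_⟩
    have h1 : orderOf (D.φ s) ≠ 1 := fun h => hs1 (orderOf_eq_one_iff.1 h)
    have := hsf.orderOf_pos
    omega
  -- `pt` is a bijection from `[0, k + 2) × [0, m + 2)` onto the group generated by `s` and `t`
  let pt : ℕ × ℕ → A := fun x => D.φ t ^ x.1 * D.φ s ^ x.2
  have hinj : ∀ x y : ℕ × ℕ, x.1 < k + 2 ∧ x.2 < m + 2 → y.1 < k + 2 ∧ y.2 < m + 2 →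
      pt x = pt y → x = y := by
    have aux : ∀ x y : ℕ × ℕ, x.1 < k + 2 ∧ x.2 < m + 2 → y.1 < k + 2 ∧ y.2 < m + 2 →
        x.1 ≤ y.1 → pt x = pt y → x = y := by
      rintro ⟨r, c⟩ ⟨r', c'⟩ ⟨h1, h2⟩ ⟨h3, h4⟩ h5 h
      simp only [pt] at h1 h2 h3 h4 h5 h
      obtain ⟨d, rfl⟩ := Nat.exists_eq_add_of_le h5
      have hd : d = 0 := by
        by_contra hd
        refine hmin d (by omega) (by omega) ?_
        rw [pow_add, mul_assoc, mul_right_inj] at h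
        have e : D.φ t ^ d = D.φ s ^ c * (D.φ s ^ c')⁻¹ := by rw [h]; simp
        rw [e]
        exact mul_mem (Subgroup.npow_mem_zpowers _ _) (inv_mem (Subgroup.npow_mem_zpowers _ _))
      subst hd
      rw [add_zero, mul_right_inj] at h
      rw [pow_inj_of_lt_orderOf (by omega) (by omega) h, add_zero]
    intro x y hx hy h
    rcases le_total x.1 y.1 with h' | h'
    · exact aux x y hx hy h' h
    · exact (aux y x hy hx h' h.symm).symm
  let R : ℕ → ℕ → Prop := fun i j => j = i + 1 ∨ i = j + 1
  have hRs : ∀ i j, R i j → R j i := fun i j h => Or.symm h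
  obtain ⟨W, w1, w2, w3, w4⟩ := snake (R := R) (R' := R) hRs ((List.range k).map (2 + ·))
    (List.range (m + 2)) (by simp)
    List.nodup_range (by simpa using isChain_map_range (f := id) fun i _ => Or.inl rfl)
    (List.nodup_range.map fun _ _ h => by simpa using h)
    (isChain_map_range fun i _ => Or.inl (by omega))
  have hpt : ∀ x y, BoxRel R R x y → (D.two s t).cover.Step (pt x) (pt y) := by
    rintro ⟨r, c⟩ ⟨r', c'⟩ (⟨h1, h2 | h2⟩ | ⟨h1 | h1, h2⟩)
    all_goals simp only at h1 h2; subst h1 h2; apply two_step; simp only [pt]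
    · left; rw [pow_succ, mul_assoc]
    · right; left; rw [pow_succ, mul_assoc]
    · right; right; left; rw [pow_succ, mul_right_comm]
    · right; right; right; rw [pow_succ, mul_right_comm]
  set cl : List (ℕ × ℕ) := ((List.range (m + 1)).map (Prod.mk 0)).reverse ++
    (((List.range (m + 1)).map (Prod.mk 1)).reverse ++ W) ++ [(0, m + 1), (1, m + 1)] with hcl
  have hmem : ∀ x, x ∈ cl ↔ x.1 < k + 2 ∧ x.2 < m + 2 := by
    rintro ⟨r, c⟩
    simp only [hcl, List.mem_append, List.mem_reverse, List.mem_map, List.mem_range, w2,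
      Prod.mk.injEq, List.mem_cons, List.not_mem_nil, or_false]
    constructor
    · rintro ((⟨j, hj, rfl, rfl⟩ | ⟨j, hj, rfl, rfl⟩ | ⟨⟨j, hj, rfl⟩, h⟩) | ⟨rfl, rfl⟩ | ⟨rfl, rfl⟩)
        <;> omega
    · rintro ⟨h1, h2⟩
      rcases r with _ | _ | r
      · rcases Nat.lt_succ_iff_lt_or_eq.1 h2 with h | h
        · exact Or.inl (Or.inl ⟨c, h, rfl, rfl⟩)
        · exact Or.inr (Or.inl ⟨rfl, h⟩)
      · rcases Nat.lt_succ_iff_lt_or_eq.1 h2 with h | h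
        · exact Or.inl (Or.inr (Or.inl ⟨c, h, rfl, rfl⟩))
        · exact Or.inr (Or.inr ⟨rfl, h⟩)
      · exact Or.inl (Or.inr (Or.inr ⟨⟨r, by omega, by omega⟩, h2⟩))
  have hcnd : cl.Nodup := by
    have hi : ∀ r : ℕ, Function.Injective (Prod.mk r : ℕ → ℕ × ℕ) := fun r _ _ h => by
      simpa using h
    simp only [hcl, List.nodup_append', List.nodup_reverse, List.nodup_range.map (hi _), w1,
      true_and, List.disjoint_left, List.mem_reverse, List.mem_map, List.mem_range, w2,
      List.mem_append, List.mem_cons, List.not_mem_nil, or_false, not_or, List.nodup_cons,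
      List.nodup_nil, Prod.mk.injEq]
    refine ⟨⟨?_, ?_⟩, ?_, ?_⟩
    · rintro _ ⟨c, hc, rfl⟩ ⟨⟨j, hj, h⟩, -⟩
      simp only at h; omega
    · rintro _ ⟨c, hc, rfl⟩
      refine ⟨?_, ?_⟩
      · rintro ⟨j, hj, h⟩
        simp at h
      · rintro ⟨⟨j, hj, h⟩, -⟩
        simp only at h; omega
    · simp
    · rintro _ (⟨c, hc, rfl⟩ | ⟨c, hc, rfl⟩ | ⟨⟨j, hj, h⟩, -⟩)
      · simp; omega
      · simp; omega
      · constructor <;> rintro rfl <;> simp only at h <;> omega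
  have e : (D.φ s ^ m :: ((List.range m).map (D.φ s ^ ·)).reverse) ++ (D.φ s ^ m * D.φ t ::
      (((List.range m).map (D.φ t * D.φ s ^ ·)).reverse ++ W.map pt)) ++
      [D.φ s ^ m * D.φ s, D.φ s ^ m * D.φ s * D.φ t] = cl.map pt := by
    rw [hcl, List.range_succ]
    simp [Function.comp_def, pt, pow_succ, mul_comm]
  refine ham_prism hrep hs ht hz hsz htz hst (Subgroup.zpowers (D.φ s) ⊔ Subgroup.zpowers (D.φ t))
    (zpow_mem_torsion hzi _ fun f hf => ?_) (α := D.φ s ^ m)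
    (p := ((List.range m).map (D.φ s ^ ·)).reverse)
    (q := ((List.range m).map (D.φ t * D.φ s ^ ·)).reverse ++ W.map pt) ?_ ?_ (e.symm ▸ ?_)
    fun x => e.symm ▸ ?_
  · obtain ⟨x, hx, y, hy, rfl⟩ := Subgroup.mem_sup.1 hf
    obtain ⟨i, rfl⟩ := Subgroup.mem_zpowers_iff.1 hx
    obtain ⟨j, rfl⟩ := Subgroup.mem_zpowers_iff.1 hy
    exact hsf.zpow.mul htf.zpow
  · have e' : D.φ s ^ m :: ((List.range m).map (D.φ s ^ ·)).reverse =
        ((List.range (m + 1)).map (D.φ s ^ ·)).reverse := by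
      rw [List.range_succ]; simp
    rw [e']
    exact isChain_reverse_symm (fun _ _ h => h.symm) (isChain_map_range fun i _ =>
      two_step (Or.inl (pow_succ _ _)))
  · have e' : D.φ s ^ m * D.φ t :: (((List.range m).map (D.φ t * D.φ s ^ ·)).reverse ++ W.map pt) =
        ((List.range (m + 1)).map (D.φ t * D.φ s ^ ·)).reverse ++ W.map pt := by
      rw [List.range_succ]; simp [mul_comm]
    rw [e', List.isChain_append]
    refine ⟨isChain_reverse_symm (fun _ _ h => h.symm) (isChain_map_range fun i _ =>
      two_step (Or.inl (by rw [pow_succ, mul_assoc]))), ?_, ?_⟩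
    · rw [List.isChain_map]; exact w3.imp hpt
    · intro x hx y hy
      rw [List.getLast?_reverse, head?_map_range (by omega)] at hx
      simp only [Option.mem_some_iff] at hx
      rw [List.head?_map, Option.mem_def, Option.map_eq_some_iff] at hy
      obtain ⟨v, hv, rfl⟩ := hy
      obtain ⟨v1, v2⟩ := w4 v hv
      rcases Nat.eq_zero_or_pos k with rfl | hk
      · simp at v1
      rw [head?_map_range hk] at v1
      simp only [Option.mem_some_iff] at v1
      rw [List.head?_range] at v2
      simp at v2
      subst hx
      refine two_step (Or.inr (Or.inr (Or.inl ?_)))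
      simp only [pt, ← v1, ← v2]; simp [pow_succ]
  · exact List.Nodup.map_on (fun x hx y hy h => hinj x y ((hmem x).1 hx) ((hmem y).1 hy) h) hcnd
  · rw [List.mem_map]
    constructor
    · rintro ⟨⟨r, c⟩, -, rfl⟩
      exact mul_mem (Subgroup.mem_sup_right (Subgroup.npow_mem_zpowers _ _))
        (Subgroup.mem_sup_left (Subgroup.npow_mem_zpowers _ _))
    · intro hxx
      obtain ⟨x, hx, y, hy, rfl⟩ := Subgroup.mem_sup.1 hxx
      rw [← htf.mem_powers_iff_mem_zpowers] at hy
      obtain ⟨j, rfl⟩ := hy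
      have hx' : x * (D.φ t ^ (k + 2)) ^ (j / (k + 2)) ∈ Subgroup.zpowers (D.φ s) :=
        mul_mem hx (pow_mem hkm _)
      rw [← hsf.mem_powers_iff_mem_zpowers] at hx'
      obtain ⟨i, hi⟩ := hx'
      refine ⟨(j % (k + 2), i % orderOf (D.φ s)), (hmem _).2 ⟨Nat.mod_lt _ (by omega), ?_⟩, ?_⟩
      · rw [← hm]; exact Nat.mod_lt _ hsf.orderOf_pos
      · simp only [pt, pow_mod_orderOf]
        simp only at hi
        rw [hi, mul_left_comm, ← pow_mul, ← pow_add, Nat.mod_add_div]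

/-- Torsion generators commute, unless there is a two-way hamiltonian path. -/
theorem ham_torsion [Infinite A] (hrep : D.cover.Rep)
    (hdig : ∀ x ∈ D.S, ∀ y ∈ D.S, D.φ x = D.φ y → x = y)
    (hS1 : ∀ x ∈ D.S, D.φ x ≠ 1) {s t z : G} (hs : s ∈ D.S) (ht : t ∈ D.S) (hz : z ∈ D.S)
    (hst : t * s ≠ s * t) (hsf : IsOfFinOrder (D.φ s)) (htf : IsOfFinOrder (D.φ t))
    (hzi : ¬ IsOfFinOrder (D.φ z)) : TwoWay D.cover.adj := by
  classical
  by_cases hsz : s * z = z * s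
  swap
  · exact ham_torsion_infinite hrep hs hz (hS1 s hs) hsf hzi hsz
  by_cases htz : t * z = z * t
  swap
  · exact ham_torsion_infinite hrep ht hz (hS1 t ht) htf hzi htz
  by_cases hnot : D.φ t ∈ Subgroup.zpowers (D.φ s)
  swap
  · exact ham_torsion_product hrep hs ht hz hsz htz hst hsf htf hzi (hS1 s hs) hnot
  rw [← hsf.mem_powers_iff_mem_zpowers, hsf.mem_powers_iff_mem_range_orderOf,
      Finset.mem_image] at hnot
  obtain ⟨i, hi, e⟩ := hnot
  rw [Finset.mem_range] at hi
  have h0 : i ≠ 0 := by rintro rfl; exact hS1 t ht (by rw [← e, pow_zero])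
  have h1 : i ≠ 1 := by
    rintro rfl
    rw [hdig s hs t ht (by rw [← e, pow_one])] at hst
    exact hst rfl
  have h2 : i + 1 ≠ orderOf (D.φ s) := by
    intro h
    have : D.φ s⁻¹ = D.φ t := by
      rw [map_inv, inv_eq_iff_mul_eq_one, ← e, ← pow_succ', h, pow_orderOf_eq_one]
    rw [← hdig _ (D.S_inv s hs) t ht this] at hst
    simp at hst
  obtain ⟨m, rfl⟩ : ∃ m, i = m + 2 := ⟨i - 2, by omega⟩
  exact ham_torsion_cyclic hrep hs ht hz hsz htz hst hsf hzi (by omega) e.symm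

end Cayley

end HamPath

namespace HamPath

/-! ### Splitting off a centralised subgroup -/

/-- A traversal of coset representatives in the quotient lifts to the group, step by step. -/
theorem lift_trav {G A J : Type*} [Group G] [Group A] (φ : G →* A) (hφ : Function.Surjective φ)
    {T : Set G} {R : J → J → Prop} {β : J → A} (h : Trav R)
    (hR : ∀ x y, R x y → (β x)⁻¹ * β y ∈ φ '' T) :
    ∃ b : J → G, (∀ j, φ (b j) = β j) ∧ Trav (fun x y => (b x)⁻¹ * b y ∈ T) := by
  classical
  rcases h with ⟨l, h1, h2, h3, h4⟩ | ⟨f, hf, hfR⟩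
  · have key : ∀ l : List J, l.Nodup → l.IsChain R →
        ∃ b : J → G, (∀ j, φ (b j) = β j) ∧ l.IsChain (fun x y => (b x)⁻¹ * b y ∈ T) := by
      intro l
      induction l with
      | nil =>
        intro _ _
        choose b hb using fun j => hφ (β j)
        exact ⟨b, hb, List.isChain_nil⟩
      | cons a l ih =>
        intro hnd hch
        obtain ⟨b, hb, hbl⟩ := ih hnd.of_cons hch.of_cons
        cases l with
        | nil => exact ⟨b, hb, List.isChain_singleton _⟩
        | cons c l =>
          obtain ⟨t, ht, e⟩ := hR _ _ (List.isChain_cons_cons.1 hch).1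
          have hac : a ∉ c :: l := (List.nodup_cons.1 hnd).1
          have hne : ∀ x ∈ c :: l, x ≠ a := fun x hx hxa => hac (hxa ▸ hx)
          refine ⟨Function.update b a (b c * t⁻¹), fun j => ?_, List.isChain_cons_cons.2 ⟨?_, ?_⟩⟩
          · by_cases hj : j = a
            · subst hj
              simp [hb, e]
            · simp [hj, hb]
          · rw [Function.update_self, Function.update_of_ne (hne c (by simp))]
            simpa using ht
          · rw [List.isChain_iff_getElem] at hbl ⊢
            intro i hi
            rw [Function.update_of_ne (hne _ (List.getElem_mem _)),
              Function.update_of_ne (hne _ (List.getElem_mem _))]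
            exact hbl i hi
    obtain ⟨b, hb, hbl⟩ := key l h2 h4
    exact ⟨b, hb, Or.inl ⟨l, h1, h2, h3, hbl⟩⟩
  · obtain ⟨g, hg⟩ := exists_int_seq (fun i x => φ x = β (f i)) (fun _ x y => x⁻¹ * y ∈ T)
      (hφ _) (fun i x _ hx => by
        obtain ⟨t, ht, e⟩ := hR _ _ (hfR i)
        exact ⟨x * t, by simp [hx, e], by simpa using ht⟩)
      (fun i y _ hy => by
        obtain ⟨t, ht, e⟩ := hR _ _ (hfR (i - 1))
        rw [sub_add_cancel] at e
        exact ⟨y * t⁻¹, by simp [hy, e], by simpa using ht⟩)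
    set E := Equiv.ofBijective f hf with hE
    have hEf : ∀ i, E.symm (f i) = i := fun i => E.symm_apply_apply i
    refine ⟨fun j => g (E.symm j), fun j => ?_, Or.inr ⟨f, hf, fun i => ?_⟩⟩
    · rw [(hg _).1]; exact congrArg β (E.apply_symm_apply j)
    · simp only [hEf]; exact (hg i).2

/-- A finitely generated abelian group is finite modulo a subgroup containing positive powers of
all generators. -/
theorem finite_quotient {A : Type*} [CommGroup A] {S : Set A} (hfin : S.Finite)
    (hgen : Subgroup.closure S = ⊤) (F : Subgroup A) (h : ∀ s ∈ S, ∃ k : ℕ, 0 < k ∧ s ^ k ∈ F) :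
    Finite (A ⧸ F) := by
  have hfg : Group.FG A := Group.fg_iff.2 ⟨S, hgen, hfin⟩
  refine CommGroup.finite_of_fg_isMulTorsion _ ?_
  have key : ⊤ ≤ (CommGroup.torsion (A ⧸ F)).comap (QuotientGroup.mk' F) := by
    rw [← hgen, Subgroup.closure_le]
    intro s hs
    obtain ⟨k, hk, e⟩ := h s hs
    refine isOfFinOrder_iff_pow_eq_one.2 ⟨k, hk, ?_⟩
    rw [← map_pow]
    exact (QuotientGroup.eq_one_iff _).2 e
  intro x
  obtain ⟨y, rfl⟩ := QuotientGroup.mk'_surjective F x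
  exact key (Subgroup.mem_top y)

namespace Cayley

open Cover

variable {G A : Type*} [Group G] [CommGroup A] {D : Cayley G A}

/-- If `G` is generated by a subgroup `G₁` containing the kernel together with generators that
centralise `G₁`, the Cayley graph contains a box product of the Cayley graph of `G₁` with a path,
so that a hamiltonian path of the former extends. -/
theorem ham_of_centralised [Infinite G] (G₁ : Subgroup G) (hker : D.φ.ker ≤ G₁) {T : Set G}
    (hTS : T ⊆ D.S) (hT : ∀ t ∈ T, t⁻¹ ∈ T) (hfin : T.Finite)
    (hcomm : ∀ z ∈ T, ∀ x ∈ G₁, z * x = x * z) (hgen : G₁ ⊔ Subgroup.closure T = ⊤)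
    (h : TwoWay (fun x y : G₁ => (x : G)⁻¹ * y ∈ D.S)) : TwoWay D.cover.adj := by
  have hrep : TravRep (D.φ '' T) (G₁.map D.φ) := by
    refine travRep _ (hfin.image _) ?_ _ ?_
    · rintro _ ⟨t, ht, rfl⟩; exact ⟨t⁻¹, hT t ht, by simp⟩
    · rw [← MonoidHom.map_closure, ← Subgroup.map_sup, hgen, ← MonoidHom.range_eq_map,
        MonoidHom.range_eq_top.2 D.surj]
  obtain ⟨J, R, β, -, hRt, hRβ, hcov, hinj⟩ := hrep
  obtain ⟨b, hb, hbt⟩ := lift_trav D.φ D.surj hRt hRβ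
  have hprod := Trav.prod (R := fun x y : G₁ => (x : G)⁻¹ * y ∈ D.S)
    (R' := fun x y => (b x)⁻¹ * b y ∈ T) (fun x y hxy => by simpa using D.S_inv _ hxy)
    (fun x y hxy => by simpa using hT _ hxy) (Or.inr h) hbt
  refine TwoWay.of_trav (hprod.map (fun q => b q.2 * q.1) ⟨?_, ?_⟩ ?_)
  · rintro ⟨x, i⟩ ⟨y, j⟩ e
    simp only at e
    have hij : i = j := by
      apply hinj
      refine ⟨x * (y : G)⁻¹, mul_mem x.2 (inv_mem y.2), ?_⟩
      have e' := congrArg D.φ e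
      rw [map_mul, map_mul, hb, hb] at e'
      rw [map_mul, map_inv, ← hb, ← hb, mul_inv_eq_iff_eq_mul, mul_assoc, eq_inv_mul_iff_mul_eq,
        hb, hb]
      exact e'
    subst hij
    rw [mul_right_inj] at e
    rw [Subtype.ext e]
  · intro g
    obtain ⟨j, y, hy, e⟩ := hcov (D.φ g)
    refine ⟨(⟨(b j)⁻¹ * g, ?_⟩, j), by simp⟩
    have hk : (b j)⁻¹ * g * y⁻¹ ∈ G₁ := by
      apply hker
      rw [MonoidHom.mem_ker, map_mul, map_mul, map_inv, map_inv, hb, e, mul_inv_cancel]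
    simpa using mul_mem hk hy
  · rintro ⟨x, i⟩ ⟨y, j⟩ (⟨e, h'⟩ | ⟨h', e⟩)
    · simp only at e h'
      subst e
      have : (b i * x)⁻¹ * (b j * x) = (b i)⁻¹ * b j := by
        rw [mul_inv_rev, mul_assoc, ← mul_assoc (b i)⁻¹, hcomm _ h' _ x.2, inv_mul_cancel_left]
      simpa only [cover, this] using hTS h'
    · simp only at e h'
      subst e
      simpa [cover, mul_assoc] using h'

end Cayley

end HamPath

namespace HamPath

theorem Dep.inv_right {A : Type*} [Group A] {a b : A} (h : Dep a b) : Dep a b⁻¹ := by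
  obtain ⟨k, hk, h⟩ := h
  exact ⟨k, hk, by rw [inv_pow]; exact inv_mem h⟩

theorem Dep.trans {A : Type*} [Group A] {a b c : A} (h : Dep a b) (h' : Dep b c) : Dep a c := by
  obtain ⟨k, hk, h⟩ := h
  obtain ⟨l, hl, h'⟩ := h'
  obtain ⟨i, hi⟩ := Subgroup.mem_zpowers_iff.1 h'
  refine ⟨l * k, Nat.mul_pos hl hk, ?_⟩
  rw [pow_mul, ← hi, ← zpow_natCast, ← zpow_mul, mul_comm, zpow_mul, zpow_natCast]
  exact zpow_mem h i

theorem dep_of_isOfFinOrder {A : Type*} [Group A] {a b : A} (h : IsOfFinOrder b) : Dep a b := by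
  obtain ⟨k, hk, e⟩ := isOfFinOrder_iff_pow_eq_one.1 h
  exact ⟨k, hk, by rw [e]; exact one_mem _⟩

namespace Cayley

open Cover

variable {G A : Type*} [Group G] [CommGroup A] {D : Cayley G A}

/-! ### Cayley graphs without repeated generators -/

theorem ker_le_of_mem {c : G} {H : Subgroup G} (hc : D.φ c = 1) (hc1 : c ≠ 1) (hcH : c ∈ H) :
    D.φ.ker ≤ H := by
  have : Fact D.p.Prime := ⟨D.hp⟩
  intro x hx
  have h := mem_zpowers_of_prime_card (G := D.φ.ker) (p := D.p) D.card (g := ⟨c, hc⟩)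
    (g' := ⟨x, hx⟩) (fun h => hc1 (congrArg Subtype.val h))
  obtain ⟨n, hn⟩ := Subgroup.mem_zpowers_iff.1 h
  have : c ^ n = x := by simpa using congrArg Subtype.val hn
  rw [← this]
  exact zpow_mem hcH n

/-- The Cayley graph induced on a subgroup containing the kernel, with the connection set `M`. -/
def restrict (D : Cayley G A) (M : Set G) (hM : ∀ m ∈ M, m⁻¹ ∈ M)
    (hker : D.φ.ker ≤ Subgroup.closure M) :
    Cayley (Subgroup.closure M) ((Subgroup.closure M).map D.φ) where
  φ := D.φ.subgroupMap _
  surj := D.φ.subgroupMap_surjective _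
  S := (↑) ⁻¹' M
  S_inv s hs := hM _ hs
  p := D.p
  hp := D.hp
  card := by
    rw [← D.card]
    refine Nat.card_congr ⟨fun x => ⟨x.1.1, ?_⟩, fun y => ⟨⟨y.1, hker y.2⟩, ?_⟩, fun _ => rfl,
      fun _ => rfl⟩
    · exact congrArg Subtype.val x.2
    · exact Subtype.ext y.2

/-- The subgroup generated by the generators commensurable with `s` has a two-way hamiltonian path,
provided `t ^ (k - 1)` and `s` do not commute: the ladder along `1, t, …, t ^ (k - 1)` is then good,
and `⟨s, t⟩` has finite index in that subgroup modulo the kernel. -/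
theorem ham_commensurable (hfin : D.S.Finite) {s t : G} (hs : s ∈ D.S) (ht : t ∈ D.S) {k : ℕ}
    {j : ℤ} (hk : 2 ≤ k)
    (hrelk : ∀ m n : ℤ, D.φ s ^ m * D.φ t ^ n = 1 → ∃ q : ℤ, m = -(j * q) ∧ n = k * q)
    (hrel : D.φ t ^ (k : ℤ) = D.φ s ^ j) (hne : t ^ (k - 1) * s ≠ s * t ^ (k - 1))
    (hker : D.φ.ker ≤ Subgroup.closure {m | m ∈ D.S ∧ Dep (D.φ s) (D.φ m)}) :
    TwoWay (fun x y : Subgroup.closure {m | m ∈ D.S ∧ Dep (D.φ s) (D.φ m)} =>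
      (x : G)⁻¹ * y ∈ D.S) := by
  set M : Set G := {m | m ∈ D.S ∧ Dep (D.φ s) (D.φ m)} with hM
  have hMi : ∀ m ∈ M, m⁻¹ ∈ M := fun m hm =>
    ⟨D.S_inv _ hm.1, by rw [map_inv]; exact hm.2.inv_right⟩
  set E := D.restrict M hMi hker with hE
  have hsM : s ∈ M := ⟨hs, 1, one_pos, by simp⟩
  have htM : t ∈ M := ⟨ht, k, by omega, by
    rw [← zpow_natCast, hrel]; exact Subgroup.zpow_mem_zpowers _ _⟩
  let s₁ : Subgroup.closure M := ⟨s, Subgroup.subset_closure hsM⟩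
  let t₁ : Subgroup.closure M := ⟨t, Subgroup.subset_closure htM⟩
  have hs₁ : s₁ ∈ E.S := hsM
  have ht₁ : t₁ ∈ E.S := htM
  have hMfin : M.Finite := hfin.subset fun m hm => hm.1
  have hEfin : E.S.Finite := hMfin.preimage Subtype.val_injective.injOn
  have hEgen : Subgroup.closure E.S = ⊤ := Subgroup.closure_closure_coe_preimage
  have hφ : ∀ x, ((E.φ x : (Subgroup.closure M).map D.φ) : A) = D.φ x := fun x => rfl
  have hkk : ∀ m n : ℤ, E.φ s₁ ^ m * E.φ t₁ ^ n = 1 → ∃ q : ℤ, m = -(j * q) ∧ n = k * q := by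
    intro m n h
    apply hrelk
    simpa [hφ, s₁, t₁] using congrArg Subtype.val h
  have hrr : E.φ t₁ ^ (k : ℤ) = E.φ s₁ ^ j := by
    apply Subtype.ext
    simpa [hφ, s₁, t₁] using hrel
  have hham : TwoWay E.cover.adj := by
    refine ham_grid_good (rep hEfin hEgen) _ _ (step_of_mem hs₁) (step_of_mem ht₁) k j hk hkk hrr
      ?_ (good_ladder ht₁ hs₁ (by omega) (nodup_ladderList ?_ ?_) ?_)
    · refine finite_quotient (hEfin.image E.φ) ?_ _ ?_
      · rw [← MonoidHom.map_closure, hEgen, ← MonoidHom.range_eq_map,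
          MonoidHom.range_eq_top.2 E.surj]
      · rintro _ ⟨x, hx, rfl⟩
        obtain ⟨l, hl, h⟩ := hx.2
        refine ⟨l, hl, Subgroup.mem_sup_left ?_⟩
        obtain ⟨i, hi⟩ := Subgroup.mem_zpowers_iff.1 h
        refine Subgroup.mem_zpowers_iff.2 ⟨i, Subtype.ext ?_⟩
        simpa [hφ, s₁] using hi
    · intro i i' hi hi' e
      obtain ⟨q, -, hq⟩ := hkk 0 ((i : ℤ) - i') (by
        rw [zpow_zero, one_mul, zpow_sub, zpow_natCast, zpow_natCast, e, mul_inv_cancel])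
      have : q = 0 := by
        rcases lt_trichotomy q 0 with h | h | h
        · nlinarith
        · exact h
        · nlinarith
      subst this
      omega
    · intro i i' hi hi' e
      obtain ⟨q, hq1, hq⟩ := hkk 1 ((i' : ℤ) - i) (by
        rw [zpow_one, zpow_sub, zpow_natCast, zpow_natCast, e, mul_inv_rev, mul_comm]
        simp [mul_comm])
      have : q = 0 := by
        rcases lt_trichotomy q 0 with h | h | h
        · nlinarith
        · exact h
        · nlinarith
      subst this
      omega
    · intro h
      exact hne (by simpa [s₁, t₁] using congrArg Subtype.val h)
  refine hham.map id Function.bijective_id fun x y hxy => ?_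
  have : (x : G)⁻¹ * y ∈ M := hxy
  exact this.1

/-- Either the relation fails in `G`, and its cycle is good, or it holds there. In the latter case
`t ^ (k - 1)` and `s` do not commute, so that the subgroup generated by all generators commensurable
with `s` is traversed by good ladders; the remaining generators centralise it. -/
theorem ham_of_relation [Infinite A] (hfin : D.S.Finite) (hgen : Subgroup.closure D.S = ⊤)
    (hdig : ∀ x ∈ D.S, ∀ y ∈ D.S, D.φ x = D.φ y → x = y) (hS1 : ∀ x ∈ D.S, D.φ x ≠ 1)
    {s t : G} (hs : s ∈ D.S) (ht : t ∈ D.S) (hst : t * s ≠ s * t)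
    {j k : ℕ} (hj : 1 ≤ j) (hk : 1 ≤ k)
    (hrelk : ∀ m n : ℤ, D.φ s ^ m * D.φ t ^ n = 1 → ∃ q : ℤ, m = -(j * q) ∧ n = k * q)
    (hrel : D.φ t ^ (k : ℤ) = D.φ s ^ (j : ℤ)) : TwoWay D.cover.adj := by
  have hrep := rep hfin hgen
  have : Infinite G := Infinite.of_surjective _ D.surj
  by_cases hjk : 3 ≤ j + k
  swap
  · obtain ⟨rfl, rfl⟩ : j = 1 ∧ k = 1 := by omega
    rw [hdig t ht s hs (by simpa using hrel)] at hst
    exact absurd rfl hst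
  by_cases heq : t ^ k = s ^ j
  swap
  · exact ham_dependent hrep hs ht hj hk hjk hrelk hrel heq
  have hk2 : 2 ≤ k := by
    by_contra h
    obtain rfl : k = 1 := by omega
    rw [pow_one] at heq
    rw [heq] at hst
    exact hst (Commute.pow_self s j).eq
  have hne : t ^ (k - 1) * s ≠ s * t ^ (k - 1) := by
    intro h
    have h1 : Commute (t ^ (k - 1)) s := h
    have h2 : Commute (t ^ k) s := by rw [heq]; exact Commute.pow_self s j
    have h3 : t = t ^ k * (t ^ (k - 1))⁻¹ := by
      rw [eq_mul_inv_iff_mul_eq, ← pow_succ', Nat.sub_add_cancel hk]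
    have h4 : Commute t s := by
      rw [h3]; exact h2.mul_left h1.inv_left
    exact hst h4.eq
  by_contra hcon
  set M : Set G := {m | m ∈ D.S ∧ Dep (D.φ s) (D.φ m)} with hM
  have hsM : s ∈ M := ⟨hs, 1, one_pos, by simp⟩
  have htM : t ∈ M := ⟨ht, k, by omega, by
    rw [← zpow_natCast, hrel]; exact Subgroup.zpow_mem_zpowers _ _⟩
  have hker : D.φ.ker ≤ Subgroup.closure M := by
    have hs' := Subgroup.subset_closure hsM
    have ht' := Subgroup.subset_closure htM
    refine ker_le_of_mem (c := t * s * (s * t)⁻¹) (by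
      rw [map_mul, map_inv, map_mul, map_mul, mul_comm (D.φ t), mul_inv_cancel]) ?_
      (mul_mem (mul_mem ht' hs') (inv_mem (mul_mem hs' ht')))
    rwa [Ne, mul_inv_eq_one]
  apply hcon
  refine ham_of_centralised (T := D.S \ M) (Subgroup.closure M) hker Set.sdiff_subset ?_
    (hfin.subset Set.sdiff_subset) ?_ ?_ (ham_commensurable hfin hs ht hk2 hrelk hrel hne hker)
  · rintro z ⟨hz, hzM⟩
    refine ⟨D.S_inv z hz, fun h => hzM ⟨hz, ?_⟩⟩
    simpa using h.2.inv_right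
  · rintro z ⟨hz, hzM⟩ x hx
    have hzd : ¬ Dep (D.φ s) (D.φ z) := fun h => hzM ⟨hz, h⟩
    have hle : Subgroup.closure M ≤ Subgroup.centralizer {z} := by
      rw [Subgroup.closure_le]
      intro m hm
      rw [SetLike.mem_coe, Subgroup.mem_centralizer_singleton_iff]
      by_contra hmz
      apply hcon
      by_cases hmf : IsOfFinOrder (D.φ m)
      · exact ham_torsion_infinite hrep hm.1 hz (hS1 m hm.1) hmf
          (fun h => hzd (dep_of_isOfFinOrder h)) hmz
      · exact ham_independent hrep hm.1 hz hmf (fun h => hzd (hm.2.trans h)) hmz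
    exact (Subgroup.mem_centralizer_singleton_iff.1 (hle hx)).symm
  · rw [← Subgroup.closure_union, Set.union_sdiff_cancel (fun m hm => hm.1), hgen]

/-- A Cayley graph whose generators have pairwise different non-trivial images in the abelian
quotient has a two-way hamiltonian path as soon as two generators do not commute. -/
theorem ham_cayley [Infinite A] (hfin : D.S.Finite) (hgen : Subgroup.closure D.S = ⊤)
    (hdig : ∀ x ∈ D.S, ∀ y ∈ D.S, D.φ x = D.φ y → x = y) (hS1 : ∀ x ∈ D.S, D.φ x ≠ 1)
    {s t : G} (hs : s ∈ D.S) (ht : t ∈ D.S) (hst : t * s ≠ s * t) : TwoWay D.cover.adj := by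
  have hrep := rep hfin hgen
  by_cases hsf : IsOfFinOrder (D.φ s)
  · by_cases htf : IsOfFinOrder (D.φ t)
    · obtain ⟨z, hz, hzi⟩ : ∃ z ∈ D.S, ¬ IsOfFinOrder (D.φ z) := by
        by_contra! hall
        have : Finite (A ⧸ (⊥ : Subgroup A)) := by
          refine finite_quotient (hfin.image D.φ) ?_ _ ?_
          · rw [← MonoidHom.map_closure, hgen, ← MonoidHom.range_eq_map,
              MonoidHom.range_eq_top.2 D.surj]
          · rintro _ ⟨x, hx, rfl⟩
            obtain ⟨k, hk, e⟩ := isOfFinOrder_iff_pow_eq_one.1 (hall x hx)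
            exact ⟨k, hk, Subgroup.mem_bot.2 e⟩
        have : Finite A := Finite.of_equiv _ (QuotientGroup.quotientBot (G := A)).toEquiv
        exact not_finite A
      exact ham_torsion hrep hdig hS1 hs ht hz hst hsf htf hzi
    · exact ham_torsion_infinite hrep hs ht (hS1 s hs) hsf htf hst.symm
  by_cases htf : IsOfFinOrder (D.φ t)
  · exact ham_torsion_infinite hrep ht hs (hS1 t ht) htf hsf hst
  by_cases hd : Dep (D.φ s) (D.φ t)
  swap
  · exact ham_independent hrep hs ht hsf hd hst.symm
  obtain ⟨k, j, hk, hrel, hrelk⟩ := exists_relation hsf hd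
  have hj : j ≠ 0 := by
    rintro rfl
    rw [zpow_zero] at hrel
    have := zpow_eq_zero_of_not_finOrder htf hrel
    omega
  rcases lt_or_gt_of_ne hj with hj | hj
  · -- a negative exponent becomes positive on replacing `s` by its inverse
    obtain ⟨l, rfl⟩ : ∃ l : ℕ, j = -l := ⟨(-j).toNat, by omega⟩
    refine ham_of_relation hfin hgen hdig hS1 (D.S_inv s hs) ht (j := l) (k := k) ?_ (by omega) hk
      ?_ ?_
    · intro h
      exact hst (Commute.inv_right_iff.1 (show Commute t s⁻¹ from h)).eq
    · intro m n h
      obtain ⟨q, h1, h2⟩ := hrelk (-m) n (by rw [← h]; simp)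
      exact ⟨q, by linarith, h2⟩
    · rw [hrel]; simp
  · obtain ⟨l, rfl⟩ : ∃ l : ℕ, j = l := ⟨j.toNat, by omega⟩
    exact ham_of_relation hfin hgen hdig hS1 hs ht hst (by omega) hk hrelk hrel

end Cayley

end HamPath

namespace HamPath

/-! ### Vertex-transitive graphs -/

theorem connected_induction {V : Type*} {X : SimpleGraph V} (hconn : X.Connected) {P : V → Prop}
    (v₀ : V) (h0 : P v₀) (hs : ∀ u w, X.Adj u w → P u → P w) (v : V) : P v := by
  obtain ⟨q⟩ := hconn.preconnected v₀ v
  induction q with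
  | nil => exact h0
  | cons h _ ih => exact ih (hs _ _ h h0)

/-- With `H` a vertex stabiliser, the orbits of the commutator subgroup `G'` fibre the vertices over
the abelian group `G / G'H`. Since `G'` is normal of prime order and `G` acts faithfully and
transitively, `G'` acts freely. -/
theorem exists_cover {V : Type*} (X : SimpleGraph V) (v₀ : V)
    (G : Type*) [Group G] [MulAction G V]
    (hauto : ∀ (g : G) (u w : V), X.Adj u w → X.Adj (g • u) (g • w))
    (hfaithful : ∀ g : G, (∀ v : V, g • v = v) → g = 1)
    (htrans : ∀ u w : V, ∃ g : G, g • u = w)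
    (p : ℕ) (hp : p.Prime) (hcomm : Nat.card (commutator G) = p) :
    ∃ K : Cover V G (Abelianization G ⧸ (MulAction.stabilizer G v₀).map Abelianization.of),
      K.adj = X.Adj := by
  set N := (MulAction.stabilizer G v₀).map (Abelianization.of (G := G)) with hN
  let φ : G →* Abelianization G ⧸ N := (QuotientGroup.mk' N).comp Abelianization.of
  have hφs : Function.Surjective φ :=
    (QuotientGroup.mk'_surjective N).comp QuotientGroup.mk_surjective
  have hφC : ∀ c ∈ commutator G, φ c = 1 := by
    intro c hc
    have : (Abelianization.of c : Abelianization G) = 1 := (QuotientGroup.eq_one_iff c).2 hc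
    simp [φ, this]
  have hφH : ∀ h : G, h • v₀ = v₀ → φ h = 1 := by
    intro h hh
    exact (QuotientGroup.eq_one_iff _).2 ⟨h, hh, rfl⟩
  have hφ1 : ∀ g, φ g = 1 → ∃ h : G, h • v₀ = v₀ ∧ h⁻¹ * g ∈ commutator G := by
    intro g hg
    obtain ⟨h, hh, e⟩ := (QuotientGroup.eq_one_iff _).1 hg
    exact ⟨h, hh, QuotientGroup.eq.1 e⟩
  choose γ hγ using fun v => htrans v₀ v
  have hφeq : ∀ x y : G, x • v₀ = y • v₀ → φ x = φ y := by
    intro x y e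
    have := hφH (y⁻¹ * x) (by rw [mul_smul, e, inv_smul_smul])
    rw [map_mul, map_inv, inv_mul_eq_one] at this
    exact this.symm
  refine ⟨{
    adj := X.Adj
    symm := fun u w h => h.symm
    inv := hauto
    φ := φ
    φ_surj := hφs
    π := fun v => φ (γ v)
    π_smul := fun g v => by
      rw [← map_mul]
      exact hφeq _ _ (by rw [hγ, mul_smul, hγ])
    π_surj := fun x => by
      obtain ⟨g, rfl⟩ := hφs x
      exact ⟨g • v₀, hφeq _ _ (hγ _)⟩
    C := commutator G
    normal := inferInstance
    p := p
    hp := hp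
    card := hcomm
    φ_C := hφC
    fib := fun v w e => by
      obtain ⟨h, hh, hc⟩ := hφ1 ((γ v)⁻¹ * γ w) (by rw [map_mul, map_inv, e, inv_mul_cancel])
      refine ⟨_, (inferInstance : (commutator G).Normal).conj_mem _ hc (γ v * h), ?_⟩
      have e1 : γ v * h * (h⁻¹ * ((γ v)⁻¹ * γ w)) * (γ v * h)⁻¹ = γ w * h⁻¹ * (γ v)⁻¹ := by group
      rw [e1, mul_smul, mul_smul, inv_smul_eq_iff.2 (hγ v).symm, inv_smul_eq_iff.2 hh.symm, hγ]
    free := fun c hc v hv => by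
      by_contra hc1
      have : Fact p.Prime := ⟨hp⟩
      have hfix : ∀ d ∈ commutator G, d • v = v := by
        intro d hd
        have h := mem_zpowers_of_prime_card (G := commutator G) (p := p) hcomm (g := ⟨c, hc⟩)
          (g' := ⟨d, hd⟩) (fun h => hc1 (congrArg Subtype.val h))
        obtain ⟨n, hn⟩ := Subgroup.mem_zpowers_iff.1 h
        have e : c ^ n = d := by simpa using congrArg Subtype.val hn
        have : c ^ n ∈ MulAction.stabilizer G v := zpow_mem (MulAction.mem_stabilizer_iff.2 hv) n
        rw [← e]; exact this
      refine hc1 (hfaithful c fun w => ?_)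
      obtain ⟨g, rfl⟩ := htrans v w
      have := hfix _ ((inferInstance : (commutator G).Normal).conj_mem c hc g⁻¹)
      rwa [inv_inv, mul_smul, mul_smul, inv_smul_eq_iff] at this }, rfl⟩

open Cover in
/-- Loops or digons in the quotient yield the path directly. In their absence the vertex stabilisers
are trivial and the graph is a Cayley graph of `G`. -/
theorem ham_cover {V G A : Type*} [Group G] [MulAction G V] [CommGroup A] [Infinite V]
    (K : Cover V G A) (X : SimpleGraph V) (hK : K.adj = X.Adj) (hconn : X.Connected)
    (hlf : ∀ v : V, (X.neighborSet v).Finite)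
    (hfaithful : ∀ g : G, (∀ v : V, g • v = v) → g = 1) (hcomm : commutator G ≠ ⊥) :
    TwoWay K.adj := by
  have hadj : ∀ u w, K.adj u w ↔ X.Adj u w := fun u w => by rw [hK]
  obtain ⟨v₀, hv₀⟩ := K.π_surj 1
  have hirr : ∀ v, ¬ K.adj v v := fun v h => X.irrefl ((hadj v v).1 h)
  have hstep : ∀ u w, K.adj u w → K.Step 1 ((K.π u)⁻¹ * K.π w) := fun u w h =>
    step_iff.1 ⟨u, w, rfl, rfl, h⟩
  have hSfin : {s | K.Step 1 s}.Finite := by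
    refine ((hlf v₀).image K.π).subset ?_
    intro s hs
    obtain ⟨w, hw, h⟩ := Step.lift hs hv₀
    exact ⟨w, (hadj _ _).1 h, hw⟩
  have hSgen : Subgroup.closure {s | K.Step 1 s} = ⊤ := by
    rw [eq_top_iff]
    rintro x -
    obtain ⟨v, rfl⟩ := K.π_surj x
    refine connected_induction hconn (P := fun v => K.π v ∈ Subgroup.closure {s | K.Step 1 s}) v₀
      (by rw [hv₀]; exact one_mem _) (fun u w h hu => ?_) v
    simpa using mul_mem hu (Subgroup.subset_closure (hstep u w ((hadj u w).2 h)))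
  have hrep : K.Rep := fun F => travRep _ hSfin (fun s hs => Step.inv hs) F (by rw [hSgen]; simp)
  have hA : Infinite A := by
    by_contra hA
    have : Finite A := not_infinite_iff_finite.1 hA
    have : Finite K.C := Nat.finite_of_card_ne_zero (by rw [K.card]; exact K.hp.ne_zero)
    choose σ hσ using K.π_surj
    choose c hc e using fun v => K.fib (σ (K.π v)) v (hσ _)
    have : Finite V := Finite.of_injective (β := A × K.C) (fun v => (K.π v, ⟨c v, hc v⟩)) (by
      intro v w h
      rw [Prod.mk.injEq, Subtype.mk.injEq] at h
      rw [← e v, ← e w, h.1, h.2])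
    exact not_finite V
  by_contra hcon
  have hloop : ¬ K.Step 1 1 := fun h => hcon (ham_loop hrep hirr h)
  have huniq : ∀ v w w', K.adj v w → K.adj v w' → K.π w = K.π w' → w = w' := by
    intro v w w' h h' e
    obtain ⟨c, hc, rfl⟩ := K.fib w w' e
    by_contra hne
    refine hcon (ham_digon hrep hirr hSgen (digon_of_two hc ?_ h h'))
    rintro rfl
    simp at hne
  have hstab : ∀ h : G, h • v₀ = v₀ → h = 1 := by
    intro h h0
    have hφ : K.φ h = 1 := by
      have := K.π_smul h v₀
      rw [h0] at this
      simpa using this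
    refine hfaithful h (connected_induction hconn v₀ h0 fun u w huw hu => ?_)
    refine huniq u _ _ ?_ ((hadj u w).2 huw) (by rw [K.π_smul, hφ, one_mul])
    have := K.inv h _ _ ((hadj u w).2 huw)
    rwa [hu] at this
  have hinj : Function.Injective fun g : G => g • v₀ := by
    intro x y e
    have := hstab (y⁻¹ * x) (by rw [mul_smul]; simp only at e; rw [e, inv_smul_smul])
    rw [inv_mul_eq_one] at this
    exact this.symm
  have hker : K.φ.ker = K.C := by
    ext g
    rw [MonoidHom.mem_ker]
    refine ⟨fun hg => ?_, K.φ_C g⟩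
    obtain ⟨c, hc, e⟩ := K.fib v₀ (g • v₀) (by rw [K.π_smul, hg, one_mul])
    rw [← hinj e]
    exact hc
  let D : Cayley G A :=
    { φ := K.φ
      surj := K.φ_surj
      S := {g | K.adj v₀ (g • v₀)}
      S_inv := fun s hs => by
        have := K.inv s⁻¹ _ _ (K.symm _ _ hs)
        rwa [inv_smul_smul] at this
      p := K.p
      hp := K.hp
      card := by rw [hker]; exact K.card }
  have hDadj : ∀ x y : G, D.cover.adj x y ↔ K.adj (x • v₀) (y • v₀) := by
    intro x y
    constructor
    · intro h
      have := K.inv x _ _ (show K.adj v₀ ((x⁻¹ * y) • v₀) from h)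
      rwa [← mul_smul, mul_inv_cancel_left] at this
    · intro h
      have := K.inv x⁻¹ _ _ h
      rw [inv_smul_smul, ← mul_smul] at this
      exact this
  have hπ : ∀ g : G, K.π (g • v₀) = K.φ g := fun g => by rw [K.π_smul, hv₀, mul_one]
  have hDfin : D.S.Finite := by
    have := (hlf v₀).preimage (f := fun g : G => g • v₀) hinj.injOn
    refine this.subset fun g hg => ?_
    exact (hadj _ _).1 hg
  have hDgen : Subgroup.closure D.S = ⊤ := by
    rw [eq_top_iff]
    rintro g -
    refine connected_induction hconn (P := fun v => ∀ g : G, g • v₀ = v → g ∈ Subgroup.closure D.S)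
      v₀ (fun g hg => ?_) (fun u w huw hu g hg => ?_) (g • v₀) g rfl
    · rw [hstab g hg]; exact one_mem _
    · obtain ⟨x, rfl⟩ := K.exists_smul v₀ u
      have hx := hu x rfl
      have : x⁻¹ * g ∈ D.S := (hDadj x g).2 (by rw [hg]; exact (hadj _ _).2 huw)
      simpa using mul_mem hx (Subgroup.subset_closure this)
  have hnc : ∃ s ∈ D.S, ∃ t ∈ D.S, t * s ≠ s * t := by
    by_contra! hall
    apply hcomm
    rw [commutator_eq_bot_iff_center_eq_top, eq_top_iff, ← hDgen, Subgroup.closure_le]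
    intro s hs
    rw [SetLike.mem_coe, Subgroup.mem_center_iff]
    intro g
    have hle : Subgroup.closure D.S ≤ Subgroup.centralizer {s} := by
      rw [Subgroup.closure_le]
      intro t ht
      rw [SetLike.mem_coe, Subgroup.mem_centralizer_singleton_iff]
      exact hall s hs t ht
    rw [hDgen] at hle
    exact Subgroup.mem_centralizer_singleton_iff.1 (hle (Subgroup.mem_top g))
  obtain ⟨s, hs, t, ht, hst⟩ := hnc
  have hham := Cayley.ham_cayley hDfin hDgen
    (fun x hx y hy e => hinj (huniq v₀ _ _ hx hy (by rw [hπ, hπ]; exact e)))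
    (fun x hx e => hloop ⟨v₀, x • v₀, hv₀, by rw [hπ]; exact e, hx⟩) hs ht hst
  exact hcon (hham.map (fun g : G => g • v₀) ⟨hinj, K.exists_smul v₀⟩ fun x y => (hDadj x y).1)

end HamPath

/-- Let `X` be a connected, infinite, locally finite simple graph and
`G` a group acting faithfully and transitively on the vertices of `X` by graph
automorphisms. If the commutator subgroup of `G` is cyclic of prime order `p`, then
`X` has a two-way hamiltonian path. -/
theorem transitive_graph_two_way_hamiltonian_of_commutator_prime
    {V : Type*} [Infinite V] (X : SimpleGraph V) (hconn : X.Connected)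
    (hlf : ∀ v : V, (X.neighborSet v).Finite)
    (G : Type*) [Group G] [MulAction G V]
    (hauto : ∀ (g : G) (u w : V), X.Adj u w → X.Adj (g • u) (g • w))
    (hfaithful : ∀ g : G, (∀ v : V, g • v = v) → g = 1)
    (htrans : ∀ u w : V, ∃ g : G, g • u = w)
    (p : ℕ) (hp : p.Prime) (hcomm : Nat.card (commutator G) = p) :
    ∃ v : ℤ → V, Function.Bijective v ∧ ∀ i : ℤ, X.Adj (v i) (v (i + 1)) := by
  obtain ⟨v₀⟩ := hconn.nonempty
  obtain ⟨K, hK⟩ := HamPath.exists_cover X v₀ G hauto hfaithful htrans p hp hcomm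
  have h := HamPath.ham_cover K X hK hconn hlf hfaithful (by
    intro h
    rw [h, Subgroup.card_bot] at hcomm
    exact hp.one_lt.ne hcomm)
  rwa [hK] at h
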